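/- arXiv:2506.12789 — 7 statements merged into one kernel-verified Lean document; each statement's English description precedes it below -/
import Mathlib

section
/- Let e be an odd integer with e ≥ 3 and let n be a positive integer. Then ν₂(∑_{k=0}^{n} binom(n, k)^e) ≥ s₂(n), with equality if and only if the binary expansion of n does not contain two adjacent 1s, i.e., for every i, n does not have both bit i and bit i+1 equal to 1. -/
/-- `s2 n` is the number of ones in the binary expansion of `n`. -/
def s2 (n : ℕ) : ℕ := (Nat.digits 2 n).sum

namespace Sub11

lemma s2_two_mul (n : ℕ) : s2 (2 * n) = s2 n := by
  unfold s2
  rcases Nat.eq_zero_or_pos n with rfl | h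
  · simp
  · have := Nat.digits_add_two_add_one 0 (2 * n - 1)
    rw [Nat.sub_add_cancel (by omega)] at this
    rw [this]
    simp

lemma s2_two_mul_add_one (n : ℕ) : s2 (2 * n + 1) = s2 n + 1 := by
  unfold s2
  have := Nat.digits_add_two_add_one 0 (2 * n)
  rw [this]
  have h1 : (2 * n + 1) % (0 + 2) = 1 := by omega
  have h2 : (2 * n + 1) / (0 + 2) = n := by omega
  rw [h1, h2, List.sum_cons, add_comm]

lemma s2_succ (n : ℕ) : s2 (n + 1) ≤ s2 n + 1 := by
  induction n using Nat.strong_induction_on with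
  | _ n ih =>
    rcases Nat.even_or_odd' n with ⟨m, rfl | rfl⟩
    · rw [s2_two_mul_add_one, s2_two_mul]
    · rw [show 2 * m + 1 + 1 = 2 * (m + 1) by ring, s2_two_mul, s2_two_mul_add_one]
      have := ih m (by omega)
      omega

def NA (n : ℕ) : Prop := ∀ i : ℕ, ¬(n.testBit i = true ∧ n.testBit (i + 1) = true)

lemma NA_two_mul (n : ℕ) : NA (2 * n) ↔ NA n := by
  unfold NA
  constructor
  · intro h i
    have := h (i + 1)
    simpa [Nat.testBit_succ] using this
  · intro h i
    cases i with
    | zero => simp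
    | succ i =>
      have := h i
      simpa [Nat.testBit_succ] using this

lemma NA_two_mul_add_one (n : ℕ) : NA (2 * n + 1) ↔ Even n ∧ NA n := by
  unfold NA
  have hd : (2 * n + 1) / 2 = n := by omega
  constructor
  · intro h
    constructor
    · have := h 0
      rw [Nat.testBit_succ, hd] at this
      simp at this
      exact Nat.even_iff.2 this
    · intro i
      have := h (i + 1)
      rw [Nat.testBit_succ, Nat.testBit_succ, hd] at this
      exact this
  · rintro ⟨h0, h⟩ i
    cases i with
    | zero =>
      rw [Nat.testBit_succ, hd]
      simp
      exact Nat.even_iff.1 h0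
    | succ i =>
      rw [Nat.testBit_succ, Nat.testBit_succ, hd]
      exact h i

/-- odd double factorial -/
def D (n : ℕ) : ℕ := ∏ i ∈ Finset.range n, (2 * i + 1)

lemma D_succ (n : ℕ) : D (n + 1) = D n * (2 * n + 1) := Finset.prod_range_succ _ _

lemma D_zero : D 0 = 1 := rfl

lemma fact_even (n : ℕ) : (2 * n).factorial = 2 ^ n * n.factorial * D n := by
  induction n with
  | zero => simp [D_zero]
  | succ n ih =>
    rw [show 2 * (n + 1) = 2 * n + 1 + 1 by ring, Nat.factorial_succ, Nat.factorial_succ, ih,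
      Nat.factorial_succ, D_succ]
    ring

lemma fact_odd (n : ℕ) : (2 * n + 1).factorial = 2 ^ n * n.factorial * D (n + 1) := by
  rw [Nat.factorial_succ, fact_even, D_succ]; ring

lemma choose_fact (a b : ℕ) : (a + b).choose a * a.factorial * b.factorial = (a + b).factorial := by
  rw [Nat.choose_symm_add]; exact Nat.add_choose_mul_factorial_mul_factorial a b

lemma chooseA (k l : ℕ) : (2 * (k + l)).choose (2 * k) * (D k * D l) =
    (k + l).choose k * D (k + l) := by
  have h1 := choose_fact k l
  have h2 := choose_fact (2 * k) (2 * l)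
  rw [← mul_add, fact_even, fact_even, fact_even, ← h1] at h2
  have hp : 0 < 2 ^ (k + l) * k.factorial * l.factorial := by positivity
  apply Nat.eq_of_mul_eq_mul_left hp
  rw [pow_add] at *
  linarith

lemma chooseB (k l : ℕ) : (2 * (k + l) + 1).choose (2 * k) * (D k * D (l + 1)) =
    (k + l).choose k * D (k + l + 1) := by
  have h1 := choose_fact k l
  have h2 := choose_fact (2 * k) (2 * l + 1)
  rw [← add_assoc, ← mul_add, fact_even, fact_odd, fact_odd, ← h1] at h2
  have hp : 0 < 2 ^ (k + l) * k.factorial * l.factorial := by positivity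
  apply Nat.eq_of_mul_eq_mul_left hp
  rw [pow_add] at *
  linarith

lemma chooseC (k l : ℕ) : (2 * (k + l) + 1).choose (2 * k + 1) * (D (k + 1) * D l) =
    (k + l).choose k * D (k + l + 1) := by
  have h1 := choose_fact k l
  have h2 := choose_fact (2 * k + 1) (2 * l)
  rw [show 2 * k + 1 + 2 * l = 2 * (k + l) + 1 by ring, fact_even, fact_odd, fact_odd, ← h1] at h2
  have hp : 0 < 2 ^ (k + l) * k.factorial * l.factorial := by positivity
  apply Nat.eq_of_mul_eq_mul_left hp
  rw [pow_add] at *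
  linarith

lemma chooseD (k l : ℕ) : (2 * (k + l + 1)).choose (2 * k + 1) * (D (k + 1) * D (l + 1)) =
    2 * (k + l + 1) * ((k + l).choose k * D (k + l + 1)) := by
  have h1 := choose_fact k l
  have h2 := choose_fact (2 * k + 1) (2 * l + 1)
  rw [show 2 * k + 1 + (2 * l + 1) = 2 * (k + l + 1) by ring, fact_even, fact_odd, fact_odd,
    Nat.factorial_succ, ← h1] at h2
  have hp : 0 < 2 ^ (k + l) * k.factorial * l.factorial := by positivity
  apply Nat.eq_of_mul_eq_mul_left hp
  rw [pow_succ, pow_add] at *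
  linarith

lemma sum_odd {M : Type*} [AddCommMonoid M] (f : ℕ → M) (n : ℕ) :
    ∑ i ∈ Finset.range (2 * n), f i = ∑ k ∈ Finset.range n, (f (2 * k) + f (2 * k + 1)) := by
  induction n with
  | zero => simp
  | succ n ih =>
    rw [show 2 * (n + 1) = 2 * n + 1 + 1 by ring, Finset.sum_range_succ, Finset.sum_range_succ, ih,
      Finset.sum_range_succ, add_assoc]

lemma odd_unit (m : ℕ) : IsUnit ((2 * m + 1 : ℕ) : ℤ_[2]) := by
  rw [PadicInt.isUnit_iff]
  by_contra h
  have h1 := lt_of_le_of_ne (PadicInt.norm_le_one _) h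
  have h2 : ‖(((2 * m + 1 : ℕ) : ℤ) : ℤ_[2])‖ < 1 := by exact_mod_cast h1
  rw [PadicInt.norm_int_lt_one_iff_dvd] at h2
  omega

lemma D_unit (m : ℕ) : IsUnit ((D m : ℕ) : ℤ_[2]) := by
  induction m with
  | zero => simp [D_zero]
  | succ n ih => rw [D_succ, Nat.cast_mul]; exact ih.mul (odd_unit n)

lemma two_not_unit : ¬ IsUnit (2 : ℤ_[2]) := by
  have := (PadicInt.prime_p (p := 2)).not_isUnit
  exact_mod_cast this

lemma two_prime : Prime (2 : ℤ_[2]) := by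
  have := (PadicInt.prime_p (p := 2))
  exact_mod_cast this

/-- product of consecutive odd numbers -/
noncomputable def P (t k : ℕ) : ℤ_[2] := ∏ i ∈ Finset.range t, ((2 * (k + i) + 1 : ℕ) : ℤ_[2])

lemma D_add (k t : ℕ) : (D (k + t) : ℤ_[2]) = D k * P t k := by
  unfold D P
  rw [Finset.prod_range_add]
  push_cast
  rfl

lemma P_succ (t k : ℕ) : P t (k + 1) * ((2 * k + 1 : ℕ) : ℤ_[2]) =
    P t k * ((2 * k + 1 + 2 * t : ℕ) : ℤ_[2]) := by
  have h1 := D_add k (t + 1)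
  have h2 := D_add (k + 1) t
  rw [show k + 1 + t = k + (t + 1) by ring, h1, D_succ] at h2
  have h3 : P (t + 1) k = P t k * ((2 * k + 1 + 2 * t : ℕ) : ℤ_[2]) := by
    unfold P
    rw [Finset.prod_range_succ]
    congr 2
    ring
  rw [h3] at h2
  apply (D_unit k).mul_left_cancel
  push_cast at *
  linear_combination -h2

lemma P_mod (j k : ℕ) : (2 : ℤ_[2]) ^ (j + 2) ∣ P (2 ^ j) k - P (2 ^ j) 0 * (1 + 2 ^ (j + 1)) ^ k := by
  induction k with
  | zero => simp
  | succ k ih =>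
    rw [← (odd_unit k).dvd_mul_right]
    obtain ⟨c, hc⟩ := ih
    have h := P_succ (2 ^ j) k
    have e1 : (P (2 ^ j) (k + 1) - P (2 ^ j) 0 * (1 + 2 ^ (j + 1)) ^ (k + 1)) * ((2 * k + 1 : ℕ) : ℤ_[2])
      = 2 ^ (j + 2) * (c * (2 * k + 1 + 2 * 2 ^ j) - P (2 ^ j) 0 * (1 + 2 ^ (j + 1)) ^ k * k) := by
      rw [sub_mul, h]
      push_cast
      linear_combination (2 * k + 1 + 2 * 2 ^ j : ℤ_[2]) * hc
    rw [e1]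
    exact dvd_mul_right _ _

lemma u_sq (j q : ℕ) : (2 : ℤ_[2]) ^ (j + 2) ∣ (1 + 2 ^ (j + 1)) ^ (2 * q) - 1 := by
  have h : (2 : ℤ_[2]) ^ (j + 2) ∣ (1 + 2 ^ (j + 1)) ^ 2 - 1 :=
    ⟨1 + 2 ^ j, by ring⟩
  rw [pow_mul]
  exact h.trans (by simpa using sub_dvd_pow_sub_pow ((1 + 2 ^ (j + 1) : ℤ_[2]) ^ 2) 1 q)

noncomputable def E (m k : ℕ) : ℤ_[2] := Ring.inverse ((D k : ℤ_[2]) * D (m - k))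

lemma E_mul (m k : ℕ) : E m k * ((D k : ℤ_[2]) * D (m - k)) = 1 :=
  Ring.inverse_mul_cancel _ ((D_unit k).mul (D_unit _))

lemma E_unit (m k : ℕ) : IsUnit (E m k) := IsUnit.of_mul_eq_one _ (E_mul m k)

lemma E_symm (m k : ℕ) (h : k ≤ m) : E m (m - k) = E m k := by
  unfold E
  rw [Nat.sub_sub_self h, mul_comm]

/-- multiplicative regularity -/
def B (m : ℕ) (a : ℕ → ℤ_[2]) : Prop := ∀ j : ℕ, ∃ r : ℤ_[2], 2 ^ (j + 1) ∣ r - 1 ∧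
  ∀ k, k + 2 ^ j ≤ m → 2 ^ (j + 2) ∣ a (k + 2 ^ j) - r * a k

lemma B_E (m : ℕ) : B m (E m) := by
  intro j
  refine ⟨(1 + 2 ^ (j + 1)) ^ (m + 2 ^ j), ?_, ?_⟩
  · have := sub_dvd_pow_sub_pow ((1 + 2 ^ (j + 1) : ℤ_[2])) 1 (m + 2 ^ j)
    simpa using this
  · intro k hk
    obtain ⟨l, rfl⟩ := Nat.exists_eq_add_of_le hk
    have e1 := E_mul (k + 2 ^ j + l) (k + 2 ^ j)
    have e2 := E_mul (k + 2 ^ j + l) k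
    have hpos := Nat.two_pow_pos j
    rw [show k + 2 ^ j + l - (k + 2 ^ j) = l by omega, D_add] at e1
    rw [show k + 2 ^ j + l - k = l + 2 ^ j by omega, D_add] at e2
    generalize E (k + 2 ^ j + l) (k + 2 ^ j) = x at *
    generalize E (k + 2 ^ j + l) k = y at *
    obtain ⟨c, hc⟩ := P_mod j k
    obtain ⟨d, hd⟩ := P_mod j l
    obtain ⟨f, hf⟩ := u_sq j (k + 2 ^ j)
    set u : ℤ_[2] := 1 + 2 ^ (j + 1) with hu
    have hr : u ^ (k + 2 ^ j + l + 2 ^ j) * u ^ k = u ^ l * u ^ (2 * (k + 2 ^ j)) := by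
      rw [← pow_add, ← pow_add]; congr 1; ring
    set r := u ^ (k + 2 ^ j + l + 2 ^ j)
    set p := P (2 ^ j) 0
    have key : (2 : ℤ_[2]) ^ (j + 2) ∣ P (2 ^ j) l - r * P (2 ^ j) k := by
      refine ⟨d - r * c - p * u ^ l * f, ?_⟩
      linear_combination hd - r * hc - p * hr - p * u ^ l * hf
    have e3 : x - r * y = (x * y * D k * D l) * (P (2 ^ j) l - r * P (2 ^ j) k) := by
      linear_combination -x * e2 + r * y * e1
    rw [e3]
    exact key.mul_left _

lemma B_pow {m : ℕ} {a : ℕ → ℤ_[2]} (h : B m a) (c : ℤ_[2]) (e : ℕ) :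
    B m (fun k => (c * a k) ^ e) := by
  intro j
  obtain ⟨r, h1, h2⟩ := h j
  refine ⟨r ^ e, h1.trans (by simpa using sub_dvd_pow_sub_pow r 1 e), fun k hk => ?_⟩
  have := h2 k hk
  show _ ∣ (c * a (k + 2 ^ j)) ^ e - r ^ e * (c * a k) ^ e
  rw [← mul_pow]
  refine dvd_trans ?_ (sub_dvd_pow_sub_pow _ _ e)
  rw [show c * a (k + 2 ^ j) - r * (c * a k) = c * (a (k + 2 ^ j) - r * a k) by ring]
  exact this.mul_left _

/-- the class of functions -/
def A (m : ℕ) (g : ℕ → ℤ_[2]) : Prop := ∀ j k, k + 2 ^ j ≤ m → 2 ^ (j + 1) ∣ g (k + 2 ^ j) - g k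

def Sy (m : ℕ) (g : ℕ → ℤ_[2]) : Prop := ∀ k, k ≤ m → g (m - k) = g k

lemma B.A {m : ℕ} {a : ℕ → ℤ_[2]} (h : B m a) : A m a := by
  intro j k hk
  obtain ⟨r, h1, h2⟩ := h j
  have := (pow_dvd_pow (2 : ℤ_[2]) (show j + 1 ≤ j + 2 by omega)).trans (h2 k hk)
  rw [show a (k + 2 ^ j) - a k = (a (k + 2 ^ j) - r * a k) + (r - 1) * a k by ring]
  exact dvd_add this (h1.mul_right _)

lemma A_mul {m : ℕ} {a b : ℕ → ℤ_[2]} (ha : A m a) (hb : A m b) : A m (fun k => a k * b k) := by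
  intro j k hk
  show _ ∣ a (k + 2 ^ j) * b (k + 2 ^ j) - a k * b k
  rw [show a (k + 2 ^ j) * b (k + 2 ^ j) - a k * b k =
    (a (k + 2 ^ j) - a k) * b (k + 2 ^ j) + a k * (b (k + 2 ^ j) - b k) by ring]
  exact dvd_add ((ha j k hk).mul_right _) ((hb j k hk).mul_left _)

lemma A_shift {m m' t : ℕ} {a : ℕ → ℤ_[2]} (ha : A m a) (h : m' + t ≤ m) :
    A m' (fun k => a (k + t)) := by
  intro j k hk
  have := ha j (k + t) (by omega)
  rwa [show k + t + 2 ^ j = k + 2 ^ j + t by ring] at this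

/-- strong form for dilations -/
lemma A_dil' {m m' t : ℕ} {g : ℕ → ℤ_[2]} (ha : A m g) (h : 2 * m' + t ≤ m) (j k : ℕ)
    (hk : k + 2 ^ j ≤ m') : 2 ^ (j + 2) ∣ g (2 * (k + 2 ^ j) + t) - g (2 * k + t) := by
  have := ha (j + 1) (2 * k + t) (by rw [pow_succ]; omega)
  rwa [show 2 * k + t + 2 ^ (j + 1) = 2 * (k + 2 ^ j) + t by ring] at this

lemma A_dil {m m' t : ℕ} {g : ℕ → ℤ_[2]} (ha : A m g) (h : 2 * m' + t ≤ m) :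
    A m' (fun k => g (2 * k + t)) := fun j k hk =>
  (pow_dvd_pow (2 : ℤ_[2]) (show j + 1 ≤ j + 2 by omega)).trans (A_dil' ha h j k hk)

lemma h_even {n : ℕ} {a g : ℕ → ℤ_[2]} (ha : B (n + 1) a) (hg : A (2 * n + 1) g) (k : ℕ)
    (hk : k ≤ n) : 2 ∣ a k * g (2 * k) + a (k + 1) * g (2 * k + 1) := by
  have h1 := ha.A 0 k (by simpa using hk)
  have h2 := hg 0 (2 * k) (by simp; omega)
  simp only [pow_zero, zero_add, pow_one] at h1 h2
  rw [show a k * g (2 * k) + a (k + 1) * g (2 * k + 1) = (a (k + 1) - a k) * g (2 * k + 1) +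
    a k * (g (2 * k + 1) - g (2 * k)) + 2 * (a k * g (2 * k)) by ring]
  exact dvd_add (dvd_add (h1.mul_right _) (h2.mul_left _)) (dvd_mul_right _ _)

lemma h_A {n : ℕ} {a g : ℕ → ℤ_[2]} (ha : B (n + 1) a) (hg : A (2 * n + 1) g) (j k : ℕ)
    (hk : k + 2 ^ j ≤ n) : 2 ^ (j + 2) ∣
      (a (k + 2 ^ j) * g (2 * (k + 2 ^ j)) + a (k + 2 ^ j + 1) * g (2 * (k + 2 ^ j) + 1)) -
      (a k * g (2 * k) + a (k + 1) * g (2 * k + 1)) := by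
  have hpos := Nat.two_pow_pos j
  obtain ⟨r, ⟨s, hs⟩, h2⟩ := ha j
  obtain ⟨x, hx⟩ := h2 k (by omega)
  obtain ⟨y, hy⟩ := h2 (k + 1) (by omega)
  rw [show k + 1 + 2 ^ j = k + 2 ^ j + 1 by ring] at hy
  obtain ⟨z, hz⟩ := A_dil' (t := 0) (m' := n) hg (by omega) j k hk
  obtain ⟨w, hw⟩ := A_dil' (t := 1) (m' := n) hg (by omega) j k hk
  obtain ⟨v, hv⟩ := h_even ha hg k (by omega)
  simp only [add_zero] at hz
  refine ⟨x * g (2 * (k + 2 ^ j)) + r * a k * z + y * g (2 * (k + 2 ^ j) + 1)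
    + r * a (k + 1) * w + s * v, ?_⟩
  linear_combination hx * g (2 * (k + 2 ^ j)) + r * a k * hz + hy * g (2 * (k + 2 ^ j) + 1)
    + r * a (k + 1) * hw + (a k * g (2 * k) + a (k + 1) * g (2 * k + 1)) * hs + 2 ^ (j + 1) * s * hv

noncomputable def S (e n : ℕ) (g : ℕ → ℤ_[2]) : ℤ_[2] :=
  ∑ k ∈ Finset.range (n + 1), ((n.choose k : ℕ) : ℤ_[2]) ^ e * g k

lemma cA (n k : ℕ) (h : k ≤ n) : (((2 * n).choose (2 * k) : ℕ) : ℤ_[2]) =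
    n.choose k * (D n * E n k) := by
  obtain ⟨l, rfl⟩ := Nat.exists_eq_add_of_le h
  have h1 := congrArg (Nat.cast : ℕ → ℤ_[2]) (chooseA k l)
  have h2 := E_mul (k + l) k
  rw [Nat.add_sub_cancel_left] at h2
  push_cast at h1
  linear_combination -(((2 * (k + l)).choose (2 * k) : ℕ) : ℤ_[2]) * h2 + E (k + l) k * h1

lemma cB (n k : ℕ) (h : k ≤ n) : (((2 * n + 1).choose (2 * k) : ℕ) : ℤ_[2]) =
    n.choose k * (D (n + 1) * E (n + 1) k) := by
  obtain ⟨l, rfl⟩ := Nat.exists_eq_add_of_le h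
  have h1 := congrArg (Nat.cast : ℕ → ℤ_[2]) (chooseB k l)
  have h2 := E_mul (k + l + 1) k
  rw [show k + l + 1 - k = l + 1 by omega] at h2
  push_cast at h1
  linear_combination -(((2 * (k + l) + 1).choose (2 * k) : ℕ) : ℤ_[2]) * h2 + E (k + l + 1) k * h1

lemma cC (n k : ℕ) (h : k ≤ n) : (((2 * n + 1).choose (2 * k + 1) : ℕ) : ℤ_[2]) =
    n.choose k * (D (n + 1) * E (n + 1) (k + 1)) := by
  obtain ⟨l, rfl⟩ := Nat.exists_eq_add_of_le h
  have h1 := congrArg (Nat.cast : ℕ → ℤ_[2]) (chooseC k l)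
  have h2 := E_mul (k + l + 1) (k + 1)
  rw [show k + l + 1 - (k + 1) = l by omega] at h2
  push_cast at h1
  linear_combination -(((2 * (k + l) + 1).choose (2 * k + 1) : ℕ) : ℤ_[2]) * h2 +
    E (k + l + 1) (k + 1) * h1

lemma cD (n k : ℕ) (h : k ≤ n) : (((2 * (n + 1)).choose (2 * k + 1) : ℕ) : ℤ_[2]) =
    2 * (n + 1) * (n.choose k * (D (n + 1) * E (n + 2) (k + 1))) := by
  obtain ⟨l, rfl⟩ := Nat.exists_eq_add_of_le h
  have h1 := congrArg (Nat.cast : ℕ → ℤ_[2]) (chooseD k l)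
  have h2 := E_mul (k + l + 2) (k + 1)
  rw [show k + l + 2 - (k + 1) = l + 1 by omega] at h2
  push_cast at *
  linear_combination -(((2 * (k + l + 1)).choose (2 * k + 1) : ℕ) : ℤ_[2]) * h2 +
    E (k + l + 2) (k + 1) * h1

lemma S_even (e n : ℕ) (g : ℕ → ℤ_[2]) : S e (2 * (n + 1)) g =
    S e (n + 1) (fun k => (D (n + 1) * E (n + 1) k) ^ e * g (2 * k + 0)) +
    (2 * (n + 1)) ^ e * S e n (fun k => (D (n + 1) * E (n + 2) (k + 1)) ^ e * g (2 * k + 1)) := by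
  unfold S
  rw [Finset.sum_range_succ, sum_odd, Finset.sum_range_succ _ (n + 1), Finset.sum_add_distrib,
    Finset.mul_sum, add_right_comm]
  congr 1
  · congr 1
    · apply Finset.sum_congr rfl
      intro k hk
      rw [cA _ _ (by have := Finset.mem_range.1 hk; omega)]
      ring
    · rw [cA _ _ le_rfl]
      ring
  · apply Finset.sum_congr rfl
    intro k hk
    rw [cD _ _ (by have := Finset.mem_range.1 hk; omega), mul_pow, mul_pow (n.choose k : ℤ_[2])]
    ring

lemma S_odd (e n : ℕ) (g g' : ℕ → ℤ_[2])
    (h : ∀ k, k ≤ n → (D (n + 1) * E (n + 1) k) ^ e * g (2 * k) +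
      (D (n + 1) * E (n + 1) (k + 1)) ^ e * g (2 * k + 1) = 2 * g' k) :
    S e (2 * n + 1) g = 2 * S e n g' := by
  unfold S
  rw [show 2 * n + 1 + 1 = 2 * (n + 1) by ring, sum_odd, Finset.mul_sum]
  apply Finset.sum_congr rfl
  intro k hk
  have hk' : k ≤ n := by have := Finset.mem_range.1 hk; omega
  rw [cB _ _ hk', cC _ _ hk']
  linear_combination (n.choose k : ℤ_[2]) ^ e * h k hk'

lemma A_odd_pts {n : ℕ} {g : ℕ → ℤ_[2]} (hg : A (2 * n + 1) g) (i : ℕ) (hi : i ≤ n) :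
    4 ∣ g (2 * i + 1) - g 1 := by
  induction i with
  | zero => simp
  | succ i ih =>
    have h1 := hg 1 (2 * i + 1) (by omega)
    have h2 := ih (by omega)
    have := dvd_add (by norm_num at h1; exact h1) h2
    convert this using 1
    rw [show 2 * (i + 1) + 1 = 2 * i + 1 + 2 by ring]
    ring

lemma E_one (n : ℕ) : E (n + 1) 1 = ((2 * n + 1 : ℕ) : ℤ_[2]) * E (n + 1) 0 := by
  have h1 := E_mul (n + 1) 1
  have h0 := E_mul (n + 1) 0
  simp only [Nat.add_sub_cancel, Nat.sub_zero, D_succ, D_zero] at h1 h0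
  push_cast at *
  linear_combination -E (n + 1) 1 * h0 + (2 * n + 1) * E (n + 1) 0 * h1

lemma two_dvd_unit_mul {x y : ℤ_[2]} (hx : IsUnit x) : 2 ∣ x * y ↔ 2 ∣ y := hx.dvd_mul_left

theorem lower (e : ℕ) (he2 : 3 ≤ e) (n : ℕ) : ∀ g, A n g → 2 ^ s2 n ∣ S e n g := by
  induction n using Nat.strong_induction_on with
  | _ n ih =>
    intro g hg
    rcases Nat.even_or_odd' n with ⟨m, rfl | rfl⟩
    · rcases m with _ | n
      · simp [s2]
      · rw [S_even, s2_two_mul]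
        apply dvd_add
        · apply ih _ (by omega)
          exact A_mul (B_pow (B_E _) _ _).A (A_dil hg (by omega))
        · have h1 := ih n (by omega) (fun k => (D (n + 1) * E (n + 2) (k + 1)) ^ e * g (2 * k + 1))
            (A_mul (A_shift (B_pow (B_E (n + 2)) _ _).A (by omega)) (A_dil hg (by omega)))
          have h2 : (2 : ℤ_[2]) ^ 1 ∣ (2 * (n + 1)) ^ e := by
            rw [mul_pow]; exact (pow_dvd_pow 2 (by omega)).mul_right _
          refine dvd_trans ?_ (mul_dvd_mul h2 h1)
          rw [← pow_add]
          apply pow_dvd_pow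
          have := s2_succ n
          omega
    · have hB := B_pow (B_E (m + 1)) (D (m + 1)) e
      have hE := fun k (hk : k ≤ m) => h_even hB hg k hk
      choose! g' hg' using hE
      rw [S_odd e m g g' hg', s2_two_mul_add_one, pow_succ']
      apply mul_dvd_mul_left
      apply ih _ (by omega)
      intro j k hk
      have hpos := Nat.two_pow_pos j
      have h1 := h_A hB hg j k hk
      rw [hg' _ hk, hg' k (by omega), ← mul_sub, pow_succ'] at h1
      exact (mul_dvd_mul_iff_left two_prime.ne_zero).1 h1

theorem exact_val (e : ℕ) (he : Odd e) (he2 : 3 ≤ e) (n : ℕ) : ∀ g, A n g → Sy n g →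
    (2 ^ (s2 n + 1) ∣ S e n g ↔ (2 ∣ g 0 ∨ ¬ NA n)) := by
  induction n using Nat.strong_induction_on with
  | _ n ih =>
    intro g hg hs
    rcases Nat.even_or_odd' n with ⟨m, rfl | rfl⟩
    · rcases m with _ | n
      · simp [s2, S, NA]
      · rw [S_even, s2_two_mul, NA_two_mul]
        have hA : A (n + 1) (fun k => (D (n + 1) * E (n + 1) k) ^ e * g (2 * k + 0)) :=
          A_mul (B_pow (B_E _) _ _).A (A_dil hg (by omega))
        have hS : Sy (n + 1) (fun k => (D (n + 1) * E (n + 1) k) ^ e * g (2 * k + 0)) := by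
          intro k hk
          simp only [add_zero]
          rw [E_symm _ _ hk, ← hs (2 * k) (by omega), Nat.mul_sub]
        have h1 := lower e he2 n (fun k => (D (n + 1) * E (n + 2) (k + 1)) ^ e * g (2 * k + 1))
            (A_mul (A_shift (B_pow (B_E (n + 2)) _ _).A (by omega)) (A_dil hg (by omega)))
        have h2 : (2 : ℤ_[2]) ^ 2 ∣ (2 * (n + 1)) ^ e := by
          rw [mul_pow]; exact (pow_dvd_pow 2 (by omega)).mul_right _
        have h3 : (2 : ℤ_[2]) ^ (s2 (n + 1) + 1) ∣ (2 * (n + 1)) ^ e *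
            S e n (fun k => (D (n + 1) * E (n + 2) (k + 1)) ^ e * g (2 * k + 1)) := by
          refine dvd_trans ?_ (mul_dvd_mul h2 h1)
          rw [← pow_add]
          apply pow_dvd_pow
          have := s2_succ n
          omega
        rw [dvd_add_left h3, ih (n + 1) (by omega) _ hA hS]
        rw [two_dvd_unit_mul (((D_unit _).mul (E_unit _ _)).pow e)]
    · have hB := B_pow (B_E (m + 1)) (D (m + 1)) e
      have hE := fun k (hk : k ≤ m) => h_even hB hg k hk
      choose! g' hg' using hE
      have hA : A m g' := by
        intro j k hk
        have hpos := Nat.two_pow_pos j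
        have h1 := h_A hB hg j k hk
        rw [hg' _ hk, hg' k (by omega), ← mul_sub, pow_succ'] at h1
        exact (mul_dvd_mul_iff_left two_prime.ne_zero).1 h1
      have hS : Sy m g' := by
        intro k hk
        apply mul_left_cancel₀ two_prime.ne_zero
        rw [← hg' _ (Nat.sub_le m k), ← hg' k hk]
        have a1 := E_symm (m + 1) k (by omega)
        have a2 := E_symm (m + 1) (k + 1) (by omega)
        have a3 := hs (2 * k) (by omega)
        have a4 := hs (2 * k + 1) (by omega)
        rw [show m + 1 - k = m - k + 1 by omega] at a1
        rw [show m + 1 - (k + 1) = m - k by omega] at a2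
        rw [show 2 * m + 1 - 2 * k = 2 * (m - k) + 1 by omega] at a3
        rw [show 2 * m + 1 - (2 * k + 1) = 2 * (m - k) by omega] at a4
        simp only [a1, a2, a3, a4]
        ring
      rw [S_odd e m g g' hg', s2_two_mul_add_one, pow_succ', mul_dvd_mul_iff_left two_prime.ne_zero,
        ih m (by omega) g' hA hS, NA_two_mul_add_one]
      have h01 : 4 ∣ g 0 - g 1 := by
        have := hs 0 (by omega)
        rw [← this]
        exact A_odd_pts hg m le_rfl
      obtain ⟨c, hc⟩ := h01
      have h0 := hg' 0 (by omega)
      simp only [mul_zero, zero_add, E_one] at h0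
      set a0 : ℤ_[2] := (D (m + 1) * E (m + 1) 0) ^ e with ha0
      have hu : IsUnit a0 := ((D_unit _).mul (E_unit _ _)).pow e
      have h0' : a0 * g 0 + ((2 * m + 1 : ℕ) : ℤ_[2]) ^ e * a0 * g 1 = 2 * g' 0 := by
        rw [← h0, ha0]; ring
      rcases Nat.even_or_odd' m with ⟨l, hl | hl⟩
      · have hE : Even m := ⟨l, by omega⟩
        have h4 : (4 : ℤ_[2]) ∣ ((2 * m + 1 : ℕ) : ℤ_[2]) ^ e - 1 := by
          refine dvd_trans ?_ (by simpa using sub_dvd_pow_sub_pow ((2 * m + 1 : ℕ) : ℤ_[2]) 1 e)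
          exact ⟨l, by rw [hl]; push_cast; ring⟩
        obtain ⟨d, hd⟩ := h4
        have key : g' 0 = a0 * g 0 + 2 * (d * a0 * g 1 - a0 * c) := by
          apply mul_left_cancel₀ two_prime.ne_zero
          linear_combination -h0' + a0 * g 1 * hd - a0 * hc
        rw [key, dvd_add_left (dvd_mul_right _ _), two_dvd_unit_mul hu]
        simp [hE]
      · have hE : ¬ Even m := by rw [Nat.not_even_iff_odd]; exact ⟨l, by omega⟩
        have h4 : (4 : ℤ_[2]) ∣ ((2 * m + 1 : ℕ) : ℤ_[2]) ^ e + 1 := by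
          refine dvd_trans ?_ (by simpa using he.add_dvd_pow_add_pow ((2 * m + 1 : ℕ) : ℤ_[2]) 1)
          exact ⟨l + 1, by rw [hl]; push_cast; ring⟩
        obtain ⟨d, hd⟩ := h4
        have key : g' 0 = 2 * (d * a0 * g 1 + a0 * c) := by
          apply mul_left_cancel₀ two_prime.ne_zero
          linear_combination -h0' + a0 * g 1 * hd + a0 * hc
        simp [hE, key]

end Sub11

theorem stmt_11 (e n : ℕ) (he : Odd e) (he2 : 3 ≤ e) (hn : 0 < n) :
    s2 n ≤ padicValNat 2 (∑ k ∈ Finset.range (n + 1), (n.choose k) ^ e) ∧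
      (padicValNat 2 (∑ k ∈ Finset.range (n + 1), (n.choose k) ^ e) = s2 n ↔
        ∀ i : ℕ, ¬(n.testBit i = true ∧ n.testBit (i + 1) = true)) := by
  set X := ∑ k ∈ Finset.range (n + 1), (n.choose k) ^ e with hX
  have hX0 : X ≠ 0 := by
    have : 0 < X := Finset.sum_pos (fun k hk => by
      have := Nat.choose_pos (n := n) (k := k) (by have := Finset.mem_range.1 hk; omega)
      positivity) ⟨0, by simp⟩
    omega
  have hc : Sub11.S e n (fun _ => 1) = ((X : ℤ) : ℤ_[2]) := by
    simp [Sub11.S, hX]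
  have hd : ∀ t : ℕ, (2 : ℤ_[2]) ^ t ∣ Sub11.S e n (fun _ => 1) ↔ t ≤ padicValNat 2 X := by
    intro t
    rw [← padicValNat_dvd_iff_le hX0, hc]
    have := PadicInt.pow_p_dvd_int_iff (p := 2) t (X : ℤ)
    push_cast at this ⊢
    rw [this]
    exact_mod_cast Iff.rfl
  have hA : Sub11.A n (fun _ => 1) := by intro j k _; simp
  have hS : Sub11.Sy n (fun _ => 1) := by intro k _; rfl
  have h1 := (hd _).1 (Sub11.lower e he2 n _ hA)
  have h2 := Sub11.exact_val e he he2 n _ hA hS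
  rw [hd] at h2
  have h3 : ¬ (2 : ℤ_[2]) ∣ 1 := fun h => Sub11.two_not_unit (isUnit_of_dvd_one h)
  refine ⟨h1, ?_⟩
  change _ ↔ Sub11.NA n
  simp only [h3, false_or] at h2
  constructor
  · intro h
    by_contra h5
    have := h2.2 h5
    omega
  · intro h
    by_contra h5
    exact h2.1 (by omega) h
end

section
/- Let k and n be positive integers, and let S be the sum of all odd 2k-nomial coefficients with n at the top, i.e., S = ∑ over all (x₁, …, x_{2k}) with x₁+⋯+x_{2k} = n and n!/(x₁!⋯x_{2k}!) odd, of n!/(x₁!⋯x_{2k}!). Then ν₂(S) ≥ s₂(n) + ν₂(k). If k is odd, equality holds if and only if the binary expansion of n does not contain two adjacent 1s (for every i, n does not have both bit i and bit i+1 equal to 1). If k is even, equality holds if and only if, in the binary expansion of n, all of the 1s come before all of the 0s, i.e., n = 2^a·(2^b − 1) for some nonnegative integer a and positive integer b. -/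
open Finset

lemma poly_expand {ι : Type*} [DecidableEq ι] (a : ι → ℤ) (B : Finset ι) :
    ∀ p : Polynomial ℤ, ∃ h : Finset ι → ℤ,
      (∀ T ⊆ B, p.eval (∑ j ∈ T, a j) = ∑ C ∈ T.powerset, h C) ∧
      ∀ C ⊆ B, (∏ j ∈ C, a j) ∣ h C := by
  induction B using Finset.induction_on with
  | empty =>
    intro p
    refine ⟨fun _ => p.eval 0, ?_, ?_⟩
    · intro T hT
      rw [Finset.subset_empty] at hT
      subst hT; simp
    · intro C hT
      rw [Finset.subset_empty] at hT
      subst hT; simp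
  | insert b B hb ih =>
    intro p
    obtain ⟨p2, hp2⟩ := Polynomial.sub_dvd_eval_sub
      (Polynomial.X + Polynomial.C (a b)) (Polynomial.X : Polynomial ℤ) (p.map Polynomial.C)
    have key : ∀ y : ℤ, p.eval (a b + y) = p.eval y + a b * p2.eval y := by
      intro y
      have := congrArg (Polynomial.eval y) hp2
      simp only [Polynomial.eval_map, Polynomial.eval_sub, Polynomial.eval_mul] at this
      change Polynomial.eval y (p.comp _) - Polynomial.eval y (p.comp _) = _ at this
      simp [Polynomial.eval_comp] at this
      rw [add_comm y] at this
      linarith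
    obtain ⟨h1, h1a, h1b⟩ := ih p
    obtain ⟨h2, h2a, h2b⟩ := ih p2
    refine ⟨fun C => if b ∈ C then a b * h2 (C.erase b) else h1 C, ?_, ?_⟩
    · intro T hT
      by_cases hbT : b ∈ T
      · obtain ⟨T', hbT', rfl⟩ : ∃ T', b ∉ T' ∧ T = insert b T' :=
          ⟨T.erase b, by simp, by simp [hbT]⟩
        have hT' : T' ⊆ B := by
          intro x hx
          have := hT (Finset.mem_insert_of_mem hx)
          rcases Finset.mem_insert.1 this with h | h
          · subst h; exact absurd hx hbT'
          · exact h
        rw [Finset.sum_insert hbT', key, h1a T' hT', h2a T' hT',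
          Finset.sum_powerset_insert hbT', Finset.mul_sum]
        congr 1
        · apply Finset.sum_congr rfl
          intro C hC
          rw [if_neg]
          exact fun h => hbT' (Finset.mem_powerset.1 hC h)
        · apply Finset.sum_congr rfl
          intro C hC
          have : b ∉ C := fun h => hbT' (Finset.mem_powerset.1 hC h)
          simp [this]
      · have hT' : T ⊆ B := (Finset.subset_insert_iff_of_notMem hbT).1 hT
        rw [h1a T hT']
        apply Finset.sum_congr rfl
        intro C hC
        beta_reduce
        rw [if_neg]
        exact fun h => hbT (Finset.mem_powerset.1 hC h)
    · intro C hC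
      by_cases hbC : b ∈ C
      · simp only [hbC, if_true]
        rw [← Finset.mul_prod_erase C a hbC]
        apply mul_dvd_mul_left
        apply h2b
        exact Finset.subset_insert_iff.1 hC
      · simp only [hbC, if_false]
        exact h1b C ((Finset.subset_insert_iff_of_notMem hbC).1 hC)

lemma choose_poly (i : ℕ) : ∃ Q : Polynomial ℤ, Odd (Q.eval 0) ∧
    (∀ y : ℕ, Q.eval (y : ℤ) = Q.eval 0 * ((2 ^ i * y + 2 ^ i).choose (2 ^ i) : ℕ)) ∧
    (∀ y : ℤ, Even y → Q.eval y ≡ Q.eval 0 * (1 + y) [ZMOD 4]) := by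
  let F : ℕ → Polynomial ℤ := fun r =>
    Polynomial.C ((ordCompl[2] (r+1) : ℕ) : ℤ) + Polynomial.C (2 ^ (i - (r+1).factorization 2)) * Polynomial.X
  have hF : ∀ r y, (F r).eval y = ((ordCompl[2] (r+1) : ℕ) : ℤ) + 2 ^ (i - (r+1).factorization 2) * y := by
    intro r y; simp [F]
  have hle : ∀ r, r < 2 ^ i → (r+1).factorization 2 ≤ i := by
    intro r hr
    have h1 : 2 ^ ((r+1).factorization 2) ≤ r + 1 := Nat.ordProj_le 2 (by omega)
    have h2 : 2 ^ ((r+1).factorization 2) ≤ 2 ^ i := by omega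
    exact (Nat.pow_le_pow_iff_right (by norm_num)).1 h2
  have hlt : ∀ r, r + 1 < 2 ^ i → (r+1).factorization 2 < i := by
    intro r hr
    have h1 : 2 ^ ((r+1).factorization 2) ≤ r + 1 := Nat.ordProj_le 2 (by omega)
    have h2 : 2 ^ ((r+1).factorization 2) < 2 ^ i := by omega
    exact (Nat.pow_lt_pow_iff_right (by norm_num)).1 h2
  let Q : Polynomial ℤ := ∏ r ∈ range (2 ^ i), F r
  have hQ : ∀ y, Q.eval y = ∏ r ∈ range (2 ^ i), (F r).eval y := by
    intro y; simp [Q, Polynomial.eval_prod]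
  let P : ℤ := ∏ r ∈ range (2 ^ i), 2 ^ ((r+1).factorization 2)
  have hP : P ≠ 0 := by
    simp only [P]; rw [Finset.prod_ne_zero_iff]; intros; positivity
  have hPQ : ∀ y : ℕ, P * Q.eval (y : ℤ) = ((2 ^ i * y + 1).ascFactorial (2 ^ i) : ℕ) := by
    intro y
    rw [hQ, ← Finset.prod_mul_distrib, Nat.ascFactorial_eq_prod_range]
    push_cast
    apply Finset.prod_congr rfl
    intro r hr
    rw [hF, mul_add, ← mul_assoc, ← pow_add, Nat.add_sub_cancel' (hle r (Finset.mem_range.1 hr))]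
    have : (2:ℤ) ^ ((r+1).factorization 2) * ((ordCompl[2] (r+1) : ℕ) : ℤ) = (r : ℤ) + 1 := by
      exact_mod_cast Nat.ordProj_mul_ordCompl_eq_self (r+1) 2
    rw [this]; ring
  refine ⟨Q, ?_, ?_, ?_⟩
  · rw [hQ]
    refine Finset.prod_induction _ (fun x : ℤ => Odd x) (fun a b => Odd.mul) odd_one ?_
    intro r hr
    rw [hF, mul_zero, add_zero, Int.odd_coe_nat]
    have := Nat.not_dvd_ordCompl (p := 2) Nat.prime_two (n := r+1) (by omega)
    rw [← Nat.not_even_iff_odd, even_iff_two_dvd]; exact this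
  · intro y
    apply mul_left_cancel₀ hP
    have h0 := hPQ 0
    rw [← mul_assoc, hPQ y]
    simp only [Nat.cast_zero] at h0
    rw [h0, mul_zero, zero_add, Nat.one_ascFactorial, Nat.ascFactorial_eq_factorial_mul_choose]
    push_cast; ring
  · intro y hy
    have h2 : 2 ^ i = (2 ^ i - 1) + 1 := by have := Nat.one_le_two_pow (n := i); omega
    rw [hQ, hQ, h2, Finset.prod_range_succ, Finset.prod_range_succ, mul_assoc]
    apply Int.ModEq.mul
    · apply Int.ModEq.prod
      intro r hr
      rw [hF, hF]
      have := hlt r (by have := Finset.mem_range.1 hr; omega)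
      apply Int.ModEq.add_left
      obtain ⟨z, rfl⟩ := hy
      obtain ⟨t, ht⟩ : ∃ t, i - (r+1).factorization 2 = t + 1 := ⟨i - (r+1).factorization 2 - 1, by omega⟩
      rw [ht, mul_zero]
      apply (Int.modEq_zero_iff_dvd).2
      exact ⟨2 ^ t * z, by ring⟩
    · rw [hF, hF, ← h2]
      have : (2 ^ i).factorization 2 = i := by simp [Nat.prime_two.factorization_self]
      rw [this]
      simp [Int.ModEq.refl]

lemma inv_poly (i N : ℕ) (hN : 2 ≤ N) : ∃ p : Polynomial ℤ,
    (∀ y : ℕ, Even y → (((2 ^ i * y + 2 ^ i).choose (2 ^ i) : ℕ) : ℤ) * p.eval (y : ℤ) ≡ 1 [ZMOD 2 ^ N]) ∧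
    (∀ y : ℕ, Even y → p.eval (y : ℤ) ≡ 1 + y [ZMOD 4]) ∧
    (∀ y : ℕ, Even y → Odd ((2 ^ i * y + 2 ^ i).choose (2 ^ i))) := by
  obtain ⟨Q, h1, h2, h3⟩ := choose_poly i
  have hodd : ∀ y : ℕ, Even y → Odd (Q.eval (y : ℤ)) := by
    intro y hy
    obtain ⟨t, ht⟩ := (h3 y (by exact_mod_cast hy)).dvd
    have : Odd (Q.eval 0 * (1 + (y:ℤ))) := h1.mul (by
      have : Even (y:ℤ) := by exact_mod_cast hy
      exact odd_one.add_even this)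
    have e : Q.eval (y:ℤ) = Q.eval 0 * (1 + (y:ℤ)) - 2 * (2 * t) := by linarith
    rw [e]; exact this.sub_even (even_two_mul _)
  have hA : ∀ y : ℕ, Even y → (((2 ^ i * y + 2 ^ i).choose (2 ^ i) : ℕ) : ℤ) *
      (Polynomial.C (Q.eval 0) * Q ^ (2 ^ N - 1)).eval (y : ℤ) ≡ 1 [ZMOD 2 ^ N] := by
    intro y hy
    have e : (((2 ^ i * y + 2 ^ i).choose (2 ^ i) : ℕ) : ℤ) *
      (Polynomial.C (Q.eval 0) * Q ^ (2 ^ N - 1)).eval (y : ℤ) = (Q.eval (y:ℤ)) ^ (2 ^ N) := by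
      have h2N : 2 ^ N = (2 ^ N - 1) + 1 := by have := Nat.one_le_two_pow (n := N); omega
      have h3' : (Q.eval (y:ℤ)) ^ (2 ^ N) = (Q.eval (y:ℤ)) ^ (2 ^ N - 1) * Q.eval (y:ℤ) := by
        conv_lhs => rw [h2N, pow_succ]
      rw [h3']
      simp only [Polynomial.eval_mul, Polynomial.eval_C, Polynomial.eval_pow]
      have h4' := h2 y
      generalize (Q.eval (y:ℤ)) ^ (2 ^ N - 1) = w
      linear_combination (-w) * h4'
    rw [e]
    have ho := hodd y hy
    generalize Q.eval (y:ℤ) = z at ho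
    clear e
    clear hN
    have : ∀ N : ℕ, ∃ t, z ^ (2 ^ N) = 1 + 2 ^ N * t := by
      intro N
      induction N with
      | zero => exact ⟨z - 1, by ring⟩
      | succ N ih =>
        obtain ⟨t, ht⟩ := ih
        rcases N with _ | N
        · obtain ⟨w, rfl⟩ := ho
          exact ⟨2 * w ^ 2 + 2 * w, by ring⟩
        · refine ⟨t + 2 ^ N * t ^ 2, ?_⟩
          rw [pow_succ 2 (N+1), pow_mul, ht]; ring
    obtain ⟨t, ht⟩ := this N
    rw [ht]
    exact (Int.modEq_iff_dvd.2 ⟨-t, by ring⟩)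
  have h4 : (4:ℤ) ∣ 2 ^ N := by
    obtain ⟨M, rfl⟩ := Nat.exists_eq_add_of_le hN
    exact ⟨2 ^ M, by ring⟩
  have hB : ∀ y : ℕ, Even y → (((2 ^ i * y + 2 ^ i).choose (2 ^ i) : ℕ) : ℤ) ≡ 1 + y [ZMOD 4] := by
    intro y hy
    have := h3 y (by exact_mod_cast hy)
    rw [h2 y] at this
    have hc : Int.gcd 4 (Q.eval 0) = 1 := by
      have : IsCoprime (4:ℤ) (Q.eval 0) := by
        have : IsCoprime ((2:ℤ)^2) (Q.eval 0) := IsCoprime.pow_left (by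
          rw [Int.isCoprime_iff_gcd_eq_one]
          obtain ⟨w, hw⟩ := h1
          rw [hw]; simp)
        simpa using this
      exact Int.isCoprime_iff_gcd_eq_one.1 this
    have := Int.ModEq.cancel_left_div_gcd (by norm_num) this
    rw [hc] at this; simpa using this
  refine ⟨_, hA, ?_, ?_⟩
  · intro y hy
    have a := (hA y hy).of_dvd h4
    have b := hB y hy
    generalize (Polynomial.eval (y:ℤ) (Polynomial.C (Q.eval 0) * Q ^ (2 ^ N - 1))) = z at *
    have c : (1 + (y:ℤ)) * z ≡ 1 [ZMOD 4] := (b.symm.mul_right z).trans a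
    obtain ⟨w, rfl⟩ := hy
    have d : (1 + ((w+w:ℕ):ℤ)) * ((1 + ((w+w:ℕ):ℤ)) * z) ≡ (1 + ((w+w:ℕ):ℤ)) * 1 [ZMOD 4] := c.mul_left _
    refine Int.ModEq.trans ?_ (d.trans (by simp [Int.ModEq.refl]))
    apply Int.modEq_iff_dvd.2
    exact ⟨(w + w^2) * z, by push_cast; ring⟩
  · intro y hy
    have e := h2 y
    have := hodd y hy
    rw [e, Int.odd_mul] at this
    exact_mod_cast this.2

/-- the tuple of parts obtained by colouring the bits `e j` by `f j` -/
def xv {r m : ℕ} (e : Fin r → ℕ) (f : Fin r → Fin m) (c : Fin m) : ℕ :=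
  ∑ j, if f j = c then 2 ^ e j else 0

lemma xv_sum {r m : ℕ} (e : Fin r → ℕ) (f : Fin r → Fin m) :
    ∑ c, xv e f c = ∑ j, 2 ^ e j := by
  unfold xv
  rw [Finset.sum_comm]
  simp

lemma xv_cons {r m : ℕ} (e : Fin (r+1) → ℕ) (c : Fin m) (f : Fin r → Fin m) :
    xv e (Fin.cons c f : Fin (r+1) → Fin m) = fun d => xv (e ∘ Fin.succ) f d + if d = c then 2 ^ e 0 else 0 := by
  funext d
  unfold xv
  rw [Fin.sum_univ_succ, add_comm]
  simp [eq_comm]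

lemma xv_dvd {r m : ℕ} (e : Fin (r+1) → ℕ) (he : StrictMono e) (f : Fin r → Fin m) (c : Fin m) :
    xv (e ∘ Fin.succ) f c = 2 ^ e 0 * ∑ j with f j = c, 2 ^ (e j.succ - e 0) := by
  unfold xv
  rw [Finset.mul_sum, Finset.sum_filter]
  apply Finset.sum_congr rfl
  intro j _
  split_ifs
  · have : e 0 < e j.succ := he (Fin.succ_pos j)
    rw [← pow_add, Function.comp, Nat.add_sub_cancel' this.le]
  · rfl

lemma even_part {r m : ℕ} (e : Fin (r+1) → ℕ) (he : StrictMono e) (f : Fin r → Fin m) (c : Fin m) :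
    Even (∑ j with f j = c, 2 ^ (e j.succ - e 0)) := by
  apply Finset.even_sum
  intro j _
  have : e 0 < e j.succ := he (Fin.succ_pos j)
  exact (even_two).pow_of_ne_zero (by omega)

lemma mult_step {m : ℕ} (x : Fin m → ℕ) (c : Fin m) (a : ℕ) :
    Nat.multinomial univ (fun d => x d + if d = c then a else 0) * (x c + a).choose a =
      Nat.multinomial univ x * ((∑ d, x d) + a).choose a := by
  have h1 := Nat.multinomial_spec univ x
  have h2 := Nat.multinomial_spec univ (fun d => x d + if d = c then a else 0)
  have h3 : ∑ d, (x d + if d = c then a else 0) = (∑ d, x d) + a := by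
    rw [Finset.sum_add_distrib]; simp
  rw [h3] at h2
  have h4 : ∏ d, (x d + if d = c then a else 0).factorial =
      (x c + a).factorial * ∏ d ∈ univ.erase c, (x d).factorial := by
    rw [← Finset.mul_prod_erase univ _ (Finset.mem_univ c)]
    simp only [if_true]
    congr 1
    apply Finset.prod_congr rfl
    intro d hd
    rw [if_neg (Finset.ne_of_mem_erase hd), add_zero]
  rw [h4] at h2
  rw [← Finset.mul_prod_erase univ _ (Finset.mem_univ c)] at h1
  have h5 := Nat.add_choose_mul_factorial_mul_factorial (x c) a
  have h6 := Nat.add_choose_mul_factorial_mul_factorial (∑ d, x d) a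
  have hpos : 0 < (x c).factorial * a.factorial * ∏ d ∈ univ.erase c, (x d).factorial := by
    have : 0 < ∏ d ∈ univ.erase c, (x d).factorial := Finset.prod_pos (fun d _ => Nat.factorial_pos _)
    have := Nat.factorial_pos (x c)
    have := Nat.factorial_pos a
    positivity
  apply Nat.eq_of_mul_eq_mul_right hpos
  generalize ∏ d ∈ univ.erase c, (x d).factorial = E at *
  generalize Nat.multinomial univ x = M at *
  generalize Nat.multinomial univ (fun d => x d + if d = c then a else 0) = M' at *
  calc _ = ((x c + a).choose a * (x c).factorial * a.factorial) * E * M' := by ring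
    _ = _ := by rw [h5, h2, ← h6, ← h1]; ring

lemma core {r m : ℕ} (e : Fin (r+1) → ℕ) (he : StrictMono e) (N : ℕ) (hN : 2 ≤ N) :
    ∃ (q : ℤ) (h : Finset (Fin r) → ℤ), Odd q ∧ Odd (h ∅) ∧
      (∀ j, h {j} ≡ (if e j.succ = e 0 + 1 then 2 else 0) [ZMOD 4]) ∧
      (∀ C, 2 ≤ C.card → (2:ℤ) ^ (C.card + 1) ∣ h C) ∧
      (∀ (c : Fin m) (f : Fin r → Fin m),
        (Nat.multinomial univ (xv e (Fin.cons c f : Fin (r+1) → Fin m)) : ℤ) ≡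
        q * Nat.multinomial univ (xv (e ∘ Fin.succ) f) *
          ∑ C ∈ (univ.filter (fun j => f j = c)).powerset, h C [ZMOD 2 ^ N]) := by
  obtain ⟨p, hp1, hp2, hp3⟩ := inv_poly (e 0) N hN
  have hpos : ∀ j : Fin r, e 0 < e j.succ := fun j => he (Fin.succ_pos j)
  obtain ⟨h, ha, hb⟩ := poly_expand (fun j : Fin r => (2:ℤ) ^ (e j.succ - e 0)) univ p
  set n' := ∑ j : Fin r, 2 ^ (e j.succ - e 0) with hn'
  have hn'e : Even n' := by
    apply Finset.even_sum
    intro j _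
    have := hpos j
    exact (even_two).pow_of_ne_zero (by omega)
  have h0 := ha ∅ (by simp)
  simp only [Finset.sum_empty, Finset.powerset_empty, Finset.sum_singleton] at h0
  have h00 := hp2 0 (by simp)
  simp only [Nat.cast_zero, add_zero] at h00
  rw [h0] at h00
  refine ⟨((2 ^ e 0 * n' + 2 ^ e 0).choose (2 ^ e 0) : ℕ), h, ?_, ?_, ?_, ?_, ?_⟩
  · exact_mod_cast hp3 n' hn'e
  · obtain ⟨t, ht⟩ := h00.dvd
    exact ⟨-2 * t, by linarith⟩
  · intro j
    have h1 := ha {j} (by simp)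
    have hj := hpos j
    rw [show ({j} : Finset (Fin r)).powerset = {∅, {j}} by
      ext s; simp [Finset.subset_singleton_iff]] at h1
    rw [Finset.sum_singleton, Finset.sum_pair (by simp)] at h1
    have h2 := hp2 (2 ^ (e j.succ - e 0)) ((even_two).pow_of_ne_zero (by omega))
    push_cast at h2
    rw [h1] at h2
    have h3 : h {j} ≡ 2 ^ (e j.succ - e 0) [ZMOD 4] := by
      have := h2.sub h00
      simpa using this
    refine h3.trans ?_
    split_ifs with hs
    · rw [hs]; simp [Int.ModEq.refl]
    · obtain ⟨t, ht⟩ : ∃ t, e j.succ - e 0 = t + 2 := ⟨e j.succ - e 0 - 2, by omega⟩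
      rw [ht]
      exact (Int.modEq_zero_iff_dvd).2 ⟨2 ^ t, by ring⟩
  · intro C hC
    refine dvd_trans ?_ (hb C (by simp))
    rw [Finset.prod_pow_eq_pow_sum]
    apply pow_dvd_pow
    obtain ⟨j, hj, j', hj', hne⟩ := Finset.one_lt_card.1 hC
    have hinj : e j.succ ≠ e j'.succ := fun h => hne (Fin.succ_injective _ (he.injective h))
    rw [Nat.add_one_le_iff, Finset.card_eq_sum_ones]
    apply Finset.sum_lt_sum
    · intro t _; have := hpos t; omega
    · have := hpos j
      have := hpos j'
      by_cases h : 1 < e j.succ - e 0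
      · exact ⟨j, hj, h⟩
      · exact ⟨j', hj', by omega⟩
  · intro c f
    have h1 := ha (univ.filter (fun j => f j = c)) (by simp)
    rw [← h1]
    have hy := even_part e he f c
    have hx := xv_dvd e he f c
    set y := ∑ j with f j = c, 2 ^ (e j.succ - e 0) with hyd
    have hy' : (∑ j with f j = c, (2:ℤ) ^ (e j.succ - e 0)) = (y : ℤ) := by
      rw [hyd]; push_cast; rfl
    rw [hy']
    have hs := mult_step (xv (e ∘ Fin.succ) f) c (2 ^ e 0)
    rw [← xv_cons, xv_sum, hx] at hs
    have hsum : ∑ j, 2 ^ ((e ∘ Fin.succ) j) = 2 ^ e 0 * n' := by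
      rw [hn', Finset.mul_sum]
      apply Finset.sum_congr rfl
      intro j _
      rw [← pow_add, Function.comp, Nat.add_sub_cancel' (hpos j).le]
    rw [hsum] at hs
    have hs' : (Nat.multinomial univ (xv e (Fin.cons c f : Fin (r+1) → Fin m)) : ℤ) *
      ((2 ^ e 0 * y + 2 ^ e 0).choose (2 ^ e 0) : ℕ) = (Nat.multinomial univ (xv (e ∘ Fin.succ) f) : ℤ) *
      ((2 ^ e 0 * n' + 2 ^ e 0).choose (2 ^ e 0) : ℕ) := by exact_mod_cast hs
    have h2 := hp1 y hy
    have h3 := h2.mul_left (Nat.multinomial univ (xv e (Fin.cons c f : Fin (r+1) → Fin m)) : ℤ)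
    rw [mul_one, ← mul_assoc, hs'] at h3
    rw [mul_comm (((2 ^ e 0 * n' + 2 ^ e 0).choose (2 ^ e 0) : ℕ) : ℤ)]
    exact h3.symm

lemma mult_odd_step {r m : ℕ} (e : Fin (r+1) → ℕ) (he : StrictMono e) (x : Fin m → ℕ) (c : Fin m)
    (hx : 2 ^ (e 0 + 1) ∣ x c) (hs : ∑ d, x d = ∑ j : Fin r, 2 ^ e j.succ) :
    Odd (Nat.multinomial univ (fun d => x d + if d = c then 2 ^ e 0 else 0)) ↔
      Odd (Nat.multinomial univ x) := by
  obtain ⟨p, hp1, hp2, hp3⟩ := inv_poly (e 0) 2 le_rfl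
  have h := mult_step x c (2 ^ e 0)
  obtain ⟨z, hz⟩ := hx
  have h1 := hp3 (2 * z) (even_two_mul z)
  have hd : 2 ^ (e 0 + 1) ∣ ∑ d, x d := by
    rw [hs]
    apply Finset.dvd_sum
    intro j _
    exact pow_dvd_pow _ (he (Fin.succ_pos j))
  obtain ⟨w, hw⟩ := hd
  have h2 := hp3 (2 * w) (even_two_mul w)
  rw [hz, hw] at h
  rw [← mul_assoc, ← pow_succ] at h1 h2
  constructor
  · intro ho
    have := ho.mul h1
    rw [h] at this
    exact (Nat.odd_mul.1 this).1
  · intro ho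
    have := ho.mul h2
    rw [← h] at this
    exact (Nat.odd_mul.1 this).1

lemma xv_dvd' {r m : ℕ} (e : Fin (r+1) → ℕ) (he : StrictMono e) (f : Fin r → Fin m) (c : Fin m) :
    2 ^ (e 0 + 1) ∣ xv (e ∘ Fin.succ) f c := by
  unfold xv
  apply Finset.dvd_sum
  intro j _
  split_ifs
  · exact pow_dvd_pow _ (he (Fin.succ_pos j))
  · exact dvd_zero _

lemma succ_mono {r : ℕ} (e : Fin (r+1) → ℕ) (he : StrictMono e) : StrictMono (e ∘ Fin.succ) :=
  he.comp (Fin.strictMono_succ)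

lemma xv_odd {m : ℕ} : ∀ {r : ℕ} (e : Fin r → ℕ) (_ : StrictMono e) (f : Fin r → Fin m),
    Odd (Nat.multinomial univ (xv e f)) := by
  intro r
  induction r with
  | zero =>
    intro e he f
    have : xv e f = fun _ => 0 := by funext c; simp [xv]
    rw [this]; simp [Nat.multinomial]
  | succ r ih =>
    intro e he f
    rw [← Fin.cons_self_tail f, xv_cons, mult_odd_step e he _ _ (xv_dvd' e he _ _) (xv_sum _ _)]
    exact ih _ (succ_mono e he) _

lemma xv_inj {m : ℕ} : ∀ {r : ℕ} (e : Fin r → ℕ) (_ : StrictMono e) (f g : Fin r → Fin m),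
    xv e f = xv e g → f = g := by
  intro r
  induction r with
  | zero => intro e he f g _; exact Subsingleton.elim _ _
  | succ r ih =>
    intro e he f g h
    rw [← Fin.cons_self_tail f, ← Fin.cons_self_tail g] at h ⊢
    rw [xv_cons, xv_cons] at h
    have h0 : f 0 = g 0 := by
      by_contra hne
      have := congrFun h (f 0)
      simp only [if_true, if_neg hne, add_zero] at this
      have h1 := xv_dvd' e he (Fin.tail f) (f 0)
      have h2 := xv_dvd' e he (Fin.tail g) (f 0)
      rw [← this] at h2
      have h3 := (Nat.dvd_add_right h1).1 h2
      have := Nat.le_of_dvd (by positivity) h3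
      rw [pow_succ] at this
      have : 0 < 2 ^ e 0 := by positivity
      omega
    rw [h0] at h ⊢
    congr 1
    apply ih (e ∘ Fin.succ) (succ_mono e he)
    funext d
    have := congrFun h d
    simpa using this

lemma xv_surj {m : ℕ} : ∀ {r : ℕ} (e : Fin r → ℕ) (_ : StrictMono e) (x : Fin m → ℕ),
    ∑ d, x d = ∑ j, 2 ^ e j → Odd (Nat.multinomial univ x) → ∃ f, xv e f = x := by
  intro r
  induction r with
  | zero =>
    intro e he x hs _
    refine ⟨Fin.elim0, ?_⟩
    funext d
    simp at hs
    simp [xv, hs d]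
  | succ r ih =>
    intro e he x hs ho
    have hn : ∑ d, x d = 2 ^ e 0 + ∑ j : Fin r, 2 ^ e j.succ := by rw [hs, Fin.sum_univ_succ]
    have hd : 2 ^ (e 0 + 1) ∣ ∑ j : Fin r, 2 ^ e j.succ := by
      apply Finset.dvd_sum
      intro j _
      exact pow_dvd_pow _ (he (Fin.succ_pos j))
    have hdn : 2 ^ e 0 ∣ ∑ d, x d := by
      rw [hn]; exact dvd_add dvd_rfl ((pow_dvd_pow 2 (Nat.le_succ _)).trans hd)
    have hdiv : ∀ c, 2 ^ e 0 ∣ x c := by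
      intro c
      rcases Nat.eq_zero_or_pos (x c) with h | h
      · rw [h]; exact dvd_zero _
      · have hms := mult_step (fun d => x d - if d = c then 1 else 0) c 1
        have e1 : (fun d => (x d - if d = c then 1 else 0) + if d = c then 1 else 0) = x := by
          funext d; split_ifs with hdc
          · subst hdc; omega
          · simp
        have e2 : (∑ d, (x d - if d = c then 1 else 0)) + 1 = ∑ d, x d := by
          conv_rhs => rw [← e1]
          rw [Finset.sum_add_distrib]; simp
        simp only [e1, e2, if_true, Nat.choose_one_right] at hms
        rw [Nat.sub_add_cancel h] at hms
        have : 2 ^ e 0 ∣ Nat.multinomial univ x * x c := by rw [hms]; exact hdn.mul_left _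
        exact (Nat.Coprime.dvd_mul_left (Nat.Coprime.pow_left _ (Nat.coprime_two_left.2 ho))).1 this
    obtain ⟨c, hc⟩ : ∃ c, ¬ 2 ^ (e 0 + 1) ∣ x c := by
      by_contra! hcon
      have : 2 ^ (e 0 + 1) ∣ ∑ d, x d := Finset.dvd_sum (fun d _ => hcon d)
      rw [hn] at this
      have := (Nat.dvd_add_left hd).1 this
      have := Nat.le_of_dvd (by positivity) this
      rw [pow_succ] at this
      have : 0 < 2 ^ e 0 := by positivity
      omega
    obtain ⟨z, hz⟩ := hdiv c
    have hzo : Odd z := by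
      rw [← Nat.not_even_iff_odd]
      rintro ⟨w, rfl⟩
      exact hc ⟨w, by rw [hz]; ring⟩
    obtain ⟨w, rfl⟩ := hzo
    set x' : Fin m → ℕ := fun d => x d - if d = c then 2 ^ e 0 else 0 with hx'
    have hle : 2 ^ e 0 ≤ x c := by rw [hz]; exact Nat.le_mul_of_pos_right _ (by omega)
    have e1 : x = fun d => x' d + if d = c then 2 ^ e 0 else 0 := by
      funext d; simp only [hx']; split_ifs with hdc
      · subst hdc; omega
      · simp
    have e2 : ∑ d, x' d = ∑ j : Fin r, 2 ^ e j.succ := by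
      have : ∑ d, x d = ∑ d, x' d + 2 ^ e 0 := by
        conv_lhs => rw [e1]
        rw [Finset.sum_add_distrib]; simp
      omega
    have e3 : 2 ^ (e 0 + 1) ∣ x' c := by
      refine ⟨w, ?_⟩
      simp only [hx', if_true]
      rw [hz, Nat.sub_eq_iff_eq_add (Nat.le_mul_of_pos_right _ (by omega))]; ring
    rw [e1, mult_odd_step e he x' c e3 e2] at ho
    obtain ⟨f, hf⟩ := ih (e ∘ Fin.succ) (succ_mono e he) x' e2 ho
    exact ⟨Fin.cons c f, by rw [xv_cons, hf]; exact e1.symm⟩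

/-- total sum -/
def St (m : ℕ) {r : ℕ} (e : Fin r → ℕ) : ℕ := ∑ f : Fin r → Fin m, Nat.multinomial univ (xv e f)

lemma St_eq {m r : ℕ} (e : Fin r → ℕ) (he : StrictMono e) :
    ∑ x ∈ (Finset.Nat.antidiagonalTuple m (∑ j, 2 ^ e j)).filter
        (fun x => Odd (Nat.multinomial Finset.univ x)),
      Nat.multinomial Finset.univ x = St m e := by
  symm
  unfold St
  refine Finset.sum_bij (fun f _ => xv e f) ?_ ?_ ?_ ?_
  · intro f _
    simp only [Finset.mem_filter, Finset.Nat.mem_antidiagonalTuple]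
    exact ⟨xv_sum e f, xv_odd e he f⟩
  · intro f _ g _ h; exact xv_inj e he f g h
  · intro x hx
    simp only [Finset.mem_filter, Finset.Nat.mem_antidiagonalTuple] at hx
    obtain ⟨f, hf⟩ := xv_surj e he x hx.1 hx.2
    exact ⟨f, Finset.mem_univ _, hf⟩
  · intros; rfl

lemma modEq_of_eq {n a b : ℤ} (h : a = b) : a ≡ b [ZMOD n] := h ▸ Int.ModEq.refl a

/-- sum with colours restricted to `g` -/
def Rg {r m : ℕ} (e : Fin r → ℕ) (g : Fin r → Finset (Fin m)) : ℤ :=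
  ∑ f : Fin r → Fin m with ∀ j, f j ∈ g j, (Nat.multinomial univ (xv e f) : ℤ)

/-- restrict the colours on `C` to `c` -/
def rs {r m : ℕ} (g : Fin r → Finset (Fin m)) (C : Finset (Fin r)) (c : Fin m) :
    Fin r → Finset (Fin m) := fun j => if j ∈ C then g j ∩ {c} else g j

lemma mem_rs {r m : ℕ} (g : Fin r → Finset (Fin m)) (C : Finset (Fin r)) (c : Fin m)
    (f : Fin r → Fin m) :
    (∀ j, f j ∈ rs g C c j) ↔ (∀ j, f j ∈ g j) ∧ C ⊆ univ.filter (fun j => f j = c) := by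
  constructor
  · intro h
    constructor
    · intro j
      have := h j
      unfold rs at this
      split_ifs at this
      · exact (Finset.mem_inter.1 this).1
      · exact this
    · intro j hj
      have := h j
      simp [rs, hj] at this
      simp [this.2]
  · rintro ⟨h1, h2⟩ j
    unfold rs
    split_ifs with hj
    · have := h2 hj
      simp at this
      rw [Finset.mem_inter]
      exact ⟨h1 j, by simp [this]⟩
    · exact h1 j

lemma rs_empty {r m : ℕ} (g : Fin r → Finset (Fin m)) (c : Fin m) : rs g ∅ c = g := by
  funext j; simp [rs]

lemma rs_single {r m : ℕ} (e : Fin r → ℕ) (g : Fin r → Finset (Fin m)) (j : Fin r) :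
    ∑ c, Rg e (rs g {j} c) = Rg e g := by
  unfold Rg
  simp only [mem_rs, Finset.singleton_subset_iff, Finset.mem_filter, Finset.mem_univ, true_and]
  simp only [Finset.sum_filter]
  rw [Finset.sum_comm]
  apply Finset.sum_congr rfl
  intro f _
  by_cases h : ∀ j, f j ∈ g j
  · simp [h]
  · simp [h]

lemma rs_card {r m : ℕ} (g : Fin r → Finset (Fin m)) (C : Finset (Fin r)) (c : Fin m) :
    (univ.filter (fun j => g j = univ)).card ≤ C.card + (univ.filter (fun j => rs g C c j = univ)).card := by
  refine le_trans (Finset.card_le_card ?_) (Finset.card_union_le _ _)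
  intro j hj
  simp only [Finset.mem_filter, Finset.mem_univ, true_and, Finset.mem_union] at *
  by_cases h : j ∈ C
  · exact Or.inl h
  · right; simp [rs, h, hj]

lemma Rg_cons {r m : ℕ} (e : Fin (r+1) → ℕ) (g : Fin (r+1) → Finset (Fin m)) :
    Rg e g = ∑ c ∈ g 0, ∑ f : Fin r → Fin m with ∀ j, f j ∈ g j.succ,
      (Nat.multinomial univ (xv e (Fin.cons c f : Fin (r+1) → Fin m)) : ℤ) := by
  unfold Rg
  simp only [Finset.sum_filter]
  rw [← (Fin.consEquiv (fun _ => Fin m)).sum_comp, Fintype.sum_prod_type]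
  rw [← Finset.sum_subset (Finset.subset_univ (g 0)) (f := fun c => ∑ f : Fin r → Fin m,
    if ∀ j, (Fin.consEquiv (fun _ => Fin m)) (c, f) j ∈ g j then
      (Nat.multinomial univ (xv e ((Fin.consEquiv (fun _ => Fin m)) (c, f))) : ℤ) else 0)]
  · apply Finset.sum_congr rfl
    intro c h
    simp [h, Fin.forall_fin_succ, Fin.consEquiv]
  · intro c _ h
    simp [h, Fin.forall_fin_succ, Fin.consEquiv]

lemma Rg_step {r m : ℕ} (e : Fin (r+1) → ℕ) (N : ℕ) (q : ℤ) (h : Finset (Fin r) → ℤ)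
    (hc : ∀ (c : Fin m) (f : Fin r → Fin m),
        (Nat.multinomial univ (xv e (Fin.cons c f : Fin (r+1) → Fin m)) : ℤ) ≡
        q * Nat.multinomial univ (xv (e ∘ Fin.succ) f) *
          ∑ C ∈ (univ.filter (fun j => f j = c)).powerset, h C [ZMOD 2 ^ N])
    (g : Fin r → Finset (Fin m)) (c : Fin m) :
    ∑ f : Fin r → Fin m with ∀ j, f j ∈ g j,
      (Nat.multinomial univ (xv e (Fin.cons c f : Fin (r+1) → Fin m)) : ℤ) ≡
    q * ∑ C : Finset (Fin r), h C * Rg (e ∘ Fin.succ) (rs g C c) [ZMOD 2 ^ N] := by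
  have h1 : ∑ f : Fin r → Fin m with ∀ j, f j ∈ g j,
      (Nat.multinomial univ (xv e (Fin.cons c f : Fin (r+1) → Fin m)) : ℤ) ≡
      ∑ f : Fin r → Fin m with ∀ j, f j ∈ g j, q * Nat.multinomial univ (xv (e ∘ Fin.succ) f) *
          ∑ C ∈ (univ.filter (fun j => f j = c)).powerset, h C [ZMOD 2 ^ N] :=
    Int.ModEq.sum (fun f _ => hc c f)
  refine h1.trans ?_
  apply modEq_of_eq
  unfold Rg
  simp only [mem_rs, Finset.mul_sum]
  simp only [Finset.sum_filter]
  conv_rhs => rw [Finset.sum_comm]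
  apply Finset.sum_congr rfl
  intro f _
  by_cases hf : ∀ j, f j ∈ g j
  · simp only [hf, implies_true, if_true, true_and]
    rw [← Finset.sum_subset (Finset.subset_univ (univ.filter (fun j => f j = c)).powerset)]
    · apply Finset.sum_congr rfl
      intro C hC
      rw [if_pos (Finset.mem_powerset.1 hC)]; ring
    · intro C _ hC
      rw [if_neg (fun h => hC (Finset.mem_powerset.2 h))]
  · simp [hf]

lemma Rg_dvd {m : ℕ} (hm : Even m) : ∀ {r : ℕ} (e : Fin r → ℕ) (_ : StrictMono e)
    (g : Fin r → Finset (Fin m)),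
    (2:ℤ) ^ (univ.filter (fun j => g j = univ)).card ∣ Rg e g := by
  intro r
  induction r with
  | zero => intro e he g; simp
  | succ r ih =>
    intro e he g
    obtain ⟨q, h, hq, h0, h1, h2, hc⟩ := core (m := m) e he (r + 2) (by omega)
    have ih' := ih (e ∘ Fin.succ) (succ_mono e he)
    set g' : Fin r → Finset (Fin m) := fun j => g j.succ with hg'
    have hcard : (univ.filter (fun j => g j = univ)).card =
        (if g 0 = univ then 1 else 0) + (univ.filter (fun j => g' j = univ)).card := by
      rw [Fin.card_filter_univ_succ]
      split_ifs <;> simp [hg', add_comm]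
    set t := (univ.filter (fun j => g' j = univ)).card with ht
    have htr : t ≤ r := by
      have := Finset.card_filter_le (univ : Finset (Fin r)) (fun j => g' j = univ)
      simpa using this
    have heven : ∀ j, (2:ℤ) ∣ h {j} := by
      intro j
      obtain ⟨w, hw⟩ := (h1 j).dvd
      split_ifs at hw
      · exact ⟨1 - 2 * w, by linarith⟩
      · exact ⟨- 2 * w, by linarith⟩
    have hbig : ∀ C : Finset (Fin r), 2 ≤ C.card → ∀ c, (2:ℤ) ^ (t + 1) ∣ h C * Rg (e ∘ Fin.succ) (rs g' C c) := by
      intro C hC c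
      have a := mul_dvd_mul (h2 C hC) (ih' (rs g' C c))
      rw [← pow_add] at a
      refine dvd_trans (pow_dvd_pow _ ?_) a
      have := rs_card g' C c
      omega
    rw [Rg_cons, hcard]
    have hstep := fun c => Rg_step e (r+2) q h hc g' c
    have htot : ∑ c ∈ g 0, ∑ f : Fin r → Fin m with ∀ j, f j ∈ g j.succ,
      (Nat.multinomial univ (xv e (Fin.cons c f : Fin (r+1) → Fin m)) : ℤ) ≡
      ∑ c ∈ g 0, q * ∑ C : Finset (Fin r), h C * Rg (e ∘ Fin.succ) (rs g' C c) [ZMOD 2 ^ (r+2)] :=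
      Int.ModEq.sum (fun c _ => hstep c)
    have hdd : ((2:ℤ) ^ ((if g 0 = univ then 1 else 0) + t)) ∣ 2 ^ (r + 2) := by
      apply pow_dvd_pow; split_ifs <;> omega
    have key := (htot.of_dvd hdd)
    refine (Int.ModEq.dvd_iff key).2 ?_
    split_ifs with hg0
    · rw [hg0, ← Finset.mul_sum, Finset.sum_comm]
      apply Dvd.dvd.mul_left
      apply Finset.dvd_sum
      intro C _
      rcases Nat.lt_or_ge C.card 2 with hC | hC
      · rcases Nat.lt_or_ge C.card 1 with hC1 | hC1
        · have : C = ∅ := Finset.card_eq_zero.1 (by omega)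
          subst this
          simp only [rs_empty]
          rw [Finset.sum_const, Finset.card_univ, Fintype.card_fin, nsmul_eq_mul, pow_add]
          refine mul_dvd_mul ?_ (Dvd.dvd.mul_left (ih' g') _)
          rw [pow_one]
          exact_mod_cast hm.two_dvd
        · obtain ⟨j, rfl⟩ := Finset.card_eq_one.1 (show C.card = 1 by omega)
          rw [← Finset.mul_sum, rs_single, pow_add, pow_one]
          exact mul_dvd_mul (heven j) (ih' g')
      · apply Finset.dvd_sum
        intro c _
        rw [add_comm]
        exact hbig C hC c
    · rw [zero_add]
      apply Finset.dvd_sum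
      intro c _
      apply Dvd.dvd.mul_left
      apply Finset.dvd_sum
      intro C _
      rcases Nat.lt_or_ge C.card 2 with hC | hC
      · rcases Nat.lt_or_ge C.card 1 with hC1 | hC1
        · have : C = ∅ := Finset.card_eq_zero.1 (by omega)
          subst this
          rw [rs_empty]
          exact Dvd.dvd.mul_left (ih' g') _
        · obtain ⟨j, rfl⟩ := Finset.card_eq_one.1 (show C.card = 1 by omega)
          have a := mul_dvd_mul (heven j) (ih' (rs g' {j} c))
          rw [← pow_succ'] at a
          refine dvd_trans (pow_dvd_pow _ ?_) a
          have := rs_card g' {j} c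
          simp at this
          omega
      · exact dvd_trans (pow_dvd_pow _ (Nat.le_succ _)) (hbig C hC c)

lemma Rg_symm {r m : ℕ} (e : Fin r → ℕ) (C : Finset (Fin r)) (c d : Fin m) :
    Rg e (rs (fun _ => univ) C c) = Rg e (rs (fun _ => univ) C d) := by
  unfold Rg
  simp only [mem_rs, Finset.mem_univ, implies_true, true_and]
  refine Finset.sum_bij (fun f _ => Equiv.swap c d ∘ f) ?_ ?_ ?_ ?_
  · intro f hf
    simp only [Finset.mem_filter, Finset.mem_univ, true_and, Finset.subset_iff, Function.comp] at *
    intro j hj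
    rw [hf hj, Equiv.swap_apply_left]
  · intro f _ g _ h
    exact (Equiv.swap c d).injective.comp_left h
  · intro f hf
    refine ⟨Equiv.swap c d ∘ f, ?_, ?_⟩
    · simp only [Finset.mem_filter, Finset.mem_univ, true_and, Finset.subset_iff, Function.comp] at *
      intro j hj
      rw [hf hj, Equiv.swap_apply_right]
    · funext j; simp
  · intro f _
    have : xv e f = xv e (Equiv.swap c d ∘ f) ∘ Equiv.swap c d := by
      funext a
      simp [xv]
    rw [this]
    have h1 := Nat.multinomial_spec univ (xv e (Equiv.swap c d ∘ f) ∘ Equiv.swap c d)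
    have h2 := Nat.multinomial_spec univ (xv e (Equiv.swap c d ∘ f))
    simp only [Function.comp_apply (g := Equiv.swap c d) (f := xv e (Equiv.swap c d ∘ f))] at h1
    rw [Equiv.sum_comp (Equiv.swap c d) (xv e (Equiv.swap c d ∘ f)),
      Equiv.prod_comp (Equiv.swap c d) (fun a => (xv e (Equiv.swap c d ∘ f) a).factorial), ← h2] at h1
    have hpos : 0 < ∏ i, (xv e (Equiv.swap c d ∘ f) i).factorial :=
      Finset.prod_pos (fun d _ => Nat.factorial_pos _)
    exact_mod_cast Nat.eq_of_mul_eq_mul_left hpos h1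

lemma Rg_univ {r m : ℕ} (e : Fin r → ℕ) : Rg e (fun _ => (univ : Finset (Fin m))) = (St m e : ℤ) := by
  simp [Rg, St]

/-- the main recursion -/
lemma St_step {k v k' : ℕ} (hk : k = 2 ^ v * k') {r : ℕ} (e : Fin (r+2) → ℕ) (he : StrictMono e) :
    ∃ (q A : ℤ), Odd q ∧ A ≡ k + (if e 1 = e 0 + 1 then 1 else 0) [ZMOD 2] ∧
      (St (2 * k) e : ℤ) ≡ q * (2 * A) * St (2 * k) (e ∘ Fin.succ) [ZMOD 2 ^ (r + 3 + v)] := by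
  obtain ⟨q, h, hq, h0, h1, h2, hc⟩ := core (m := 2 * k) e he (r + 3 + v) (by omega)
  have hsum : ∑ j, h {j} ≡ (if e 1 = e 0 + 1 then 2 else 0) [ZMOD 4] := by
    have a : ∑ j, h {j} ≡ ∑ j : Fin (r+1), (if e j.succ = e 0 + 1 then 2 else 0) [ZMOD 4] :=
      Int.ModEq.sum (fun j _ => h1 j)
    refine a.trans (modEq_of_eq ?_)
    rw [Finset.sum_eq_single 0]
    · rfl
    · intro j _ hj
      rw [if_neg]
      intro hcon
      have p1 : e 0 < e 1 := he (by simp)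
      have p2 : e 1 < e j.succ := he (by
        rw [← Fin.succ_zero_eq_one, Fin.succ_lt_succ_iff]; exact Fin.pos_of_ne_zero hj)
      omega
    · simp
  obtain ⟨w, hw⟩ := hsum.dvd
  obtain ⟨z, hz⟩ := h0
  refine ⟨q, k * h ∅ + ((if e 1 = e 0 + 1 then 1 else 0) - 2 * w), hq, ?_, ?_⟩
  · rw [hz]
    apply Int.modEq_iff_dvd.2
    exact ⟨-(k * z) + w, by ring⟩
  have hA : 2 * (k * h ∅ + ((if e 1 = e 0 + 1 then 1 else 0) - 2 * w)) = (2 * k : ℕ) * h ∅ + ∑ j, h {j} := by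
    push_cast
    split_ifs at hw ⊢ <;> linarith
  rw [hA, ← Rg_univ e, Rg_cons]
  have htot := Int.ModEq.sum (s := (univ : Finset (Fin (2*k)))) (fun c _ => Rg_step e (r+3+v) q h hc (fun _ => univ) c)
  refine htot.trans ?_
  rw [← Finset.mul_sum, mul_assoc]
  apply Int.ModEq.mul_left
  rw [Finset.sum_comm]
  have hsplit : ∀ C : Finset (Fin (r+1)), ∑ c, h C * Rg (e ∘ Fin.succ) (rs (fun _ => (univ : Finset (Fin (2*k)))) C c) ≡
      (if C = ∅ then (2 * k : ℕ) * h ∅ * (St (2 * k) (e ∘ Fin.succ) : ℤ) else 0) +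
      (if C.card = 1 then h C * (St (2 * k) (e ∘ Fin.succ) : ℤ) else 0) [ZMOD 2 ^ (r+3+v)] := by
    intro C
    rcases Nat.lt_or_ge C.card 2 with hC | hC
    · rcases Nat.lt_or_ge C.card 1 with hC1 | hC1
      · have : C = ∅ := Finset.card_eq_zero.1 (by omega)
        subst this
        apply modEq_of_eq
        simp [rs_empty, Rg_univ]; ring
      · obtain ⟨j, rfl⟩ := Finset.card_eq_one.1 (show C.card = 1 by omega)
        apply modEq_of_eq
        rw [← Finset.mul_sum, rs_single, Rg_univ]
        simp
    · have n1 : C ≠ ∅ := by rintro rfl; simp at hC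
      have n2 : C.card ≠ 1 := by omega
      simp only [n1, n2, if_false, add_zero]
      apply Int.modEq_zero_iff_dvd.2
      rcases Nat.eq_zero_or_pos k with hk0 | hkp
      · subst hk0; simp
      let c0 : Fin (2 * k) := ⟨0, by omega⟩
      rw [Finset.sum_congr rfl (fun c _ => by rw [Rg_symm _ C c c0])]
      rw [Finset.sum_const, Finset.card_univ, Fintype.card_fin, nsmul_eq_mul]
      have a := mul_dvd_mul (h2 C hC) (Rg_dvd (even_two_mul k) (e ∘ Fin.succ) (succ_mono e he) (rs (fun _ => univ) C c0))
      rw [← pow_add] at a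
      have b : (2:ℤ) ^ (v + 1) ∣ (2 * k : ℕ) := by
        rw [hk]; push_cast; exact ⟨k', by ring⟩
      have d := mul_dvd_mul b a
      rw [← pow_add] at d
      refine dvd_trans (pow_dvd_pow _ ?_) d
      have := rs_card (fun _ => (univ : Finset (Fin (2*k)))) C c0
      simp at this
      omega
  refine (Int.ModEq.sum (fun C _ => hsplit C)).trans ?_
  apply modEq_of_eq
  rw [Finset.sum_add_distrib, Finset.sum_ite_eq' , if_pos (Finset.mem_univ _), add_mul]
  congr 1
  rw [← Finset.sum_filter, Finset.sum_mul]
  symm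
  refine Finset.sum_bij (fun j _ => {j}) ?_ ?_ ?_ ?_
  · intro j _; simp
  · intro j _ j' _ h; simpa using h
  · intro C hC
    simp only [Finset.mem_filter, Finset.mem_univ, true_and] at hC
    obtain ⟨j, rfl⟩ := Finset.card_eq_one.1 hC
    exact ⟨j, Finset.mem_univ _, rfl⟩
  · intros; rfl

lemma St_main {k v k' : ℕ} (hk : k = 2 ^ v * k') (hk' : Odd k') : ∀ {r : ℕ} (e : Fin (r+1) → ℕ) (_ : StrictMono e),
    ∃ s : ℤ, (St (2 * k) e : ℤ) = 2 ^ (r + 1 + v) * s ∧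
      (Odd s ↔ ∀ j : Fin r, Odd (k + if e j.succ = e j.castSucc + 1 then 1 else 0)) := by
  intro r
  induction r with
  | zero =>
    intro e he
    refine ⟨k', ?_, ?_⟩
    · have : ∀ f : Fin 1 → Fin (2 * k), Nat.multinomial univ (xv e f) = 1 := by
        intro f
        have h1 := mult_step (fun _ : Fin (2*k) => 0) (f 0) (2 ^ e 0)
        have h2 : xv e f = fun d => 0 + if d = f 0 then 2 ^ e 0 else 0 := by
          funext d; simp [xv, eq_comm]
        rw [h2]
        simpa [Nat.multinomial] using h1
      simp only [St, this]
      simp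
      rw [hk]; push_cast; ring
    · simp [hk']
  | succ r ih =>
    intro e he
    obtain ⟨s, hs, hso⟩ := ih (e ∘ Fin.succ) (succ_mono e he)
    obtain ⟨q, A, hq, hA, hmod⟩ := St_step hk e he
    obtain ⟨w, hw⟩ := hmod.dvd
    rw [hs] at hw
    refine ⟨q * A * s - 2 * w, ?_, ?_⟩
    · have e1 : (2:ℤ) ^ (r + 3 + v) = 4 * 2 ^ (r + 1 + v) := by ring
      have e2 : (2:ℤ) ^ (r + 1 + 1 + v) = 2 * 2 ^ (r + 1 + v) := by ring
      rw [e1] at hw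
      rw [e2]
      linarith
    · have hAo : Odd A ↔ Odd (k + if e 1 = e 0 + 1 then 1 else 0) := by
        obtain ⟨t, ht⟩ := hA.dvd
        have : A = ((k + if e 1 = e 0 + 1 then 1 else 0 : ℕ) : ℤ) - 2 * t := by
          push_cast; linarith
        rw [this, Int.odd_sub]
        rw [Int.odd_coe_nat]
        simp
      rw [Fin.forall_fin_succ]
      have : Odd (q * A * s - 2 * w) ↔ Odd A ∧ Odd s := by
        rw [Int.odd_sub]
        simp [Int.odd_mul, hq]
      rw [this, hAo, hso]
      rfl

lemma exists_bits (n : ℕ) : ∃ (r : ℕ) (e : Fin r → ℕ), StrictMono e ∧ n = ∑ j, 2 ^ e j ∧ s2 n = r ∧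
    ∀ t, n.testBit t = true ↔ ∃ j, e j = t := by
  induction n using Nat.binaryRec' with
  | zero => exact ⟨0, Fin.elim0, fun i => i.elim0, by simp, by simp [s2], by simp⟩
  | bit b n hn ih =>
    obtain ⟨r, e, he, h1, h2, h3⟩ := ih
    cases b with
    | false =>
      refine ⟨r, fun j => e j + 1, fun i j h => by simpa using he h, ?_, ?_, ?_⟩
      · simp only [pow_succ, ← Finset.sum_mul, ← h1, Nat.bit_false]; ring
      · rw [← h2]
        rcases Nat.eq_zero_or_pos n with h | h
        · subst h; rfl
        · simp [s2, Nat.bit_false, Nat.digits_def' (b := 2) (n := 2 * n) (by norm_num) (by omega)]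
      · intro t
        cases t with
        | zero => simp
        | succ t => rw [Nat.testBit_bit_succ, h3]; simp
    | true =>
      refine ⟨r + 1, Fin.cons 0 (fun j => e j + 1), ?_, ?_, ?_, ?_⟩
      · refine Fin.cases ?_ ?_
        · refine Fin.cases ?_ ?_
          · intro h; simp at h
          · intro j _; simp
        · intro i
          refine Fin.cases ?_ ?_
          · intro h; simp at h
          · intro j h; simpa using he (by simpa using h)
      · rw [Fin.sum_univ_succ]
        simp only [Fin.cons_zero, Fin.cons_succ, pow_succ, ← Finset.sum_mul, ← h1, Nat.bit_true]; ring
      · rw [← h2]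
        simp only [s2, Nat.bit_true, Nat.digits_def' (b := 2) (n := 2 * n + 1) (by norm_num) (by omega)]
        rw [List.sum_cons, show (2 * n + 1) % 2 = 1 by omega, show (2 * n + 1) / 2 = n by omega, add_comm]
      · intro t
        rw [Fin.exists_fin_succ]
        cases t with
        | zero => simp
        | succ t => rw [Nat.testBit_bit_succ, h3]; simp

theorem stmt_14 (k n : ℕ) (hk : 0 < k) (hn : 0 < n)
    (S : ℕ)
    (hS : S = ∑ x ∈ (Finset.Nat.antidiagonalTuple (2 * k) n).filter
        (fun x => Odd (Nat.multinomial Finset.univ x)),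
      Nat.multinomial Finset.univ x) :
    s2 n + padicValNat 2 k ≤ padicValNat 2 S ∧
      (Odd k →
        (padicValNat 2 S = s2 n + padicValNat 2 k ↔
          ∀ i : ℕ, ¬(n.testBit i = true ∧ n.testBit (i + 1) = true))) ∧
      (Even k →
        (padicValNat 2 S = s2 n + padicValNat 2 k ↔
          ∃ a b : ℕ, 0 < b ∧ n = 2 ^ a * (2 ^ b - 1))) := by
  obtain ⟨r, e, he, h1, h2, h3⟩ := exists_bits n
  obtain ⟨r, rfl⟩ : ∃ r', r = r' + 1 := by
    rcases r with _ | r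
    · simp at h1; omega
    · exact ⟨r, rfl⟩
  rw [h1, St_eq e he] at hS
  have hSpos : 0 < S := by
    rw [hS]
    exact Finset.sum_pos (fun f _ => Nat.multinomial_pos _ _) ⟨fun _ => ⟨0, by omega⟩, Finset.mem_univ _⟩
  obtain ⟨v, k', hk', hkk⟩ := Nat.exists_eq_two_pow_mul_odd hk.ne'
  have hv : padicValNat 2 k = v := by
    rw [hkk, padicValNat.mul (by positivity) (by rintro rfl; simp at hk'), padicValNat.prime_pow,
      padicValNat.eq_zero_of_not_dvd (fun h => (Nat.not_even_iff_odd.2 hk') (even_iff_two_dvd.2 h)), add_zero]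
  obtain ⟨s, hs, hso⟩ := St_main hkk hk' e he
  rw [← hS] at hs
  have hsp : 0 < s := by
    have : (0:ℤ) < 2 ^ (r + 1 + v) * s := by rw [← hs]; exact_mod_cast hSpos
    exact pos_of_mul_pos_right this (by positivity)
  lift s to ℕ using hsp.le
  have hs' : S = 2 ^ (r + 1 + v) * s := by exact_mod_cast hs
  have hs0 : s ≠ 0 := by rintro rfl; simp at hsp
  have hval : padicValNat 2 S = r + 1 + v + padicValNat 2 s := by
    rw [hs', padicValNat.mul (by positivity) hs0, padicValNat.prime_pow]
  have heq : padicValNat 2 S = s2 n + padicValNat 2 k ↔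
      ∀ j : Fin r, Odd (k + if e j.succ = e j.castSucc + 1 then 1 else 0) := by
    rw [← hso, hval, h2, hv, Int.odd_coe_nat, ← Nat.not_even_iff_odd, even_iff_two_dvd,
      Nat.add_eq_left, padicValNat.eq_zero_iff]
    simp [hs0]
  refine ⟨by rw [hval, h2, hv]; omega, ?_, ?_⟩
  · intro hko
    rw [heq]
    constructor
    · rintro h i ⟨ha, hb⟩
      obtain ⟨j, hj⟩ := (h3 i).1 ha
      obtain ⟨j', hj'⟩ := (h3 (i+1)).1 hb
      have hlt : j < j' := he.lt_iff_lt.1 (by omega)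
      have hjl : j ≠ Fin.last r := fun h => by
        subst h; exact absurd hlt (not_lt.2 (Fin.le_last _))
      obtain ⟨j0, rfl⟩ := Fin.exists_castSucc_eq.2 hjl
      have hle : j0.succ ≤ j' := by
        rw [Fin.le_def]; rw [Fin.lt_def] at hlt; simp at hlt ⊢; omega
      have := he.monotone hle
      have h4 : e j0.castSucc < e j0.succ := he (Fin.castSucc_lt_succ)
      have := h j0
      rw [if_pos (by omega)] at this
      exact (Nat.not_even_iff_odd.2 this) (hko.add_odd odd_one)
    · intro h j
      rw [if_neg, add_zero]
      · exact hko
      · intro hj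
        exact h (e j.castSucc) ⟨(h3 _).2 ⟨_, rfl⟩, (h3 _).2 ⟨j.succ, hj⟩⟩
  · intro hke
    rw [heq]
    have : (∀ j : Fin r, Odd (k + if e j.succ = e j.castSucc + 1 then 1 else 0)) ↔
        ∀ j : Fin r, e j.succ = e j.castSucc + 1 := by
      apply forall_congr'
      intro j
      split_ifs with h
      · simp [h, hke.add_one]
      · simp [h, hke]
    rw [this]
    constructor
    · intro h
      have hj : ∀ j : Fin (r+1), e j = e 0 + j := by
        intro j
        induction j using Fin.induction with
        | zero => simp
        | succ j ih => rw [h j, ih]; simp; omega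
      refine ⟨e 0, r + 1, by omega, ?_⟩
      rw [h1, Finset.sum_congr rfl (fun j _ => by rw [hj j, pow_add]), ← Finset.mul_sum]
      congr 1
      rw [Fin.sum_univ_eq_sum_range (fun i => 2 ^ i), Nat.geomSum_eq le_rfl]
      simp
    · rintro ⟨a, b, hb, hab⟩ j
      have hbit : ∀ t, n.testBit t = true ↔ a ≤ t ∧ t < a + b := by
        intro t
        rw [hab, Nat.testBit_two_pow_mul, Nat.testBit_two_pow_sub_one]
        simp
        omega
      have h4 : e j.castSucc < e j.succ := he (Fin.castSucc_lt_succ)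
      have p1 := (hbit _).1 ((h3 (e j.castSucc)).2 ⟨_, rfl⟩)
      have p2 := (hbit _).1 ((h3 (e j.succ)).2 ⟨_, rfl⟩)
      obtain ⟨i, hi⟩ := (h3 _).1 ((hbit (e j.castSucc + 1)).2 ⟨by omega, by omega⟩)
      have hlt : j.castSucc < i := he.lt_iff_lt.1 (by omega)
      have hle : j.succ ≤ i := by
        rw [Fin.le_def]; rw [Fin.lt_def] at hlt; simp at hlt ⊢; omega
      have := he.monotone hle
      omega
end

section
/- Let n be a positive integer, and let S be the sum of all trinomial coefficients with n at the top which are not divisible by 3, i.e., S = ∑ over all (x, y, z) of nonnegative integers with x+y+z = n and 3 ∤ n!/(x!·y!·z!), of n!/(x!·y!·z!). Then ν₃(S) ≥ s₃*(n), where s₃*(n) is the number of nonzero digits in the ternary expansion of n. Equality holds if and only if the ternary expansion of n begins with 1 (its leading, most significant, digit is 1) and, reading the ternary digits from most significant to least significant, no two consecutive digits form the pattern 1 followed by 1, and no two consecutive digits form the pattern 0 followed by 2. -/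
/-- `s3star n` is the number of nonzero digits in the ternary expansion of `n`. -/
def s3star (n : ℕ) : ℕ := ((Nat.digits 3 n).filter (fun a => a ≠ 0)).length

open Finset

namespace Tri

abbrev Z := ℤ_[3]

/-! ### Lipschitz functions -/

def L (e : ℕ) (f : ℕ → ℕ → ℕ → Z) : Prop :=
  ∀ k x y z x' y' z', x ≡ x' [MOD 3 ^ k] → y ≡ y' [MOD 3 ^ k] → z ≡ z' [MOD 3 ^ k] →
    (3 : Z) ^ (k + e) ∣ f x y z - f x' y' z'

def L1 (e : ℕ) (f : ℕ → Z) : Prop :=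
  ∀ k x x', x ≡ x' [MOD 3 ^ k] → (3 : Z) ^ (k + e) ∣ f x - f x'

def Cyc (f : ℕ → ℕ → ℕ → Z) : Prop := ∀ x y z, f x y z = f y z x

theorem L.const (e : ℕ) (c : Z) : L e (fun _ _ _ => c) := by
  intro k x y z x' y' z' _ _ _; simp

theorem L.add {e : ℕ} {f g : ℕ → ℕ → ℕ → Z} (hf : L e f) (hg : L e g) :
    L e (fun x y z => f x y z + g x y z) := by
  intro k x y z x' y' z' h1 h2 h3
  have := dvd_add (hf k x y z x' y' z' h1 h2 h3) (hg k x y z x' y' z' h1 h2 h3)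
  convert this using 1; ring

theorem L.mul {e : ℕ} {f g : ℕ → ℕ → ℕ → Z} (hf : L e f) (hg : L e g) :
    L e (fun x y z => f x y z * g x y z) := by
  intro k x y z x' y' z' h1 h2 h3
  have := dvd_add ((hf k x y z x' y' z' h1 h2 h3).mul_right (g x y z))
    ((hg k x y z x' y' z' h1 h2 h3).mul_left (f x' y' z'))
  convert this using 1; ring

theorem L.down {e : ℕ} {f : ℕ → ℕ → ℕ → Z} (hf : L (e + 1) f) : L e f := by
  intro k x y z x' y' z' h1 h2 h3
  exact (pow_dvd_pow _ (by omega)).trans (hf k x y z x' y' z' h1 h2 h3)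

theorem L.three {e : ℕ} {f : ℕ → ℕ → ℕ → Z} (hf : L e f) :
    L (e + 1) (fun x y z => 3 * f x y z) := by
  intro k x y z x' y' z' h1 h2 h3
  rw [← mul_sub, ← add_assoc, pow_succ']
  exact mul_dvd_mul_left _ (hf k x y z x' y' z' h1 h2 h3)

theorem modEq_scale {k x x' : ℕ} (d : ℕ) (h : x ≡ x' [MOD 3 ^ k]) :
    3 * x + d ≡ 3 * x' + d [MOD 3 ^ (k + 1)] := by
  rw [pow_succ']
  exact (h.mul_left' 3).add_right d

theorem L.scale {e : ℕ} {f : ℕ → ℕ → ℕ → Z} (hf : L e f) (a b c : ℕ) :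
    L (e + 1) (fun x y z => f (3 * x + a) (3 * y + b) (3 * z + c)) := by
  intro k x y z x' y' z' h1 h2 h3
  have := hf (k + 1) _ _ _ _ _ _ (modEq_scale a h1) (modEq_scale b h2) (modEq_scale c h3)
  convert this using 2; ring

theorem L.div {e : ℕ} {f : ℕ → ℕ → ℕ → Z} (hf : L (e + 1) f) (hc : Cyc f)
    (h0 : (3 : Z) ∣ f 0 0 0) :
    ∃ g : ℕ → ℕ → ℕ → Z, L e g ∧ Cyc g ∧ ∀ x y z, f x y z = 3 * g x y z := by
  have h : ∀ x y z, ∃ w, f x y z = 3 * w := by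
    intro x y z
    have := hf 0 x y z 0 0 0 (by simp [Nat.modEq_one]) (by simp [Nat.modEq_one]) (by simp [Nat.modEq_one])
    have h3 : (3 : Z) ∣ f x y z - f 0 0 0 := (dvd_pow_self 3 (by omega)).trans this
    have := dvd_add h3 h0
    rw [sub_add_cancel] at this
    exact this
  choose g hg using h
  have h3 : (3 : Z) ≠ 0 := by norm_num
  refine ⟨g, ?_, ?_, hg⟩
  · intro k x y z x' y' z' h1 h2 h3'
    have := hf k x y z x' y' z' h1 h2 h3'
    rw [hg, hg, ← mul_sub, ← add_assoc, pow_succ'] at this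
    exact (mul_dvd_mul_iff_left h3).1 this
  · intro x y z
    have := hc x y z
    rw [hg, hg] at this
    exact mul_left_cancel₀ h3 this

theorem L1.fst {e : ℕ} {f : ℕ → Z} (hf : L1 e f) : L e (fun x _ _ => f x) :=
  fun k x _ _ x' _ _ h _ _ => hf k x x' h
theorem L1.snd {e : ℕ} {f : ℕ → Z} (hf : L1 e f) : L e (fun _ x _ => f x) :=
  fun k _ x _ _ x' _ _ h _ => hf k x x' h
theorem L1.trd {e : ℕ} {f : ℕ → Z} (hf : L1 e f) : L e (fun _ _ x => f x) :=
  fun k _ _ x _ _ x' _ _ h => hf k x x' h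

theorem L1.inv {e : ℕ} {f g : ℕ → Z} (hf : L1 e f) (h : ∀ x, f x * g x = 1) : L1 e g := by
  intro k x x' hx
  have := (hf k x x' hx).mul_right (-(g x * g x'))
  convert this using 1
  linear_combination g x' * h x - g x * h x'

theorem L1.id : L1 0 (fun x => (x : Z)) := by
  intro k x x' h
  have h2 := (Nat.modEq_iff_dvd.1 h.symm)
  have := map_dvd (Int.castRingHom Z) h2
  simpa using this

/-! ### units -/

theorem three_dvd_nat (n : ℕ) : (3 : Z) ∣ (n : Z) ↔ 3 ∣ n := by
  have h1 := PadicInt.norm_lt_one_iff_dvd (p := 3) (n : Z)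
  have h2 := PadicInt.norm_int_lt_one_iff_dvd (p := 3) (n : ℤ)
  push_cast at h1 h2
  rw [← h1, h2]
  exact_mod_cast Iff.rfl

theorem three_dvd_int (n : ℤ) : (3 : Z) ∣ (n : Z) ↔ 3 ∣ n := by
  have h1 := PadicInt.norm_lt_one_iff_dvd (p := 3) (n : Z)
  have h2 := PadicInt.norm_int_lt_one_iff_dvd (p := 3) (n : ℤ)
  push_cast at h1 h2
  rw [← h1, h2]

theorem three_prime : Prime (3 : Z) := by
  have := PadicInt.prime_p (p := 3)
  simpa using this

theorem isUnit_nat {n : ℕ} (h : ¬ 3 ∣ n) : IsUnit (n : Z) := by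
  rw [PadicInt.isUnit_iff]
  by_contra h1
  have h2 : ‖(n : Z)‖ < 1 := lt_of_le_of_ne (PadicInt.norm_le_one _) h1
  rw [PadicInt.norm_lt_one_iff_dvd] at h2
  exact h ((three_dvd_nat n).1 (by simpa using h2))

noncomputable def a (x : ℕ) : Z := Ring.inverse ((3 * x + 1 : ℕ) : Z)
noncomputable def b (x : ℕ) : Z := Ring.inverse ((3 * x + 2 : ℕ) : Z)

theorem ha (x : ℕ) : (3 * x + 1 : Z) * a x = 1 := by
  have := Ring.mul_inverse_cancel _ (isUnit_nat (n := 3 * x + 1) (by omega))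
  unfold a; push_cast at this ⊢; exact this

theorem hb (x : ℕ) : (3 * x + 2 : Z) * b x = 1 := by
  have := Ring.mul_inverse_cancel _ (isUnit_nat (n := 3 * x + 2) (by omega))
  unfold b; push_cast at this ⊢; exact this

theorem L1.lin (d : Z) : L1 1 (fun x => (3 * x + d : Z)) := by
  intro k x x' h
  have := mul_dvd_mul_left 3 (L1.id k x x' h)
  rw [add_zero, ← pow_succ'] at this
  convert this using 1; ring

theorem La : L1 1 a := (L1.lin 1).inv ha
theorem Lb : L1 1 b := (L1.lin 2).inv hb

def q (i : ℕ) : ℤ := -((3 * i + 1) * (3 * i + 2))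

def H (m : ℕ) : ℤ := ∏ i ∈ range m, q i

noncomputable def U (m : ℕ) : Z := ∏ i ∈ range m, (-(a i * b i))

theorem HU (m : ℕ) : (H m : Z) * U m = 1 := by
  unfold H U
  push_cast
  rw [← Finset.prod_mul_distrib]
  apply Finset.prod_eq_one
  intro i _
  unfold q; push_cast
  linear_combination (3 * i + 2 : Z) * b i * ha i + hb i

theorem P_cong (k m : ℕ) : ∏ i ∈ range (3 ^ k), q (m + i) ≡ 1 [ZMOD 3 ^ (k + 1)] := by
  induction k with
  | zero =>
    simp only [pow_zero, range_one, prod_singleton, q]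
    refine Int.ModEq.symm (Int.modEq_iff_dvd.2 ⟨-(3 * m ^ 2 + 3 * m + 1), ?_⟩)
    push_cast; ring
  | succ k ih =>
    have shift : ∀ t : ℕ, ∏ i ∈ range (3 ^ k), q (m + (3 ^ k * t + i)) ≡
        ∏ i ∈ range (3 ^ k), q (m + i) [ZMOD 3 ^ (k + 2)] := by
      intro t
      apply Int.ModEq.prod
      intro i _
      refine Int.ModEq.symm (Int.modEq_iff_dvd.2 ⟨-(t * (2 * (m + i) + 3 ^ k * t + 1)), ?_⟩)
      unfold q; push_cast; ring
    have e : 3 ^ (k + 1) = 3 ^ k * 1 + 3 ^ k * 1 + 3 ^ k := by ring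
    obtain ⟨c, hc⟩ := Int.modEq_iff_dvd.1 ih.symm
    have e2 : ∏ i ∈ range (3 ^ (k + 1)), q (m + i) =
        (∏ i ∈ range (3 ^ k), q (m + i)) * (∏ i ∈ range (3 ^ k), q (m + (3 ^ k * 1 + i))) *
          (∏ i ∈ range (3 ^ k), q (m + (3 ^ k * 2 + i))) := by
      rw [e, Finset.prod_range_add, Finset.prod_range_add]
      simp only [mul_one, mul_two]
    rw [e2]
    refine ((Int.ModEq.rfl.mul (shift 1)).mul (shift 2)).trans ?_
    rw [sub_eq_iff_eq_add.1 hc]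
    refine Int.ModEq.symm (Int.modEq_iff_dvd.2
      ⟨c + 3 ^ (k + 1) * c ^ 2 + 3 ^ k * 3 ^ k * 3 * c ^ 3, ?_⟩)
    ring

theorem H_step (k m : ℕ) : H (m + 3 ^ k) ≡ H m [ZMOD 3 ^ (k + 1)] := by
  unfold H
  rw [Finset.prod_range_add]
  simpa using (Int.ModEq.refl (∏ i ∈ range m, q i)).mul (P_cong k m)

theorem H_steps (k m t : ℕ) : H (m + 3 ^ k * t) ≡ H m [ZMOD 3 ^ (k + 1)] := by
  induction t with
  | zero => simp
  | succ t ih =>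
    have := (H_step k (m + 3 ^ k * t)).trans ih
    rwa [show m + 3 ^ k * (t + 1) = m + 3 ^ k * t + 3 ^ k by ring]

theorem H_mod (k m m' : ℕ) (h : m ≡ m' [MOD 3 ^ k]) : H m ≡ H m' [ZMOD 3 ^ (k + 1)] := by
  have key : ∀ n, H n ≡ H (n % 3 ^ k) [ZMOD 3 ^ (k + 1)] := by
    intro n
    have := H_steps k (n % 3 ^ k) (n / 3 ^ k)
    rwa [Nat.mod_add_div] at this
  refine (key m).trans ?_
  rw [h]
  exact (key m').symm

theorem LH : L1 1 (fun m => (H m : Z)) := by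
  intro k x x' h
  have h2 := Int.modEq_iff_dvd.1 (H_mod k x x' h).symm
  have := map_dvd (Int.castRingHom Z) h2
  simpa using this

theorem LU : L1 1 U := LH.inv HU

theorem H_one (m : ℕ) : (3 : Z) ∣ (H m : Z) - 1 := by
  have := LH 0 m 0 (by simp [Nat.modEq_one])
  simpa [H] using this

theorem H_not (m : ℕ) : ¬ (3 : Z) ∣ (H m : Z) := by
  intro h
  have := (dvd_sub h (H_one m))
  simp at this
  exact three_prime.not_isUnit (isUnit_of_dvd_one this)

end Tri

namespace Tri

/-! ### factorials and trinomial coefficients -/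

noncomputable def lin (d x : ℕ) : Z := if d = 0 then 1 else if d = 1 then 3 * x + 1 else (3 * x + 1) * (3 * x + 2)
noncomputable def lini (d x : ℕ) : Z := if d = 0 then 1 else if d = 1 then a x else a x * b x

theorem lin_lini (d x : ℕ) : lin d x * lini d x = 1 := by
  unfold lin lini
  split_ifs
  · simp
  · exact ha x
  · linear_combination (3 * x + 2 : Z) * b x * ha x + hb x

theorem fact0 (x : ℕ) : (((3 * x).factorial : ℕ) : Z) = (-3) ^ x * x.factorial * H x := by
  induction x with
  | zero => simp [H]
  | succ x ih =>
    rw [show 3 * (x + 1) = 3 * x + 1 + 1 + 1 by ring, Nat.factorial_succ, Nat.factorial_succ,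
      Nat.factorial_succ, Nat.factorial_succ x]
    push_cast
    rw [ih]
    unfold H
    rw [Finset.prod_range_succ]
    push_cast
    unfold q
    push_cast
    ring

theorem fact (d x : ℕ) (hd : d ≤ 2) :
    (((3 * x + d).factorial : ℕ) : Z) = (-3) ^ x * x.factorial * (H x * lin d x) := by
  interval_cases d
  · simp [lin, fact0]
  · rw [Nat.factorial_succ]; push_cast; rw [fact0]; simp [lin]; ring
  · rw [Nat.factorial_succ, Nat.factorial_succ]; push_cast; rw [fact0]; simp [lin]; ring

def t (x y z : ℕ) : ℕ := Nat.multinomial univ ![x, y, z]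

theorem t_spec (x y z : ℕ) :
    x.factorial * y.factorial * z.factorial * t x y z = (x + y + z).factorial := by
  have := Nat.multinomial_spec univ ![x, y, z]
  unfold t
  simpa [Fin.prod_univ_three, Fin.sum_univ_three] using this

theorem t_specZ (x y z : ℕ) :
    (x.factorial * y.factorial * z.factorial * t x y z : Z) = ((x + y + z).factorial : ℕ) := by
  rw [← t_spec]; push_cast; ring

theorem fact_ne (n : ℕ) : ((n.factorial : ℕ) : Z) ≠ 0 := by
  exact_mod_cast n.factorial_ne_zero

theorem t_nocarry (x y z d e c : ℕ) (h : d + e + c ≤ 2) :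
    (t (3 * x + d) (3 * y + e) (3 * z + c) : Z) = t x y z *
      (H (x + y + z) * lin (d + e + c) (x + y + z)
        * (U x * lini d x) * (U y * lini e y) * (U z * lini c z)) := by
  have h1 := t_specZ (3 * x + d) (3 * y + e) (3 * z + c)
  rw [fact d x (by omega), fact e y (by omega), fact c z (by omega),
    show 3 * x + d + (3 * y + e) + (3 * z + c) = 3 * (x + y + z) + (d + e + c) by ring,
    fact _ _ h, ← t_specZ x y z] at h1
  have hne : ((-3 : Z) ^ (x + y + z) * (x.factorial * y.factorial * z.factorial)) ≠ 0 := by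
    have := fact_ne x
    have := fact_ne y
    have := fact_ne z
    have : (-3 : Z) ≠ 0 := by norm_num
    positivity
  have h2 : (H x * lin d x * (H y * lin e y) * (H z * lin c z)) *
      (t (3 * x + d) (3 * y + e) (3 * z + c) : Z) =
      t x y z * (H (x + y + z) * lin (d + e + c) (x + y + z)) := by
    apply mul_left_cancel₀ hne
    rw [pow_add, pow_add] at *
    linear_combination h1
  have k1 : (H x * lin d x) * (U x * lini d x) = 1 := by
    linear_combination (lin d x * lini d x) * HU x + lin_lini d x
  have k2 : (H y * lin e y) * (U y * lini e y) = 1 := by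
    linear_combination (lin e y * lini e y) * HU y + lin_lini e y
  have k3 : (H z * lin c z) * (U z * lini c z) = 1 := by
    linear_combination (lin c z * lini c z) * HU z + lin_lini c z
  generalize H x * lin d x = A at *
  generalize H y * lin e y = B at *
  generalize H z * lin c z = C at *
  generalize U x * lini d x = A' at *
  generalize U y * lini e y = B' at *
  generalize U z * lini c z = C' at *
  calc (t (3 * x + d) (3 * y + e) (3 * z + c) : Z)
      = (A * A') * (B * B') * (C * C') * (t (3 * x + d) (3 * y + e) (3 * z + c) : Z) := by
        rw [k1, k2, k3]; ring
    _ = (A * B * C * (t (3 * x + d) (3 * y + e) (3 * z + c) : Z)) * (A' * B' * C') := by ring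
    _ = _ := by rw [h2]; ring

theorem not_dvd_of_mul_eq_one {u v : Z} (h : u * v = 1) : ¬ (3 : Z) ∣ u := fun hh =>
  three_prime.not_isUnit (isUnit_of_dvd_one (h ▸ hh.mul_right v))

theorem t_carry (x y z d e c : ℕ) (hd : d ≤ 2) (he : e ≤ 2) (hc : c ≤ 2) (h : 3 ≤ d + e + c) :
    3 ∣ t (3 * x + d) (3 * y + e) (3 * z + c) := by
  rw [← three_dvd_nat]
  have h1 := t_specZ (3 * x + d) (3 * y + e) (3 * z + c)
  obtain ⟨K, hK⟩ : (3 * (x + y + z + 1)).factorial ∣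
      (3 * x + d + (3 * y + e) + (3 * z + c)).factorial :=
    Nat.factorial_dvd_factorial (by omega)
  rw [hK] at h1
  push_cast at h1
  rw [fact d x (by omega), fact e y (by omega), fact c z (by omega), fact0,
    Nat.factorial_succ] at h1
  push_cast at h1
  rw [← t_specZ x y z] at h1
  have hne : ((-3 : Z) ^ (x + y + z) * (x.factorial * y.factorial * z.factorial)) ≠ 0 := by
    have := fact_ne x
    have := fact_ne y
    have := fact_ne z
    have : (-3 : Z) ≠ 0 := by norm_num
    positivity
  have h2 : (H x * lin d x * (H y * lin e y) * (H z * lin c z)) *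
      (t (3 * x + d) (3 * y + e) (3 * z + c) : Z) =
      3 * (-1 * (x + y + z + 1) * t x y z * H (x + y + z + 1) * K) := by
    apply mul_left_cancel₀ hne
    rw [pow_succ, pow_add, pow_add] at *
    linear_combination h1
  have h3 := Dvd.intro _ h2.symm
  have k1 : (H x * lin d x) * (U x * lini d x) = 1 := by
    linear_combination (lin d x * lini d x) * HU x + lin_lini d x
  have k2 : (H y * lin e y) * (U y * lini e y) = 1 := by
    linear_combination (lin e y * lini e y) * HU y + lin_lini e y
  have k3 : (H z * lin c z) * (U z * lini c z) = 1 := by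
    linear_combination (lin c z * lini c z) * HU z + lin_lini c z
  rcases three_prime.dvd_or_dvd h3 with h3 | h3
  · rcases three_prime.dvd_or_dvd h3 with h3 | h3
    · rcases three_prime.dvd_or_dvd h3 with h3 | h3
      · exact absurd h3 (not_dvd_of_mul_eq_one k1)
      · exact absurd h3 (not_dvd_of_mul_eq_one k2)
    · exact absurd h3 (not_dvd_of_mul_eq_one k3)
  · exact h3

/-- The trinomial coefficient, set to zero when it is divisible by 3. -/
def tau (x y z : ℕ) : ℕ := if 3 ∣ t x y z then 0 else t x y z

theorem tau_carry (x y z d e c : ℕ) (hd : d ≤ 2) (he : e ≤ 2) (hc : c ≤ 2) (h : 3 ≤ d + e + c) :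
    tau (3 * x + d) (3 * y + e) (3 * z + c) = 0 := if_pos (t_carry x y z d e c hd he hc h)

theorem tau_nocarry (x y z d e c : ℕ) (h : d + e + c ≤ 2) :
    (tau (3 * x + d) (3 * y + e) (3 * z + c) : Z) = tau x y z *
      (H (x + y + z) * lin (d + e + c) (x + y + z)
        * (U x * lini d x) * (U y * lini e y) * (U z * lini c z)) := by
  have h1 := t_nocarry x y z d e c h
  have hiff : 3 ∣ t (3 * x + d) (3 * y + e) (3 * z + c) ↔ 3 ∣ t x y z := by
    rw [← three_dvd_nat, ← three_dvd_nat, h1]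
    refine ⟨fun h2 => ?_, fun h2 => h2.mul_right _⟩
    refine (three_prime.dvd_or_dvd h2).resolve_right (not_dvd_of_mul_eq_one
      (v := (U (x + y + z) * lini (d + e + c) (x + y + z)
        * (H x * lin d x) * (H y * lin e y) * (H z * lin c z))) ?_)
    calc _ = (H (x + y + z) * U (x + y + z)) * (lin (d + e + c) (x + y + z) *
          lini (d + e + c) (x + y + z)) * (H x * U x) * (H y * U y) * (H z * U z) *
          (lin d x * lini d x) * (lin e y * lini e y) * (lin c z * lini c z) := by ring
      _ = 1 := by simp [HU, lin_lini]
  unfold tau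
  by_cases h3 : 3 ∣ t x y z
  · rw [if_pos (hiff.2 h3), if_pos h3]; simp
  · rw [if_neg (fun h => h3 (hiff.1 h)), if_neg h3, h1]

/-! ### the sums -/

noncomputable def S3 (M : ℕ) (F : ℕ → ℕ → ℕ → Z) : Z :=
  ∑ x ∈ range M, ∑ y ∈ range M, ∑ z ∈ range M, F x y z

theorem sum3 (M : ℕ) (F : ℕ → Z) :
    ∑ i ∈ range (3 * M), F i = ∑ d ∈ range 3, ∑ i ∈ range M, F (3 * i + d) := by
  induction M with
  | zero => simp
  | succ M ih =>
    rw [show 3 * (M + 1) = 3 * M + 1 + 1 + 1 by ring, sum_range_succ, sum_range_succ,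
      sum_range_succ, ih]
    simp only [sum_range_succ, range_zero, sum_empty]
    ring_nf

theorem S3_three (M : ℕ) (F : ℕ → ℕ → ℕ → Z) :
    S3 (3 * M) F = S3 M (fun x y z => ∑ d ∈ range 3, ∑ e ∈ range 3, ∑ c ∈ range 3,
      F (3 * x + d) (3 * y + e) (3 * z + c)) := by
  unfold S3
  simp only [sum3, sum_range_succ (n := 2), sum_range_succ (n := 1), sum_range_one,
    sum_add_distrib]
  ring

noncomputable def T (j n : ℕ) (f : ℕ → ℕ → ℕ → Z) : Z :=
  S3 (3 ^ j) (fun x y z => if x + y + z = n then tau x y z * f x y z else 0)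

theorem T_congr (j n : ℕ) (f g : ℕ → ℕ → ℕ → Z)
    (h : ∀ x y z, x + y + z = n → f x y z = g x y z) : T j n f = T j n g := by
  unfold T S3
  refine sum_congr rfl fun x _ => sum_congr rfl fun y _ => sum_congr rfl fun z _ => ?_
  beta_reduce
  split_ifs with h1
  · rw [h x y z h1]
  · rfl

theorem T_add (j n : ℕ) (f g : ℕ → ℕ → ℕ → Z) :
    T j n (fun x y z => f x y z + g x y z) = T j n f + T j n g := by
  unfold T S3
  simp only [← sum_add_distrib]
  refine sum_congr rfl fun x _ => sum_congr rfl fun y _ => sum_congr rfl fun z _ => ?_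
  beta_reduce
  split_ifs <;> ring

theorem T_smul (j n : ℕ) (c : Z) (f : ℕ → ℕ → ℕ → Z) :
    T j n (fun x y z => c * f x y z) = c * T j n f := by
  unfold T S3
  simp only [mul_sum]
  refine sum_congr rfl fun x _ => sum_congr rfl fun y _ => sum_congr rfl fun z _ => ?_
  beta_reduce
  split_ifs <;> ring

noncomputable def W (m x y z : ℕ) : Z := H m * (U x * U y * U z)

theorem LW (m : ℕ) : L 1 (W m) := (L.const 1 _).mul ((LU.fst.mul LU.snd).mul LU.trd)

theorem CW (m : ℕ) : Cyc (W m) := by intro x y z; unfold W; ring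

theorem term_eq (m r x y z d e c : ℕ) (f : ℕ → ℕ → ℕ → Z) (hr : r ≤ 2) (hd : d ∈ range 3)
    (he : e ∈ range 3) (hc : c ∈ range 3) :
    (if 3 * x + d + (3 * y + e) + (3 * z + c) = 3 * m + r then
      (tau (3 * x + d) (3 * y + e) (3 * z + c) : Z) * f (3 * x + d) (3 * y + e) (3 * z + c) else 0) =
    if x + y + z = m then (if d + e + c = r then tau x y z * (W m x y z * lin r m *
      (lini d x * lini e y * lini c z * f (3 * x + d) (3 * y + e) (3 * z + c))) else 0) else 0 := by
  simp only [mem_range] at hd he hc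
  by_cases h : 3 ≤ d + e + c
  · rw [tau_carry x y z d e c (by omega) (by omega) (by omega) h, if_neg (show ¬ d + e + c = r by omega)]
    simp
  · have h2 : 3 * x + d + (3 * y + e) + (3 * z + c) = 3 * m + r ↔
        x + y + z = m ∧ d + e + c = r := by omega
    rw [tau_nocarry x y z d e c (by omega)]
    by_cases h3 : x + y + z = m
    · by_cases h4 : d + e + c = r
      · rw [if_pos (h2.2 ⟨h3, h4⟩), if_pos h3, if_pos h4, h3, h4]
        unfold W
        ring
      · rw [if_neg (fun h => h4 (h2.1 h).2), if_pos h3, if_neg h4]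
    · rw [if_neg (fun h => h3 (h2.1 h).1), if_neg h3]

theorem T_gen (j m r : ℕ) (hr : r ≤ 2) (f : ℕ → ℕ → ℕ → Z) : T (j + 1) (3 * m + r) f =
    T j m (fun x y z => W m x y z * lin r m * ∑ d ∈ range 3, ∑ e ∈ range 3, ∑ c ∈ range 3,
      if d + e + c = r then
        lini d x * lini e y * lini c z * f (3 * x + d) (3 * y + e) (3 * z + c) else 0) := by
  unfold T
  rw [pow_succ', S3_three]
  unfold S3
  refine sum_congr rfl fun x _ => sum_congr rfl fun y _ => sum_congr rfl fun z _ => ?_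
  beta_reduce
  have h1 : ∀ d ∈ range 3, ∀ e ∈ range 3, ∀ c ∈ range 3, _ := fun d hd e he c hc =>
    term_eq m r x y z d e c f hr hd he hc
  rw [sum_congr rfl fun d hd => sum_congr rfl fun e he => sum_congr rfl fun c hc =>
    h1 d hd e he c hc]
  by_cases h : x + y + z = m
  · simp only [if_pos h, mul_sum, mul_ite, mul_zero]
  · simp [if_neg h]

theorem T_zero (j m : ℕ) (f : ℕ → ℕ → ℕ → Z) : T (j + 1) (3 * m) f =
    T j m (fun x y z => W m x y z * f (3 * x + 0) (3 * y + 0) (3 * z + 0)) := by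
  have := T_gen j m 0 (by norm_num) f
  rw [add_zero] at this
  rw [this]
  congr 1; funext x y z
  simp [sum_range_succ, lin, lini]

theorem T_one (j m : ℕ) (f : ℕ → ℕ → ℕ → Z) : T (j + 1) (3 * m + 1) f =
    T j m (fun x y z => (W m x y z * (3 * m + 1)) * (a x * f (3 * x + 1) (3 * y + 0) (3 * z + 0) +
      a y * f (3 * x + 0) (3 * y + 1) (3 * z + 0) +
      a z * f (3 * x + 0) (3 * y + 0) (3 * z + 1))) := by
  rw [T_gen j m 1 (by norm_num) f]
  congr 1; funext x y z
  simp [sum_range_succ, lin, lini]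
  left; ring

theorem T_two (j m : ℕ) (f : ℕ → ℕ → ℕ → Z) : T (j + 1) (3 * m + 2) f =
    T j m (fun x y z => (W m x y z * ((3 * m + 1) * (3 * m + 2))) *
      ((a x * b x * f (3 * x + 2) (3 * y + 0) (3 * z + 0) +
      a y * b y * f (3 * x + 0) (3 * y + 2) (3 * z + 0) +
      a z * b z * f (3 * x + 0) (3 * y + 0) (3 * z + 2)) +
      (a x * a y * f (3 * x + 1) (3 * y + 1) (3 * z + 0) +
      a y * a z * f (3 * x + 0) (3 * y + 1) (3 * z + 1) +
      a z * a x * f (3 * x + 1) (3 * y + 0) (3 * z + 1)))) := by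
  rw [T_gen j m 2 (by norm_num) f]
  congr 1; funext x y z
  simp [sum_range_succ, lin, lini]
  left; ring

/-! ### number of nonzero digits -/

theorem s_zero (m : ℕ) : s3star (3 * m) = s3star m := by
  rcases Nat.eq_zero_or_pos m with rfl | h
  · simp
  · have := Nat.digits_add_two_add_one 1 (3 * m - 1)
    rw [show 3 * m - 1 + 1 = 3 * m by omega] at this
    unfold s3star
    rw [this]; simp

theorem s_one (m : ℕ) : s3star (3 * m + 1) = s3star m + 1 := by
  unfold s3star
  rw [Nat.digits_add_two_add_one 1 (3 * m), show (3 * m + 1) % (1 + 2) = 1 by omega,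
    show (3 * m + 1) / (1 + 2) = m by omega]
  simp

theorem s_two (m : ℕ) : s3star (3 * m + 2) = s3star m + 1 := by
  unfold s3star
  rw [Nat.digits_add_two_add_one 1 (3 * m + 1), show (3 * m + 1 + 1) % (1 + 2) = 2 by omega,
    show (3 * m + 1 + 1) / (1 + 2) = m by omega]
  simp

/-! ### Divisibility -/

theorem main_dvd (j : ℕ) : ∀ (n : ℕ) (f : ℕ → ℕ → ℕ → Z), L 0 f → Cyc f →
    (3 : Z) ^ s3star n ∣ T j n f := by
  induction j with
  | zero =>
    intro n f _ _
    rcases Nat.eq_zero_or_pos n with rfl | h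
    · simp [s3star]
    · have : T 0 n f = 0 := by
        unfold T S3
        simp only [pow_zero, range_one, sum_singleton]
        rw [if_neg (by omega)]
      rw [this]; exact dvd_zero _
  | succ j ih =>
    intro n f hf hc
    obtain ⟨m, h | h | h⟩ : ∃ m, n = 3 * m ∨ n = 3 * m + 1 ∨ n = 3 * m + 2 := ⟨n / 3, by omega⟩
    · subst h
      rw [T_zero, s_zero]
      apply ih
      · exact ((LW m).mul (hf.scale 0 0 0)).down
      · intro x y z
        beta_reduce
        rw [CW m x y z, hc (3 * x + 0)]
    · subst h
      rw [T_one, s_one]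
      obtain ⟨g, g1, g2, g3⟩ := L.div (e := 0) (((LW m).mul (L.const 1 (3 * m + 1))).mul
        (((La.fst.mul (hf.scale 1 0 0)).add (La.snd.mul (hf.scale 0 1 0))).add
          (La.trd.mul (hf.scale 0 0 1)))) (by
          intro x y z
          beta_reduce
          rw [CW m x y z, hc (3 * x + 1), hc (3 * x + 0), hc (3 * x + 0)]
          ring) (by
          refine Dvd.dvd.mul_left ⟨a 0 * f 1 0 0, ?_⟩ _
          simp only [mul_zero, zero_add]
          rw [hc 0 1 0, ← hc 1 0 0, ← hc 0 1 0, hc 0 1 0]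
          ring)
      simp only [g3]
      rw [T_smul, pow_succ']
      exact mul_dvd_mul_left _ (ih m g g1 g2)
    · subst h
      rw [T_two, s_two]
      obtain ⟨g, g1, g2, g3⟩ := L.div (e := 0)
        (((LW m).mul (L.const 1 ((3 * m + 1) * (3 * m + 2)))).mul
        (((((La.fst.mul Lb.fst).mul (hf.scale 2 0 0)).add
          ((La.snd.mul Lb.snd).mul (hf.scale 0 2 0))).add
          ((La.trd.mul Lb.trd).mul (hf.scale 0 0 2))).add
        ((((La.fst.mul La.snd).mul (hf.scale 1 1 0)).add
          ((La.snd.mul La.trd).mul (hf.scale 0 1 1))).add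
          ((La.trd.mul La.fst).mul (hf.scale 1 0 1))))) (by
          intro x y z
          beta_reduce
          rw [CW m x y z, hc (3 * x + 2), hc (3 * x + 0), hc (3 * x + 0), hc (3 * x + 1),
            hc (3 * x + 0), hc (3 * x + 1)]
          ring) (by
          refine Dvd.dvd.mul_left ⟨a 0 * b 0 * f 2 0 0 + a 0 * a 0 * f 1 1 0, ?_⟩ _
          simp only [mul_zero, zero_add]
          rw [hc 0 0 2, hc 0 2 0, hc 0 1 1, hc 1 0 1, hc 0 1 1]
          ring)
      simp only [g3]
      rw [T_smul, pow_succ']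
      exact mul_dvd_mul_left _ (ih m g g1 g2)

theorem L.sub_const {e : ℕ} {f : ℕ → ℕ → ℕ → Z} (hf : L e f) (c : Z) :
    L e (fun x y z => f x y z + -c) := hf.add (L.const e (-c))

noncomputable abbrev T1 (j n : ℕ) : Z := T j n (fun _ _ _ => 1)

theorem main_cong (j n : ℕ) (f : ℕ → ℕ → ℕ → Z) (hf : L 1 f) (hc : Cyc f) :
    (3 : Z) ^ (s3star n + 1) ∣ T j n f - f 0 0 0 * T1 j n := by
  obtain ⟨g, g1, g2, g3⟩ := L.div (hf.sub_const (f 0 0 0)) (fun x y z => by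
    beta_reduce; rw [hc x y z]) (by simp)
  have h : T j n f = T j n (fun x y z => 3 * g x y z + f 0 0 0 * 1) := by
    congr 1; funext x y z
    rw [← g3]; ring
  rw [h, T_add, T_smul, T_smul, add_sub_cancel_right, pow_succ']
  exact mul_dvd_mul_left _ (main_dvd j n g g1 g2)

theorem T1_dvd (j n : ℕ) : (3 : Z) ^ s3star n ∣ T1 j n :=
  main_dvd j n _ (L.const 0 1) (fun _ _ _ => rfl)

theorem dvd_sub_right_iff_aux {p u v : Z} (h : p ∣ u - v) : p ∣ v ↔ p ∣ u := by
  constructor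
  · intro hv; have := dvd_add h hv; rwa [sub_add_cancel] at this
  · intro hu; have := dvd_sub hu h; rwa [sub_sub_cancel] at this

theorem cong_iff (j n : ℕ) (f : ℕ → ℕ → ℕ → Z) (hf : L 1 f) (hc : Cyc f) :
    (3 : Z) ^ (s3star n + 1) ∣ T j n f ↔
      (3 : Z) ∣ f 0 0 0 ∨ (3 : Z) ^ (s3star n + 1) ∣ T1 j n := by
  obtain ⟨w, hw⟩ := T1_dvd j n
  have h3 : (3 : Z) ^ s3star n ≠ 0 := pow_ne_zero _ (by norm_num)
  rw [← dvd_sub_right_iff_aux (main_cong j n f hf hc), hw, pow_succ,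
    mul_dvd_mul_iff_left h3, ← three_prime.dvd_mul, mul_left_comm, mul_dvd_mul_iff_left h3]

end Tri

namespace Tri

theorem U_zero : U 0 = 1 := by simp [U]
theorem W_zero (m : ℕ) : W m 0 0 0 = H m := by simp [W, U_zero]

theorem a_eq (x : ℕ) : a x = 1 - 3 * x + 9 * (x ^ 2 * a x) := by
  linear_combination (1 - 3 * x : Z) * ha x

theorem ab_eq (x : ℕ) : a x * b x = -4 + 9 * ((1 + 4 * (x ^ 2 + x)) * (a x * b x)) := by
  linear_combination (-4 * (3 * x + 2) * b x : Z) * ha x - 4 * hb x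

theorem rec_zero (j m : ℕ) : (3 : Z) ^ (s3star (3 * m) + 1) ∣ T1 (j + 1) (3 * m) ↔
    (3 : Z) ^ (s3star m + 1) ∣ T1 j m := by
  unfold T1
  rw [T_zero, s_zero, cong_iff j m _ ((LW m).mul (L.const 1 1))
    (fun x y z => by beta_reduce; rw [CW m x y z])]
  rw [W_zero, mul_one]
  simp [H_not m]

theorem rec_one (j m : ℕ) : (3 : Z) ^ (s3star (3 * m + 1) + 1) ∣ T1 (j + 1) (3 * m + 1) ↔
    m % 3 = 1 ∨ (3 : Z) ^ (s3star m + 1) ∣ T1 j m := by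
  let sq : ℕ → Z := fun x => x * x * a x
  have hsq : ∀ x, sq x = x * x * a x := fun _ => rfl
  have Lsq1 : L 0 (fun x _ _ => sq x) := (L1.id.fst.mul L1.id.fst).mul La.fst.down
  have Lsq2 : L 0 (fun _ x _ => sq x) := (L1.id.snd.mul L1.id.snd).mul La.snd.down
  have Lsq3 : L 0 (fun _ _ x => sq x) := (L1.id.trd.mul L1.id.trd).mul La.trd.down
  have h1 : T1 (j + 1) (3 * m + 1) = 3 * T j m (fun x y z =>
      W m x y z * ((3 * m + 1) * ((1 - m) + 3 * (sq x + sq y + sq z)))) := by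
    unfold T1
    rw [T_one, ← T_smul]
    apply T_congr
    intro x y z h
    have hm : (m : Z) = x + y + z := by rw [← h]; push_cast; ring
    simp only [hsq]
    linear_combination (W m x y z * (3 * m + 1)) * (a_eq x + a_eq y + a_eq z + 3 * hm)
  rw [h1, s_one, pow_succ', mul_dvd_mul_iff_left (by norm_num : (3 : Z) ≠ 0)]
  rw [cong_iff j m _ ((LW m).mul ((L.const 1 _).mul ((L.const 1 _).add
    ((Lsq1.add Lsq2).add Lsq3).three))) (fun x y z => by beta_reduce; rw [CW m x y z]; ring)]
  refine or_congr ?_ Iff.rfl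
  rw [W_zero, three_prime.dvd_mul, or_iff_right (H_not m)]
  have e : ((3 * m + 1) * ((1 - m) + 3 * (sq 0 + sq 0 + sq 0)) : Z) =
      (((3 * m + 1) * (1 - m) : ℤ) : Z) := by
    simp [hsq]
  rw [e, three_dvd_int, Int.prime_three.dvd_mul]
  omega

theorem rec_two (j m : ℕ) : (3 : Z) ^ (s3star (3 * m + 2) + 1) ∣ T1 (j + 1) (3 * m + 2) ↔
    m % 3 = 0 ∨ (3 : Z) ^ (s3star m + 1) ∣ T1 j m := by
  let A : ℕ → Z := fun x => (1 + 4 * (x * x + x)) * (a x * b x)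
  let B : ℕ → ℕ → Z := fun x y => x * y + ((1 + 3 * (-1 * x)) * (y * y * a y) + x * x * (a x * a y))
  have hA : ∀ x, A x = (1 + 4 * (x * x + x)) * (a x * b x) := fun _ => rfl
  have hB : ∀ x y, B x y = x * y + ((1 + 3 * (-1 * x)) * (y * y * a y) + x * x * (a x * a y)) :=
    fun _ _ => rfl
  have i1 := L1.id.fst
  have i2 := L1.id.snd
  have i3 := L1.id.trd
  have a1 := La.fst.down
  have a2 := La.snd.down
  have a3 := La.trd.down
  have b1 := Lb.fst.down
  have b2 := Lb.snd.down
  have b3 := Lb.trd.down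
  have c := L.const 0
  have A1 : L 0 (fun x _ _ => A x) :=
    ((c 1).add ((c 4).mul ((i1.mul i1).add i1))).mul (a1.mul b1)
  have A2 : L 0 (fun _ x _ => A x) :=
    ((c 1).add ((c 4).mul ((i2.mul i2).add i2))).mul (a2.mul b2)
  have A3 : L 0 (fun _ _ x => A x) :=
    ((c 1).add ((c 4).mul ((i3.mul i3).add i3))).mul (a3.mul b3)
  have B1 : L 0 (fun x y _ => B x y) := (i1.mul i2).add
    ((((c 1).add ((c 3).mul ((c (-1)).mul i1))).mul ((i2.mul i2).mul a2)).add
      ((i1.mul i1).mul (a1.mul a2)))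
  have B2 : L 0 (fun _ x y => B x y) := (i2.mul i3).add
    ((((c 1).add ((c 3).mul ((c (-1)).mul i2))).mul ((i3.mul i3).mul a3)).add
      ((i2.mul i2).mul (a2.mul a3)))
  have B3 : L 0 (fun y _ x => B x y) := (i3.mul i1).add
    ((((c 1).add ((c 3).mul ((c (-1)).mul i3))).mul ((i1.mul i1).mul a1)).add
      ((i3.mul i3).mul (a3.mul a1)))
  have hAe : ∀ x, a x * b x = -4 + 9 * A x := by
    intro x; rw [hA]; linear_combination ab_eq x
  have hBe : ∀ x y, a x * a y = 1 - 3 * x - 3 * y + 9 * B x y := by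
    intro x y; rw [hB]; linear_combination a y * a_eq x + (1 - 3 * x : Z) * a_eq y
  have h1 : T1 (j + 1) (3 * m + 2) = 3 * T j m (fun x y z =>
      W m x y z * (((3 * m + 1) * (3 * m + 2)) * ((-3 - 2 * m) +
        3 * ((A x + A y + A z) + (B x y + B y z + B z x))))) := by
    unfold T1
    rw [T_two, ← T_smul]
    apply T_congr
    intro x y z h
    have hm : (m : Z) = x + y + z := by rw [← h]; push_cast; ring
    linear_combination (W m x y z * ((3 * m + 1) * (3 * m + 2))) *
      (hAe x + hAe y + hAe z + hBe x y + hBe y z + hBe z x + 6 * hm)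
  rw [h1, s_two, pow_succ', mul_dvd_mul_iff_left (by norm_num : (3 : Z) ≠ 0)]
  rw [cong_iff j m _ ((LW m).mul ((L.const 1 _).mul ((L.const 1 _).add
    (((A1.add A2).add A3).add ((B1.add B2).add B3)).three)))
    (fun x y z => by beta_reduce; rw [CW m x y z]; ring)]
  refine or_congr ?_ Iff.rfl
  rw [W_zero, three_prime.dvd_mul, or_iff_right (H_not m)]
  have e : ((3 * m + 1) * (3 * m + 2) * ((-3 - 2 * m) +
        3 * ((A 0 + A 0 + A 0) + (B 0 0 + B 0 0 + B 0 0))) : Z) =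
      (((3 * m + 1) * (3 * m + 2) * (-2 * m) : ℤ) : Z) + 3 * (((3 * m + 1) * (3 * m + 2)) * (-1 +
        ((A 0 + A 0 + A 0) + (B 0 0 + B 0 0 + B 0 0)))) := by
    push_cast
    ring
  rw [e, dvd_add_left (Dvd.intro _ rfl), three_dvd_int, Int.prime_three.dvd_mul,
    Int.prime_three.dvd_mul]
  omega

/-! ### Digit conditions -/

def Q (l : List ℕ) : Prop := l.getLast? = some 1 ∧
  ∀ i : ℕ, i + 1 < l.length →
    ¬(l.getD (i + 1) 0 = 1 ∧ l.getD i 0 = 1) ∧ ¬(l.getD (i + 1) 0 = 0 ∧ l.getD i 0 = 2)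

theorem Q_cons (d : ℕ) (l : List ℕ) (hl : l ≠ []) : Q (d :: l) ↔
    Q l ∧ ¬(l.getD 0 0 = 1 ∧ d = 1) ∧ ¬(l.getD 0 0 = 0 ∧ d = 2) := by
  unfold Q
  obtain ⟨c, l, rfl⟩ := List.exists_cons_of_ne_nil hl
  rw [List.getLast?_cons_cons]
  constructor
  · rintro ⟨h1, h2⟩
    refine ⟨⟨h1, fun i hi => ?_⟩, ?_⟩
    · have := h2 (i + 1) (by simpa using hi)
      simpa using this
    · have := h2 0 (by simp)
      simpa using this
  · rintro ⟨⟨h1, h2⟩, h3⟩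
    refine ⟨h1, fun i hi => ?_⟩
    cases i with
    | zero => simpa using h3
    | succ i =>
      have := h2 i (by simpa using hi)
      simpa using this

theorem dig (m d : ℕ) (hd : d < 3) (h : 0 < 3 * m + d) :
    Nat.digits 3 (3 * m + d) = d :: Nat.digits 3 m := by
  rw [Nat.digits_def' (by norm_num) h]
  congr 2 <;> omega

theorem Q_dig (m d : ℕ) (hd : d < 3) (h : 0 < m) :
    Q (Nat.digits 3 (3 * m + d)) ↔
      Q (Nat.digits 3 m) ∧ ¬(m % 3 = 1 ∧ d = 1) ∧ ¬(m % 3 = 0 ∧ d = 2) := by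
  rw [dig m d hd (by omega), Q_cons _ _ (Nat.digits_ne_nil_iff_ne_zero.2 h.ne'),
    Nat.getD_digits _ _ (by norm_num)]
  simp

theorem main_iff (j : ℕ) : ∀ n, n < 3 ^ j →
    (¬ (3 : Z) ^ (s3star n + 1) ∣ T1 j n ↔ n = 0 ∨ Q (Nat.digits 3 n)) := by
  induction j with
  | zero =>
    intro n hn
    obtain rfl : n = 0 := by simpa using hn
    have : T1 0 0 = 1 := by
      have h : t 0 0 0 = 1 := by simpa using t_spec 0 0 0
      simp [T1, T, S3, tau, h]
    rw [this]
    simp only [true_or, iff_true]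
    intro h
    exact three_prime.not_isUnit (isUnit_of_dvd_one ((dvd_pow_self _ (by omega)).trans h))
  | succ j ih =>
    intro n hn
    rw [pow_succ] at hn
    obtain ⟨m, h | h | h⟩ : ∃ m, n = 3 * m ∨ n = 3 * m + 1 ∨ n = 3 * m + 2 := ⟨n / 3, by omega⟩
    · subst h
      rw [rec_zero, ih m (by omega)]
      rcases Nat.eq_zero_or_pos m with rfl | hm
      · simp
      · have := Q_dig m 0 (by norm_num) hm
        rw [add_zero] at this
        rw [this]
        simp [hm.ne']
    · subst h
      rw [rec_one, not_or, ih m (by omega)]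
      rcases Nat.eq_zero_or_pos m with rfl | hm
      · simp [Q]
      · rw [Q_dig m 1 (by norm_num) hm]
        simp [hm.ne']
        tauto
    · subst h
      rw [rec_two, not_or, ih m (by omega)]
      rcases Nat.eq_zero_or_pos m with rfl | hm
      · simp [Q]
      · rw [Q_dig m 2 (by norm_num) hm]
        simp [hm.ne']
        tauto

theorem S_eq (n : ℕ) : ((∑ x ∈ (Finset.Nat.antidiagonalTuple 3 n).filter
        (fun x => ¬ (3 ∣ Nat.multinomial Finset.univ x)),
      Nat.multinomial Finset.univ x : ℕ) : Z) = T1 n n := by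
  have hn : n < 3 ^ n := Nat.lt_pow_self (by norm_num)
  have h1 : T1 n n = ((∑ x ∈ range (3 ^ n), ∑ y ∈ range (3 ^ n), ∑ z ∈ range (3 ^ n),
      if x + y + z = n then tau x y z else 0 : ℕ) : Z) := by
    unfold T1 T S3
    push_cast
    simp only [mul_one]
  rw [h1]
  congr 1
  simp only [← Finset.sum_product']
  rw [Finset.sum_filter, ← Finset.sum_filter]
  symm
  rw [← Finset.sum_filter (p := fun p : ℕ × ℕ × ℕ => p.1 + p.2.1 + p.2.2 = n), Finset.sum_filter
    (p := fun x => ¬ (3 ∣ Nat.multinomial Finset.univ x))]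
  refine Finset.sum_bij' (fun p _ => ![p.1, p.2.1, p.2.2]) (fun v _ => (v 0, v 1, v 2)) ?_ ?_ ?_ ?_ ?_
  · intro p hp
    simp only [mem_filter] at hp
    simp [Finset.Nat.mem_antidiagonalTuple, Fin.sum_univ_three, hp.2]
  · intro v hv
    simp only [Finset.Nat.mem_antidiagonalTuple, Fin.sum_univ_three] at hv
    simp only [mem_filter, mem_product, mem_range]
    omega
  · intro p hp; simp
  · intro v hv
    funext i; fin_cases i <;> simp
  · intro p hp
    unfold tau t
    split_ifs <;> simp_all

theorem pow_dvd_nat (k n : ℕ) : (3 : Z) ^ k ∣ (n : Z) ↔ 3 ^ k ∣ n := by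
  have := PadicInt.pow_p_dvd_int_iff (p := 3) k n
  push_cast at this
  rw [this]
  exact_mod_cast Iff.rfl

end Tri

theorem stmt_15 (n : ℕ) (hn : 0 < n)
    (S : ℕ)
    (hS : S = ∑ x ∈ (Finset.Nat.antidiagonalTuple 3 n).filter
        (fun x => ¬ (3 ∣ Nat.multinomial Finset.univ x)),
      Nat.multinomial Finset.univ x) :
    s3star n ≤ padicValNat 3 S ∧
      (padicValNat 3 S = s3star n ↔
        ((Nat.digits 3 n).getLast? = some 1 ∧
          ∀ i : ℕ, i + 1 < (Nat.digits 3 n).length →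
            ¬((Nat.digits 3 n).getD (i + 1) 0 = 1 ∧ (Nat.digits 3 n).getD i 0 = 1) ∧
            ¬((Nat.digits 3 n).getD (i + 1) 0 = 0 ∧ (Nat.digits 3 n).getD i 0 = 2))) := by
  have h1 : (S : Tri.Z) = Tri.T1 n n := by rw [hS]; exact Tri.S_eq n
  have hS0 : S ≠ 0 := by
    have hm : Nat.multinomial Finset.univ ![n, 0, 0] = 1 := by
      have := Tri.t_spec n 0 0
      simp only [Nat.factorial_zero, mul_one, add_zero] at this
      exact Nat.eq_of_mul_eq_mul_left n.factorial_pos (by rw [mul_one]; exact this)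
    have := Finset.single_le_sum (f := fun x => Nat.multinomial Finset.univ x)
      (s := (Finset.Nat.antidiagonalTuple 3 n).filter
        (fun x => ¬ (3 ∣ Nat.multinomial Finset.univ x))) (fun _ _ => Nat.zero_le _)
      (a := ![n, 0, 0]) (by
        rw [Finset.mem_filter, hm]
        simp [Finset.Nat.mem_antidiagonalTuple, Fin.sum_univ_three])
    beta_reduce at this
    rw [hm, ← hS] at this
    omega
  have h2 := Tri.T1_dvd n n
  have h3 := Tri.main_iff n n (Nat.lt_pow_self (by norm_num))
  rw [← h1, Tri.pow_dvd_nat, padicValNat_dvd_iff_le hS0] at h2 h3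
  refine ⟨h2, ?_⟩
  rw [or_iff_right hn.ne'] at h3
  refine Iff.trans ?_ h3
  omega
end

section
/- Let p be a prime number and let k and n be positive integers. Let S be the sum of all kp-nomial coefficients with n at the top which are not divisible by p, i.e., S = ∑ over all (x₁, …, x_{kp}) of nonnegative integers with x₁+⋯+x_{kp} = n and p ∤ n!/(x₁!⋯x_{kp}!), of n!/(x₁!⋯x_{kp}!). Then ν_p(S) ≥ s_p*(n) + ν_p(k), where s_p*(n) is the number of nonzero digits in the expansion of n in base p. -/
/-- `spstar p n` is the number of nonzero digits in the base-`p` expansion of `n`. -/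
def spstar (p n : ℕ) : ℕ := ((Nat.digits p n).filter (fun a => a ≠ 0)).length

namespace Stmt16

open Finset

/-- product of the integers `1..y` prime to `p` -/
def F (p y : ℕ) : ℕ := ∏ i ∈ range y, (if p ∣ i + 1 then 1 else i + 1)

theorem F_succ (p y : ℕ) : F p (y + 1) = F p y * (if p ∣ y + 1 then 1 else y + 1) := by
  unfold F; rw [prod_range_succ]

theorem F_coprime {p : ℕ} (hp : p.Prime) (y : ℕ) : ¬ p ∣ F p y := by
  unfold F
  rw [hp.prime.dvd_finsetProd_iff]
  rintro ⟨i, -, hi⟩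
  split_ifs at hi with h
  · exact hp.one_lt.ne' (Nat.dvd_one.mp hi)
  · exact h hi

theorem factorial_eq {p : ℕ} (hp : p.Prime) (y : ℕ) :
    y.factorial = p ^ (y / p) * (y / p).factorial * F p y := by
  induction y with
  | zero => simp [F]
  | succ y ih =>
    rw [Nat.factorial_succ, F_succ, Nat.succ_div]
    split_ifs with h
    · have h2 : y + 1 = p * (y / p + 1) := by
        have := Nat.succ_div_of_dvd h
        rw [← this, Nat.mul_div_cancel' h]
      rw [Nat.factorial_succ, ih, mul_one, h2, pow_succ]
      generalize hq : y / p = q at *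
      have h3 : (p * (q + 1) - 1 + 1) = p * (q + 1) := by
        have := Nat.mul_pos hp.pos (Nat.succ_pos q)
        omega
      ring
    · rw [ih, add_zero]; ring

theorem F_add_modEq {p : ℕ} (t v : ℕ) (ht : t ≠ 0) :
    F p (p ^ t + v) ≡ F p (p ^ t) * F p v [MOD p ^ t] := by
  unfold F
  rw [prod_range_add]
  refine Nat.ModEq.mul_left _ ?_
  refine Nat.ModEq.prod fun i _ => ?_
  have h : p ∣ p ^ t + i + 1 ↔ p ∣ i + 1 := by
    rw [add_assoc]; exact Nat.dvd_add_right (dvd_pow_self p ht)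
  by_cases hi : p ∣ i + 1
  · rw [if_pos (h.2 hi), if_pos hi]
  · rw [if_neg (fun h' => hi (h.1 h')), if_neg hi]
    simp [Nat.ModEq, add_assoc]

theorem F_modEq {p : ℕ} (t q v : ℕ) :
    F p (v + p ^ t * q) ≡ F p (p ^ t) ^ q * F p v [MOD p ^ t] := by
  rcases Nat.eq_zero_or_pos t with rfl | ht
  · simp [Nat.modEq_one]
  induction q with
  | zero => simp; rfl
  | succ q ih =>
    have : v + p ^ t * (q + 1) = p ^ t + (v + p ^ t * q) := by ring
    rw [this]
    refine (F_add_modEq t _ ht.ne').trans ?_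
    refine (Nat.ModEq.mul_left _ ih).trans ?_
    rw [pow_succ', mul_assoc]

variable {ι : Type} [Fintype ι] [DecidableEq ι]

theorem prodF_modEq {p : ℕ} (hp : p.Prime) (t : ℕ) (x y : ι → ℕ) (hs : ∑ j, x j = ∑ j, y j)
    (h : ∀ j, x j ≡ y j [MOD p ^ t]) :
    ∏ j, F p (x j) ≡ ∏ j, F p (y j) [MOD p ^ t] := by
  have key : ∀ x : ι → ℕ, ∏ j, F p (x j) ≡
      F p (p ^ t) ^ (∑ j, x j / p ^ t) * ∏ j, F p (x j % p ^ t) [MOD p ^ t] := by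
    intro x
    rw [← prod_pow_eq_pow_sum, ← prod_mul_distrib]
    refine Nat.ModEq.prod fun j _ => ?_
    have := F_modEq (p := p) t (x j / p ^ t) (x j % p ^ t)
    rwa [Nat.mod_add_div] at this
  have h1 : ∀ j, x j % p ^ t = y j % p ^ t := h
  have h2 : ∑ j, x j / p ^ t = ∑ j, y j / p ^ t := by
    have e : ∀ x : ι → ℕ, ∑ j, x j = ∑ j, x j % p ^ t + p ^ t * ∑ j, x j / p ^ t := by
      intro x
      rw [mul_sum, ← sum_add_distrib]
      exact sum_congr rfl fun j _ => (Nat.mod_add_div _ _).symm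
    rw [e x, e y] at hs
    simp only [h1] at hs
    exact Nat.eq_of_mul_eq_mul_left (pow_pos hp.pos t) (Nat.add_left_cancel hs)
  refine (key x).trans ?_
  rw [h2]; simp only [h1]
  exact (key y).symm

theorem multinomial_eq (x : ι → ℕ) :
    (∏ j, (x j).factorial) * Nat.multinomial univ x = (∑ j, x j).factorial :=
  Nat.multinomial_spec _ _

/-- key recursion for multinomial coefficients -/
theorem multinomial_rec {p : ℕ} (hp : p.Prime) (x : ι → ℕ)
    (h : ∑ j, x j / p = (∑ j, x j) / p) :
    Nat.multinomial univ x * ∏ j, F p (x j)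
      = F p (∑ j, x j) * Nat.multinomial univ (fun j => x j / p) := by
  have h1 := multinomial_eq x
  have h2 := multinomial_eq (fun j => x j / p)
  rw [factorial_eq hp (∑ j, x j), ← h, ← h2] at h1
  have h3 : ∏ j, (x j).factorial =
      p ^ (∑ j, x j / p) * (∏ j, (x j / p).factorial) * ∏ j, F p (x j) := by
    rw [← prod_pow_eq_pow_sum, ← prod_mul_distrib, ← prod_mul_distrib]
    exact prod_congr rfl fun j _ => factorial_eq hp _
  rw [h3] at h1
  have hpos : 0 < p ^ (∑ j, x j / p) * (∏ j, (x j / p).factorial) :=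
    Nat.mul_pos (pow_pos hp.pos _) (prod_pos fun j _ => Nat.factorial_pos _)
  apply Nat.eq_of_mul_eq_mul_left hpos
  linarith

theorem carry_dvd {p : ℕ} (hp : p.Prime) (x : ι → ℕ)
    (h : ∑ j, x j / p < (∑ j, x j) / p) : p ∣ Nat.multinomial univ x := by
  have h1 := multinomial_eq x
  rw [factorial_eq hp (∑ j, x j)] at h1
  have h3 : ∏ j, (x j).factorial =
      p ^ (∑ j, x j / p) * (∏ j, (x j / p).factorial) * ∏ j, F p (x j) := by
    rw [← prod_pow_eq_pow_sum, ← prod_mul_distrib, ← prod_mul_distrib]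
    exact prod_congr rfl fun j _ => factorial_eq hp _
  obtain ⟨c, hc⟩ : ∃ c, (∑ j, x j) / p = ∑ j, x j / p + (c + 1) :=
    ⟨(∑ j, x j) / p - ∑ j, x j / p - 1, by omega⟩
  obtain ⟨w, hw⟩ : (∏ j, (x j / p).factorial) ∣ ((∑ j, x j) / p).factorial :=
    (Nat.prod_factorial_dvd_factorial_sum univ (fun j => x j / p)).trans
      (Nat.factorial_dvd_factorial h.le)
  rw [hw, h3, hc] at h1
  have hpos : 0 < p ^ (∑ j, x j / p) * (∏ j, (x j / p).factorial) :=
    Nat.mul_pos (pow_pos hp.pos _) (prod_pos fun j _ => Nat.factorial_pos _)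
  have h4 : (∏ j, F p (x j)) * Nat.multinomial univ x = p * (p ^ c * w * F p (∑ j, x j)) := by
    apply Nat.eq_of_mul_eq_mul_left hpos
    rw [pow_add, pow_succ] at h1
    linarith
  rcases (Nat.Prime.dvd_mul hp).1 (Dvd.intro _ h4.symm) with h5 | h5
  · rw [hp.prime.dvd_finsetProd_iff] at h5
    obtain ⟨j, -, hj⟩ := h5
    exact absurd hj (F_coprime hp _)
  · exact h5

/-- recursive form of the sum -/
def T (p : ℕ) (ι : Type) [Fintype ι] [DecidableEq ι] {R : Type} [CommRing R] :
    List ℕ → ((ι → ℕ) → R) → R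
  | [], f => f 0
  | d :: l, f => T p ι l (fun x => ∑ a ∈ piAntidiag univ d, f (a + p • x))

theorem mem_pi (d : ℕ) (a : ι → ℕ) : a ∈ piAntidiag univ d ↔ ∑ j, a j = d := by
  simp [mem_piAntidiag]

theorem le_of_mem {d : ℕ} {a : ι → ℕ} (ha : a ∈ piAntidiag univ d) (j : ι) : a j ≤ d := by
  rw [mem_pi] at ha
  rw [← ha]; exact single_le_sum (f := a) (fun _ _ => Nat.zero_le _) (mem_univ j)

theorem T_eq {p : ℕ} (hp : p.Prime) {R : Type} [CommRing R] (l : List ℕ) (hl : ∀ d ∈ l, d < p)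
    (f : (ι → ℕ) → R) :
    T p ι l f = ∑ x ∈ (piAntidiag univ (Nat.ofDigits p l)).filter
      (fun x => ¬ p ∣ Nat.multinomial univ x), f x := by
  induction l generalizing f with
  | nil =>
    have : (piAntidiag (univ : Finset ι) (Nat.ofDigits p [])).filter
      (fun x => ¬ p ∣ Nat.multinomial univ x) = {0} := by
      ext x
      simp only [mem_filter, mem_pi, mem_singleton, Nat.ofDigits_nil]
      constructor
      · rintro ⟨h, -⟩
        ext j
        simpa using (sum_eq_zero_iff.1 h) j (mem_univ j)
      · rintro rfl
        refine ⟨by simp, ?_⟩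
        have : Nat.multinomial (univ : Finset ι) 0 = 1 := by simp [Nat.multinomial]
        rw [this]; exact fun h => hp.one_lt.ne' (Nat.dvd_one.mp h)
    rw [this, sum_singleton]; rfl
  | cons d l ih =>
    have hd : d < p := hl d (by simp)
    rw [T, ih (fun d hd => hl d (by simp [hd])), sum_sigma']
    refine sum_bij' (fun s _ => s.2 + p • s.1) (fun x _ => ⟨fun j => x j / p, fun j => x j % p⟩)
      ?_ ?_ ?_ ?_ ?_
    · rintro ⟨x, a⟩ h
      simp only [mem_sigma, mem_filter, mem_pi, Nat.ofDigits_cons] at h ⊢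
      obtain ⟨⟨hx, hV⟩, ha⟩ := h
      have hle := fun j => le_of_mem ((mem_pi d a).2 ha) j
      have hs : ∑ j, (a + p • x) j = d + p * Nat.ofDigits p l := by
        simp [sum_add_distrib, ← mul_sum, ha, hx]
      have hdiv : ∀ j, (a + p • x) j / p = x j := by
        intro j
        simp [Nat.add_mul_div_left _ _ hp.pos, Nat.div_eq_of_lt ((hle j).trans_lt hd)]
      refine ⟨by simpa using hs, fun hdv => ?_⟩
      have := multinomial_rec hp (a + p • x) (by
        rw [hs, Nat.add_mul_div_left _ _ hp.pos, Nat.div_eq_of_lt hd, zero_add]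
        simp only [hdiv]; exact hx)
      simp only [hdiv] at this
      have h2 := this ▸ (Dvd.dvd.mul_right hdv (∏ j, F p ((a + p • x) j)))
      rcases (Nat.Prime.dvd_mul hp).1 h2 with h3 | h3
      · exact F_coprime hp _ h3
      · exact hV h3
    · intro x h
      simp only [mem_sigma, mem_filter, mem_pi, Nat.ofDigits_cons] at h ⊢
      obtain ⟨hx, hV⟩ := h
      have e : ∑ j, x j = ∑ j, x j % p + p * ∑ j, x j / p := by
        rw [mul_sum, ← sum_add_distrib]
        exact sum_congr rfl fun j _ => (Nat.mod_add_div _ _).symm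
      have hx' : ∑ j, x j = d + p * Nat.ofDigits p l := by simpa using hx
      have hdv : (∑ j, x j) / p = Nat.ofDigits p l := by
        rw [hx', Nat.add_mul_div_left _ _ hp.pos, Nat.div_eq_of_lt hd, zero_add]
      have hle : ∑ j, x j / p ≤ (∑ j, x j) / p := by
        rw [Nat.le_div_iff_mul_le hp.pos, mul_comm]; omega
      have heq : ∑ j, x j / p = (∑ j, x j) / p := by
        rcases hle.lt_or_eq with h | h
        · exact absurd (carry_dvd hp x h) hV
        · exact h
      refine ⟨⟨heq.trans hdv, fun hdd => ?_⟩, ?_⟩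
      · have := multinomial_rec hp x heq
        have h2 := this ▸ (Dvd.dvd.mul_left hdd (F p (∑ j, x j)))
        rcases (Nat.Prime.dvd_mul hp).1 h2 with h3 | h3
        · exact hV h3
        · rw [hp.prime.dvd_finsetProd_iff] at h3
          obtain ⟨j, -, hj⟩ := h3
          exact F_coprime hp _ hj
      · rw [heq, hdv, hx'] at e
        omega
    · rintro ⟨x, a⟩ h
      simp only [mem_sigma, mem_filter, mem_pi] at h
      have hle := fun j => (le_of_mem ((mem_pi d a).2 h.2) j).trans_lt hd
      have h1 : (fun j => (a + p • x) j / p) = x := by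
        ext j; simp [Nat.add_mul_div_left _ _ hp.pos, Nat.div_eq_of_lt (hle j)]
      have h2 : (fun j => (a + p • x) j % p) = a := by
        ext j; simp [Nat.mod_eq_of_lt (hle j)]
      simp only [h1, h2]
    · intro x h
      ext j; simp [Nat.mod_add_div]
    · rintro ⟨x, a⟩ h; rfl

/-- mixed differences of `f` are divisible by high powers of `p` -/
def E (p : ℕ) (ι : Type) [Fintype ι] [DecidableEq ι] {R : Type} [CommRing R] :
    List ℕ → ℕ → ((ι → ℕ) → R) → Prop
  | [], t, f => (p : R) ^ t ∣ f 0
  | d :: l, t, f => ∀ a ∈ piAntidiag (univ : Finset ι) d,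
      E p ι l t (fun x => f (a + p • x)) ∧
      ∀ τ : Equiv.Perm ι, E p ι l (t + 1) (fun x => f (a + p • (x ∘ τ)) - f (a + p • x))

section
variable {p : ℕ} {R : Type} [CommRing R]

theorem E_congr (l : List ℕ) (t : ℕ) (f g : (ι → ℕ) → R)
    (h : ∀ x, ∑ j, x j = Nat.ofDigits p l → f x = g x) (hf : E p ι l t f) : E p ι l t g := by
  induction l generalizing t f g with
  | nil => rw [E] at *; rw [← h 0 (by simp)]; exact hf
  | cons d l ih =>
    intro a ha
    have hs : ∀ x : ι → ℕ, ∑ j, x j = Nat.ofDigits p l →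
        f (a + p • x) = g (a + p • x) := by
      intro x hx
      apply h
      rw [mem_pi] at ha
      simp [sum_add_distrib, ← mul_sum, ha, hx, Nat.ofDigits_cons]
    refine ⟨ih _ _ _ hs (hf a ha).1, fun τ => ih _ _ _ ?_ ((hf a ha).2 τ)⟩
    intro x hx
    have hx' : ∑ j, (x ∘ τ) j = Nat.ofDigits p l := by
      rw [← hx]; exact Equiv.sum_comp τ x
    simp only [hs x hx, hs _ hx']

theorem E_add (l : List ℕ) (t : ℕ) (f g : (ι → ℕ) → R)
    (hf : E p ι l t f) (hg : E p ι l t g) : E p ι l t (fun x => f x + g x) := by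
  induction l generalizing t f g with
  | nil => exact dvd_add hf hg
  | cons d l ih =>
    intro a ha
    refine ⟨ih _ _ _ (hf a ha).1 (hg a ha).1, fun τ => ?_⟩
    convert ih _ _ _ ((hf a ha).2 τ) ((hg a ha).2 τ) using 2
    ring

theorem E_zero (l : List ℕ) (t : ℕ) : E p ι l t (fun _ => (0 : R)) := by
  induction l generalizing t with
  | nil => exact dvd_zero _
  | cons d l ih =>
    intro a ha
    refine ⟨ih _, fun τ => ?_⟩
    convert ih (t + 1) using 2
    ring

theorem E_sum {κ : Type} (s : Finset κ) (l : List ℕ) (t : ℕ) (f : κ → (ι → ℕ) → R)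
    (hf : ∀ i ∈ s, E p ι l t (f i)) : E p ι l t (fun x => ∑ i ∈ s, f i x) := by
  classical
  induction s using Finset.induction_on with
  | empty => simpa using E_zero l t
  | insert i s hi ih =>
    simp only [sum_insert hi]
    exact E_add _ _ _ _ (hf i (by simp)) (ih fun i hi => hf i (by simp [hi]))

theorem E_mono (l : List ℕ) (t : ℕ) (f : (ι → ℕ) → R)
    (hf : E p ι l (t + 1) f) : E p ι l t f := by
  induction l generalizing t f with
  | nil => exact (pow_dvd_pow _ (Nat.le_succ t)).trans hf
  | cons d l ih =>
    intro a ha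
    exact ⟨ih _ _ (hf a ha).1, fun τ => ih _ _ ((hf a ha).2 τ)⟩

theorem E_const_mul (l : List ℕ) (t s : ℕ) (c : R) (hc : (p : R) ^ s ∣ c) (f : (ι → ℕ) → R)
    (hf : E p ι l t f) : E p ι l (t + s) (fun x => c * f x) := by
  induction l generalizing t f with
  | nil => 
    have : (p : R) ^ t ∣ f 0 := hf
    show (p : R) ^ (t + s) ∣ c * f 0
    rw [add_comm, pow_add]; exact mul_dvd_mul hc hf
  | cons d l ih =>
    intro a ha
    refine ⟨ih _ _ (hf a ha).1, fun τ => ?_⟩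
    convert ih _ _ ((hf a ha).2 τ) using 1
    · ring
    · ext x; ring

theorem perm_mem {d : ℕ} {a : ι → ℕ} (ha : a ∈ piAntidiag univ d) (τ : Equiv.Perm ι) :
    a ∘ τ ∈ piAntidiag univ d := by
  rw [mem_pi] at *
  rw [← ha]; exact Equiv.sum_comp τ a

theorem comp_add (a x : ι → ℕ) (τ : Equiv.Perm ι) :
    (a + p • x) ∘ τ = a ∘ τ + p • (x ∘ τ) := rfl

theorem E_comp (l : List ℕ) (t : ℕ) (f : (ι → ℕ) → R) (τ : Equiv.Perm ι)
    (hf : E p ι l t f) : E p ι l t (fun x => f (x ∘ τ)) := by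
  induction l generalizing t f with
  | nil => exact hf
  | cons d l ih =>
    intro a ha
    have h := hf _ (perm_mem ha τ)
    refine ⟨ih _ _ h.1, fun ρ => ?_⟩
    have h2 := ih _ _ (h.2 (τ⁻¹ * ρ * τ))
    have e : ∀ x : ι → ℕ, (x ∘ τ) ∘ (τ⁻¹ * ρ * τ : Equiv.Perm ι) = (x ∘ ρ) ∘ τ := by
      intro x; ext j; simp
    simp only [e] at h2
    exact h2

theorem E_mul (l : List ℕ) (t s : ℕ) (f g : (ι → ℕ) → R)
    (hf : E p ι l t f) (hg : E p ι l s g) : E p ι l (t + s) (fun x => f x * g x) := by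
  induction l generalizing t s f g with
  | nil => 
    show (p : R) ^ (t + s) ∣ f 0 * g 0
    rw [pow_add]; exact mul_dvd_mul hf hg
  | cons d l ih =>
    intro a ha
    refine ⟨ih _ _ _ _ (hf a ha).1 (hg a ha).1, fun τ => ?_⟩
    have h1 := ih _ _ _ _ ((hf a ha).2 τ) (E_comp _ _ _ τ (hg a ha).1)
    have h2 := ih _ _ _ _ (hf a ha).1 ((hg a ha).2 τ)
    rw [show t + 1 + s = t + s + 1 by ring] at h1
    rw [show t + (s + 1) = t + s + 1 by ring] at h2
    convert E_add _ _ _ _ h1 h2 using 2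
    ring

/-- strong continuity condition -/
def K (p N r : ℕ) (q : (ι → ℕ) → R) : Prop :=
  ∀ t (x y : ι → ℕ), ∑ j, x j = N → ∑ j, y j = N → (∀ j, x j ≡ y j [MOD p ^ t]) →
    (p : R) ^ (r + t) ∣ q x - q y

theorem K_step (d N r : ℕ) (q : (ι → ℕ) → R) (h : K p (d + p * N) r q) (a : ι → ℕ)
    (ha : a ∈ piAntidiag univ d) : K p N (r + 1) (fun x => q (a + p • x)) := by
  intro t x y hx hy hxy
  rw [mem_pi] at ha
  rw [show r + 1 + t = r + (t + 1) by ring]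
  refine h (t + 1) _ _ ?_ ?_ ?_
  · simp [sum_add_distrib, ← mul_sum, ha, hx]
  · simp [sum_add_distrib, ← mul_sum, ha, hy]
  · intro j
    simp only [Pi.add_apply, Pi.smul_apply, smul_eq_mul]
    rw [pow_succ']
    exact Nat.ModEq.add_left _ (Nat.ModEq.mul_left' p (hxy j))

theorem K_diff (N r : ℕ) (q : (ι → ℕ) → R) (h : K p N r q) (τ : Equiv.Perm ι) :
    K p N r (fun x => q (x ∘ τ) - q x) := by
  intro t x y hx hy hxy
  have e : q (x ∘ τ) - q x - (q (y ∘ τ) - q y) = (q (x ∘ τ) - q (y ∘ τ)) - (q x - q y) := by ring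
  rw [e]
  refine dvd_sub (h t _ _ ?_ ?_ fun j => hxy _) (h t _ _ hx hy hxy)
  · rw [← hx]; exact Equiv.sum_comp τ x
  · rw [← hy]; exact Equiv.sum_comp τ y

theorem K_dvd (N r : ℕ) (q : (ι → ℕ) → R) (h : K p N r q) (τ : Equiv.Perm ι) (x : ι → ℕ)
    (hx : ∑ j, x j = N) : (p : R) ^ r ∣ q (x ∘ τ) - q x := by
  refine h 0 _ _ ?_ hx fun j => by simp [Nat.modEq_one]
  rw [← hx]; exact Equiv.sum_comp τ x

theorem K_mono (N r : ℕ) (q : (ι → ℕ) → R) (h : K p N (r + 1) q) : K p N r q :=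
  fun t x y hx hy hxy => (pow_dvd_pow _ (by omega)).trans (h t x y hx hy hxy)

theorem E_of_K (l : List ℕ) (r : ℕ) (q : (ι → ℕ) → R) (h : K p (Nat.ofDigits p l) r q)
    (hq : ∀ x : ι → ℕ, ∑ j, x j = Nat.ofDigits p l → (p : R) ^ r ∣ q x) : E p ι l r q := by
  induction l generalizing r q with
  | nil => exact hq 0 (by simp)
  | cons d l ih =>
    intro a ha
    rw [Nat.ofDigits_cons] at h hq
    have h1 := K_step d _ r q (by simpa using h) a ha
    refine ⟨ih _ _ (K_mono _ _ _ h1) ?_, fun τ => ih _ _ (K_diff _ _ _ h1 τ)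
      fun x hx => K_dvd _ _ _ h1 τ x hx⟩
    intro x hx
    apply hq
    rw [mem_pi] at ha
    simp [sum_add_distrib, ← mul_sum, ha, hx]

/-- `V` satisfies the difference conditions. -/
theorem E_V (hp : p.Prime) (H : ℕ → R) (hH : ∀ y, (F p y : R) * H y = 1)
    (l : List ℕ) (hl : ∀ d ∈ l, d < p) :
    E p ι l 0 (fun x => ((Nat.multinomial univ x : ℕ) : R)) := by
  have hPH : ∀ x : ι → ℕ, (∏ j, (F p (x j) : R)) * ∏ j, H (x j) = 1 := by
    intro x; rw [← prod_mul_distrib]; exact prod_eq_one fun j _ => hH _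
  have hK : ∀ N, K p N 0 (fun x : ι → ℕ => ∏ j, H (x j)) := by
    intro N t x y hx hy hxy
    have h1 := prodF_modEq hp t x y (hx.trans hy.symm) hxy
    have h2 : (p : R) ^ t ∣ (∏ j, (F p (y j) : R)) - ∏ j, (F p (x j) : R) := by
      have := (Nat.modEq_iff_dvd.1 h1)
      have := map_dvd (Int.castRingHom R) this
      simpa using this
    have h3 : ∏ j, H (x j) - ∏ j, H (y j) = (∏ j, H (x j)) * (∏ j, H (y j)) *
        ((∏ j, (F p (y j) : R)) - ∏ j, (F p (x j) : R)) := by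
      linear_combination (∏ j, H (y j)) * hPH x - (∏ j, H (x j)) * hPH y
    rw [zero_add, h3]
    exact Dvd.dvd.mul_left h2 _
  induction l with
  | nil => simp [E]
  | cons d l ih =>
    intro a ha
    have hd : d < p := hl d (by simp)
    have ih := ih (fun d hd => hl d (by simp [hd]))
    have hle := fun j => (le_of_mem ha j).trans_lt hd
    have h1 := K_step d (Nat.ofDigits p l) 0 _ (hK _) a ha
    have hV : ∀ x : ι → ℕ, ∑ j, x j = Nat.ofDigits p l →
        ((Nat.multinomial univ (a + p • x) : ℕ) : R) =
        (F p (d + p * Nat.ofDigits p l) : R) *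
          ((Nat.multinomial univ x : ℕ) * ∏ j, H ((a + p • x) j)) := by
      intro x hx
      have hs : ∑ j, (a + p • x) j = d + p * Nat.ofDigits p l := by
        rw [mem_pi] at ha
        simp [sum_add_distrib, ← mul_sum, ha, hx]
      have hdiv : ∀ j, (a + p • x) j / p = x j := by
        intro j
        simp [Nat.add_mul_div_left _ _ hp.pos, Nat.div_eq_of_lt (hle j)]
      have := multinomial_rec hp (a + p • x) (by
        rw [hs, Nat.add_mul_div_left _ _ hp.pos, Nat.div_eq_of_lt hd, zero_add]
        simp only [hdiv]; exact hx)
      simp only [hdiv, hs] at this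
      have := congrArg (Nat.cast (R := R)) this
      push_cast at this
      have h4 := hPH (a + p • x)
      linear_combination (∏ j, H ((a + p • x) j)) * this
        - ((Nat.multinomial univ (a + p • x) : ℕ) : R) * h4
    constructor
    · refine E_congr _ _ _ _ (fun x hx => (hV x hx).symm) ?_
      exact E_const_mul l 0 0 _ (by simp) _
        (E_mul l 0 0 _ _ ih (E_of_K _ _ _ (K_mono _ _ _ h1) (by simp)))
    · intro τ
      have hm : ∀ x : ι → ℕ, Nat.multinomial univ (x ∘ τ) = Nat.multinomial univ x := by
        intro x
        unfold Nat.multinomial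
        simp only [Function.comp]
        rw [Equiv.sum_comp τ x, Equiv.prod_comp τ (fun j => (x j).factorial)]
      have h5 := E_const_mul l (0 + 1) 0 (F p (d + p * Nat.ofDigits p l) : R) (by simp) _
        (E_mul l 0 (0 + 1) _ _ ih
          (E_of_K _ _ _ (K_diff _ _ _ h1 τ) (fun x hx => K_dvd _ _ _ h1 τ x hx)))
      refine E_congr _ _ _ _ ?_ h5
      intro x hx
      have hx' : ∑ j, (x ∘ τ) j = Nat.ofDigits p l := by
        rw [← hx]; exact Equiv.sum_comp τ x
      simp only [hV x hx, hV _ hx', hm]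
      ring

theorem T_const_mul (l : List ℕ) (c : R) (f : (ι → ℕ) → R) :
    T p ι l (fun x => c * f x) = c * T p ι l f := by
  induction l generalizing f with
  | nil => rfl
  | cons d l ih =>
    simp only [T, ← mul_sum]
    exact ih _

end

theorem sum_perm {R : Type} [CommRing R] (d : ℕ) (τ : Equiv.Perm ι) (g : (ι → ℕ) → R) :
    ∑ a ∈ piAntidiag univ d, g (a ∘ τ) = ∑ a ∈ piAntidiag univ d, g a := by
  refine sum_bij' (fun a _ => a ∘ τ) (fun a _ => a ∘ τ.symm) (fun a ha => perm_mem ha _)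
    (fun a ha => perm_mem ha _) ?_ ?_ ?_
  · intro a _; ext j; simp
  · intro a _; ext j; simp
  · intro a _; rfl

/-- averaging trick -/
theorem avg {p : ℕ} {R : Type} [CommRing R] (d : ℕ) (i : ι) (f : (ι → ℕ) → R)
    (hf : ∀ (τ : Equiv.Perm ι) x, f (x ∘ τ) = f x) (x : ι → ℕ) :
    (d : R) * ∑ a ∈ piAntidiag univ d, f (a + p • x) =
      ∑ a ∈ piAntidiag univ d, (a i : R) * ∑ j, f (a + p • (x ∘ Equiv.swap i j)) := by
  have h1 : (d : R) * ∑ a ∈ piAntidiag univ d, f (a + p • x) =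
      ∑ j, ∑ a ∈ piAntidiag univ d, (a j : R) * f (a + p • x) := by
    rw [sum_comm, mul_sum]
    refine sum_congr rfl fun a ha => ?_
    rw [← sum_mul]
    rw [mem_pi] at ha
    rw [← ha]; push_cast; rfl
  rw [h1]
  simp only [mul_sum]
  rw [sum_comm (s := piAntidiag univ d)]
  refine sum_congr rfl fun j _ => ?_
  rw [← sum_perm d (Equiv.swap i j)]
  refine sum_congr rfl fun a _ => ?_
  rw [← hf (Equiv.swap i j) (a + p • (x ∘ Equiv.swap i j))]
  have : (a + p • (x ∘ Equiv.swap i j)) ∘ Equiv.swap i j = a ∘ Equiv.swap i j + p • x := by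
    ext j; simp
  rw [this]; simp

theorem main {p : ℕ} {R : Type} [CommRing R] (i : ι)
    (hu : ∀ d, d ≠ 0 → d < p → IsUnit (d : R)) (e : ℕ)
    (hm : (p : R) ^ (e + 1) ∣ (Fintype.card ι : R))
    (l : List ℕ) (hl : ∀ d ∈ l, d < p) (hne : l ≠ []) (hlast : l.getLast hne ≠ 0)
    (t : ℕ) (f : (ι → ℕ) → R) (hf : ∀ (τ : Equiv.Perm ι) x, f (x ∘ τ) = f x)
    (hE : E p ι l t f) :
    (p : R) ^ (t + (l.filter (fun a => a ≠ 0)).length + e) ∣ T p ι l f := by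
  induction l generalizing t f with
  | nil => exact absurd rfl hne
  | cons d l ih =>
    have hd : d < p := hl d (by simp)
    rcases l with _ | ⟨d', l'⟩
    · have hd0 : d ≠ 0 := by simpa using hlast
      have h1 := avg (p := p) d i f hf 0
      have h2 : T p ι [d] f = ∑ a ∈ piAntidiag univ d, f (a + p • 0) := rfl
      rw [← h2] at h1
      rw [← (hu d hd0 hd).dvd_mul_left, h1]
      refine dvd_sum fun a ha => Dvd.dvd.mul_left ?_ _
      have h3 : (p : R) ^ t ∣ f (a + p • 0) := (hE a ha).1
      have h4 : ∀ j, (0 : ι → ℕ) ∘ Equiv.swap i j = 0 := fun j => rfl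
      simp only [h4, sum_const, card_univ, nsmul_eq_mul]
      have : t + (List.filter (fun a => decide (a ≠ 0)) [d]).length + e = (e + 1) + t := by
        simp [hd0]; ring
      rw [this, pow_add]
      exact mul_dvd_mul hm h3
    · set l := d' :: l' with hldef
      have hne' : l ≠ [] := by simp [hldef]
      have hlast' : l.getLast hne' ≠ 0 := by
        rwa [List.getLast_cons hne'] at hlast
      have hl' : ∀ d ∈ l, d < p := fun d hd => hl d (List.mem_cons_of_mem _ hd)
      have hg : ∀ (τ : Equiv.Perm ι) (x : ι → ℕ),
          ∑ a ∈ piAntidiag univ d, f (a + p • (x ∘ τ)) =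
          ∑ a ∈ piAntidiag univ d, f (a + p • x) := by
        intro τ x
        rw [← sum_perm d τ]
        exact sum_congr rfl fun a _ => hf τ (a + p • x)
      by_cases hd0 : d = 0
      · have h1 := ih hl' hne' hlast' t (fun x => ∑ a ∈ piAntidiag univ d, f (a + p • x)) hg
          (E_sum _ _ _ _ fun a ha => (hE a ha).1)
        have : (List.filter (fun a => decide (a ≠ 0)) (d :: l)) =
          List.filter (fun a => decide (a ≠ 0)) l := by simp [hd0]
        rw [this]; exact h1
      · have h1 := ih hl' hne' hlast' (t + 1)
          (fun x => (d : R) * ∑ a ∈ piAntidiag univ d, f (a + p • x))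
          (fun τ x => by rw [hg]) (by
            simp only [avg (p := p) d i f hf]
            refine E_sum _ _ _ _ fun a ha => ?_
            refine E_const_mul l (t + 1) 0 _ (by simp) _ ?_
            have h2 := E_sum (univ : Finset ι) l (t + 1) _
              (fun j _ => (hE a ha).2 (Equiv.swap i j))
            have h3 := E_const_mul l t 1 (Fintype.card ι : R)
              ((pow_dvd_pow _ (by omega)).trans hm) _ (hE a ha).1
            convert E_add _ _ _ _ h2 h3 using 2
            simp)
        rw [T_const_mul, (hu d hd0 hd).dvd_mul_left] at h1
        have : t + (List.filter (fun a => decide (a ≠ 0)) (d :: l)).length + e =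
          t + 1 + (List.filter (fun a => decide (a ≠ 0)) l).length + e := by
          simp [hd0]; ring
        rw [this]; exact h1

end Stmt16

open Stmt16

theorem stmt_16 (p k n : ℕ) (hp : p.Prime) (hk : 0 < k) (hn : 0 < n)
    (S : ℕ)
    (hS : S = ∑ x ∈ (Finset.Nat.antidiagonalTuple (k * p) n).filter
        (fun x => ¬ (p ∣ Nat.multinomial Finset.univ x)),
      Nat.multinomial Finset.univ x) :
    spstar p n + padicValNat p k ≤ padicValNat p S := by
  have : Fact p.Prime := ⟨hp⟩
  have hkp : 0 < k * p := Nat.mul_pos hk hp.pos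
  have hset : Finset.Nat.antidiagonalTuple (k * p) n = Finset.piAntidiag Finset.univ n := by
    ext x; simp [Finset.Nat.mem_antidiagonalTuple, Finset.mem_piAntidiag]
  rw [hset] at hS
  have hunit : ∀ d : ℕ, ¬ p ∣ d → IsUnit (d : ℤ_[p]) := by
    intro d hd
    rw [PadicInt.isUnit_iff]
    by_contra h
    have := lt_of_le_of_ne (PadicInt.norm_le_one (d : ℤ_[p])) h
    rw [← Int.cast_natCast, PadicInt.norm_int_lt_one_iff_dvd] at this
    exact hd (by exact_mod_cast this)
  have hlt : ∀ d ∈ Nat.digits p n, d < p := fun d hd => Nat.digits_lt_base hp.one_lt hd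
  have hS0 : S ≠ 0 := by
    rw [hS]
    apply ne_of_gt
    refine Finset.sum_pos' (fun _ _ => Nat.zero_le _) ⟨Pi.single ⟨0, hkp⟩ n, ?_, ?_⟩
    · have h1 : Nat.multinomial Finset.univ (Pi.single (⟨0, hkp⟩ : Fin (k * p)) n : Fin (k * p) → ℕ) = 1 := by
        have := multinomial_eq (Pi.single (⟨0, hkp⟩ : Fin (k * p)) n : Fin (k * p) → ℕ)
        have h2 : ∏ j, ((Pi.single (⟨0, hkp⟩ : Fin (k * p)) n : Fin (k * p) → ℕ) j).factorial = n.factorial := by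
          rw [Finset.prod_eq_single (⟨0, hkp⟩ : Fin (k * p))]
          · simp
          · intro b _ hb; simp [Pi.single_eq_of_ne hb]
          · simp
        rw [h2, Finset.sum_pi_single'] at this
        simpa [Nat.factorial_ne_zero] using this
      rw [Finset.mem_filter, mem_pi, h1]
      exact ⟨by simp, fun h => hp.one_lt.ne' (Nat.dvd_one.mp h)⟩
    · exact Nat.multinomial_pos _ _
  rw [← padicValNat_dvd_iff_le hS0]
  choose H hH using fun y => (hunit (F p y) (F_coprime hp y)).exists_right_inv
  have hEV := E_V (ι := Fin (k * p)) hp H hH (Nat.digits p n) hlt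
  have hne : Nat.digits p n ≠ [] := Nat.digits_ne_nil_iff_ne_zero.2 hn.ne'
  have key := main (p := p) (⟨0, hkp⟩ : Fin (k * p))
    (fun d h0 hd => hunit d (fun h => h0 (Nat.eq_zero_of_dvd_of_lt h hd)))
    (padicValNat p k) (by
      rw [Fintype.card_fin, pow_succ]; push_cast
      refine mul_dvd_mul ?_ dvd_rfl
      exact_mod_cast Nat.cast_dvd_cast (α := ℤ_[p]) (pow_padicValNat_dvd (p := p) (n := k)))
    (Nat.digits p n) hlt hne (Nat.getLast_digit_ne_zero p hn.ne') 0
    (fun x => ((Nat.multinomial Finset.univ x : ℕ) : ℤ_[p])) (by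
      intro τ x
      have : Nat.multinomial Finset.univ (x ∘ τ) = Nat.multinomial Finset.univ x := by
        unfold Nat.multinomial
        simp only [Function.comp]
        rw [Equiv.sum_comp τ x, Equiv.prod_comp τ (fun j => (x j).factorial)]
      simp only [this]) hEV
  rw [T_eq hp _ hlt, Nat.ofDigits_digits, ← Nat.cast_sum, ← hS, zero_add] at key
  have := (PadicInt.pow_p_dvd_int_iff (p := p) _ (S : ℤ)).1 (by exact_mod_cast key)
  exact_mod_cast this
end

section
/- Let a, b, and n be positive integers and let d = a·b. Then W_d(n) = ∑_{x₁+x₂+⋯+x_b=n, xᵢ ≥ 0} ((2n)!/((2x₁)!·(2x₂)!⋯(2x_b)!)) · W_a(x₁)·W_a(x₂)⋯W_a(x_b). -/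
/-- `Wstar d n` is the number of Abelian squares: the sum over all tuples
`(x₁,…,x_d)` of nonnegative integers summing to `n` of the square of the
multinomial coefficient `n!/(x₁!⋯x_d!)`. -/
def Wstar (d n : ℕ) : ℕ :=
  ∑ x ∈ Finset.Nat.antidiagonalTuple d n, (Nat.multinomial Finset.univ x) ^ 2

/-- `W d n` is the number of `2n`-step closed walks at the origin in `ℤ^d`. -/
def W (d n : ℕ) : ℕ := Nat.choose (2 * n) n * Wstar d n
open Finset in
lemma sum_tuple_prod (f : ℕ → ℚ) (d n : ℕ) :
    ∑ x ∈ Finset.Nat.antidiagonalTuple d n, ∏ i, f (x i) =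
      PowerSeries.coeff n ((PowerSeries.mk f) ^ d) := by
  induction d generalizing n with
  | zero =>
    cases n with
    | zero => simp
    | succ n => simp [PowerSeries.coeff_one]
  | succ d ih =>
    rw [pow_succ', PowerSeries.coeff_mul]
    simp only [PowerSeries.coeff_mk, ← ih]
    simp only [Finset.mul_sum]
    rw [Finset.sum_sigma']
    refine Finset.sum_bij' (fun x _ => ⟨(x 0, ∑ i, Fin.tail x i), Fin.tail x⟩)
      (fun p _ => Fin.cons p.1.1 p.2) ?_ ?_ ?_ ?_ ?_
    · intro x hx
      simp [Finset.Nat.mem_antidiagonalTuple, Fin.sum_univ_succ] at hx ⊢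
      simpa [Fin.tail] using hx
    · rintro ⟨⟨p, q⟩, y⟩ h
      simp [Finset.Nat.mem_antidiagonalTuple, Fin.sum_univ_succ] at h ⊢
      omega
    · intro x hx
      simp
    · rintro ⟨⟨p, q⟩, y⟩ h
      simp [Finset.Nat.mem_antidiagonalTuple] at h
      obtain ⟨h1, rfl⟩ := h
      simp
    · intro x hx
      simp [Fin.prod_univ_succ, Fin.tail]

lemma multinomial_cast (d : ℕ) (x : Fin d → ℕ) :
    (Nat.multinomial Finset.univ x : ℚ) = ((∑ i, x i).factorial : ℚ) * ∏ i, ((x i).factorial : ℚ)⁻¹ := by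
  have h := Nat.multinomial_spec Finset.univ x
  have h2 : (∏ i, ((x i).factorial : ℚ)) * (Nat.multinomial Finset.univ x : ℚ)
      = ((∑ i, x i).factorial : ℚ) := by exact_mod_cast h
  have h3 : (∏ i, ((x i).factorial : ℚ)) ≠ 0 :=
    Finset.prod_ne_zero_iff.2 fun i _ => by exact_mod_cast (x i).factorial_ne_zero
  rw [← h2, Finset.prod_inv_distrib]
  field_simp

lemma W_cast (d n : ℕ) : (W d n : ℚ) = ((2 * n).factorial : ℚ) *
    PowerSeries.coeff n ((PowerSeries.mk fun k => ((k.factorial : ℚ)⁻¹) ^ 2) ^ d) := by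
  rw [← sum_tuple_prod, W, Wstar]
  have hc : ((2 * n).choose n : ℚ) * (n.factorial : ℚ) ^ 2 = ((2 * n).factorial : ℚ) := by
    have h := Nat.choose_mul_factorial_mul_factorial (show n ≤ 2 * n by omega)
    rw [show 2 * n - n = n by omega] at h
    rw [← h]; push_cast; ring
  push_cast
  rw [← hc, mul_assoc, Finset.mul_sum _ _ ((n.factorial : ℚ) ^ 2)]
  congr 1
  refine Finset.sum_congr rfl fun x hx => ?_
  rw [Finset.Nat.mem_antidiagonalTuple] at hx
  rw [multinomial_cast, hx, mul_pow, Finset.prod_pow]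

theorem stmt_17 (a b n : ℕ) (ha : 0 < a) (hb : 0 < b) (hn : 0 < n) :
    W (a * b) n =
      ∑ x ∈ Finset.Nat.antidiagonalTuple b n,
        Nat.multinomial Finset.univ (fun i => 2 * x i) * ∏ i : Fin b, W a (x i) := by
  have key : (W (a * b) n : ℚ) =
      ((∑ x ∈ Finset.Nat.antidiagonalTuple b n,
        Nat.multinomial Finset.univ (fun i => 2 * x i) * ∏ i : Fin b, W a (x i) : ℕ) : ℚ) := by
    rw [W_cast, pow_mul]
    generalize hG : (PowerSeries.mk fun k => ((k.factorial : ℚ)⁻¹) ^ 2) ^ a = G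
    have hG2 : G = PowerSeries.mk (fun k => PowerSeries.coeff k G) := by ext; simp
    rw [hG2, ← sum_tuple_prod, Finset.mul_sum]
    push_cast
    refine Finset.sum_congr rfl fun x hx => ?_
    rw [Finset.Nat.mem_antidiagonalTuple] at hx
    simp only [W_cast, hG]
    rw [multinomial_cast, ← Finset.mul_sum, hx, mul_assoc, ← Finset.prod_mul_distrib]
    congr 1
    refine Finset.prod_congr rfl fun i _ => ?_
    have : ((2 * x i).factorial : ℚ) ≠ 0 := by exact_mod_cast Nat.factorial_ne_zero _
    field_simp
  exact_mod_cast key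
end

section
/- For every nonnegative integer i and every nonnegative integer x, the odd parts of factorials satisfy Θ₂((2^i·(2x + 1))!) = Θ₂((2^{i+1}·x)!) · ∏_{j=1}^{2^i} (2^{i+1−ν₂(j)}·x + Θ₂(j)). -/
/-- `theta2 z` is the odd part of `z`, i.e. `z / 2^(ν₂ z)`. -/
def theta2 (z : ℕ) : ℕ := z / 2 ^ padicValNat 2 z

theorem theta2_odd (a m : ℕ) (hm : ¬ 2 ∣ m) : theta2 (2 ^ a * m) = m := by
  have hm0 : m ≠ 0 := by rintro rfl; simp at hm
  have h : padicValNat 2 (2 ^ a * m) = a := by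
    rw [padicValNat.mul (by positivity) hm0, padicValNat.prime_pow,
      padicValNat.eq_zero_of_not_dvd hm, add_zero]
  unfold theta2
  rw [h, Nat.mul_div_cancel_left _ (by positivity)]

theorem theta2_decomp (z : ℕ) (hz : z ≠ 0) :
    z = 2 ^ padicValNat 2 z * theta2 z ∧ ¬ 2 ∣ theta2 z := by
  have h1 : z = 2 ^ padicValNat 2 z * theta2 z :=
    (Nat.mul_div_cancel' pow_padicValNat_dvd).symm
  refine ⟨h1, fun ⟨c, hc⟩ => ?_⟩
  apply pow_succ_padicValNat_not_dvd (p := 2) hz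
  refine ⟨c, ?_⟩
  rw [pow_succ, mul_assoc, ← hc]
  exact h1

theorem theta2_mul (a b : ℕ) (ha : a ≠ 0) (hb : b ≠ 0) :
    theta2 (a * b) = theta2 a * theta2 b := by
  obtain ⟨h1, h2⟩ := theta2_decomp a ha
  obtain ⟨h3, h4⟩ := theta2_decomp b hb
  have h : a * b = 2 ^ (padicValNat 2 a + padicValNat 2 b) * (theta2 a * theta2 b) := by
    conv_lhs => rw [h1, h3]
    ring
  rw [h]
  apply theta2_odd
  rw [Nat.prime_two.dvd_mul]
  tauto

theorem theta2_factorial_add (i x m : ℕ) (hm : m ≤ 2 ^ i) :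
    theta2 (Nat.factorial (2 ^ (i + 1) * x + m)) =
      theta2 (Nat.factorial (2 ^ (i + 1) * x)) *
        ∏ j ∈ Finset.Icc 1 m, (2 ^ (i + 1 - padicValNat 2 j) * x + theta2 j) := by
  induction m with
  | zero => simp
  | succ m ih =>
    rw [Finset.prod_Icc_succ_top (by omega), ← mul_assoc, ← ih (by omega), ← add_assoc,
      Nat.factorial_succ, theta2_mul _ _ (by omega) (Nat.factorial_ne_zero _), mul_comm]
    congr 1
    obtain ⟨h1, h2⟩ := theta2_decomp (m + 1) (by omega)
    have hv : padicValNat 2 (m + 1) ≤ i := by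
      have : 2 ^ padicValNat 2 (m + 1) ≤ 2 ^ i :=
        (Nat.le_of_dvd (by omega) pow_padicValNat_dvd).trans hm
      exact (Nat.pow_le_pow_iff_right (by norm_num)).1 this
    generalize padicValNat 2 (m + 1) = v at *
    generalize theta2 (m + 1) = t at *
    obtain ⟨d, rfl⟩ := Nat.exists_eq_add_of_le hv
    have e : v + d + 1 - v = d + 1 := by omega
    rw [e, add_assoc, h1]
    have : 2 ^ (v + d + 1) * x + 2 ^ v * t = 2 ^ v * (2 ^ (d + 1) * x + t) := by ring
    rw [this]
    apply theta2_odd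
    rw [Nat.dvd_add_right (Dvd.dvd.mul_right (dvd_pow_self 2 (by omega)) x)]
    exact h2

theorem stmt_18 (i x : ℕ) :
    theta2 (Nat.factorial (2 ^ i * (2 * x + 1))) =
      theta2 (Nat.factorial (2 ^ (i + 1) * x)) *
        ∏ j ∈ Finset.Icc 1 (2 ^ i), (2 ^ (i + 1 - padicValNat 2 j) * x + theta2 j) := by
  have h := theta2_factorial_add i x (2 ^ i) le_rfl
  rw [← h]
  congr 2
  ring
end

section
/- Let p be a prime number. For every nonnegative integer i, every digit a in base p (0 ≤ a ≤ p−1), and every nonnegative integer x, Θ_p((p^i·(p·x + a))!) = Θ_p((p^{i+1}·x)!) · ∏_{j=1}^{a·p^i} (p^{i+1−ν_p(j)}·x + Θ_p(j)). -/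
/-- `thetap p z` is the `p`-free part of `z`, i.e. `z / p^(ν_p z)`. -/
def thetap (p z : ℕ) : ℕ := z / p ^ padicValNat p z

theorem thetap_pow_mul (p : ℕ) (hp : p.Prime) (v c : ℕ) (hc : ¬ p ∣ c) :
    thetap p (p ^ v * c) = c := by
  haveI := Fact.mk hp
  have hc0 : c ≠ 0 := by rintro rfl; simp at hc
  unfold thetap
  rw [padicValNat.mul (pow_ne_zero _ hp.ne_zero) hc0, padicValNat.prime_pow,
    padicValNat.eq_zero_of_not_dvd hc, add_zero]
  exact Nat.mul_div_cancel_left _ (pow_pos hp.pos _)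

theorem thetap_spec (p z : ℕ) : p ^ padicValNat p z * thetap p z = z :=
  Nat.mul_div_cancel' pow_padicValNat_dvd

theorem thetap_not_dvd (p : ℕ) (hp : p.Prime) (z : ℕ) (hz : z ≠ 0) : ¬ p ∣ thetap p z := by
  haveI := Fact.mk hp
  rintro ⟨k, hk⟩
  apply pow_succ_padicValNat_not_dvd (p := p) hz
  refine ⟨k, ?_⟩
  rw [pow_succ, mul_assoc, ← hk, thetap_spec]

theorem thetap_mul (p : ℕ) (hp : p.Prime) (y z : ℕ) (hy : y ≠ 0) (hz : z ≠ 0) :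
    thetap p (y * z) = thetap p y * thetap p z := by
  have h : y * z = p ^ (padicValNat p y + padicValNat p z) * (thetap p y * thetap p z) := by
    conv_lhs => rw [← thetap_spec p y, ← thetap_spec p z]
    ring
  rw [h]
  apply thetap_pow_mul p hp
  rw [hp.dvd_mul]
  have h1 := thetap_not_dvd p hp y hy
  have h2 := thetap_not_dvd p hp z hz
  tauto

theorem thetap_add (p : ℕ) (hp : p.Prime) (i x j : ℕ) (hj : j ≠ 0) (hlt : j < p ^ (i + 1)) :
    thetap p (p ^ (i + 1) * x + j) = p ^ (i + 1 - padicValNat p j) * x + thetap p j := by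
  have hv : padicValNat p j < i + 1 := by
    have h1 : p ^ padicValNat p j ≤ j := Nat.le_of_dvd (Nat.pos_of_ne_zero hj) pow_padicValNat_dvd
    exact (Nat.pow_lt_pow_iff_right hp.one_lt).1 (h1.trans_lt hlt)
  have h : p ^ (i + 1) * x + j =
      p ^ padicValNat p j * (p ^ (i + 1 - padicValNat p j) * x + thetap p j) := by
    rw [mul_add, thetap_spec, ← mul_assoc, ← pow_add, Nat.add_sub_cancel' hv.le]
  rw [h]
  apply thetap_pow_mul p hp
  have hd : p ∣ p ^ (i + 1 - padicValNat p j) * x :=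
    Dvd.dvd.mul_right (dvd_pow_self p (by omega)) x
  rw [Nat.dvd_add_right hd]
  exact thetap_not_dvd p hp j hj

theorem stmt_19 (p : ℕ) (hp : p.Prime) (i a x : ℕ) (ha : a ≤ p - 1) :
    thetap p (Nat.factorial (p ^ i * (p * x + a))) =
      thetap p (Nat.factorial (p ^ (i + 1) * x)) *
        ∏ j ∈ Finset.Icc 1 (a * p ^ i), (p ^ (i + 1 - padicValNat p j) * x + thetap p j) := by
  have key : ∀ m, m < p ^ (i + 1) → thetap p (Nat.factorial (p ^ (i + 1) * x + m)) =
      thetap p (Nat.factorial (p ^ (i + 1) * x)) *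
        ∏ j ∈ Finset.Icc 1 m, (p ^ (i + 1 - padicValNat p j) * x + thetap p j) := by
    intro m
    induction m with
    | zero => intro _; simp
    | succ m ih =>
      intro hm
      rw [Finset.prod_Icc_succ_top (by omega), ← mul_assoc, ← ih (by omega), ← add_assoc,
        Nat.factorial_succ, thetap_mul p hp _ _ (by omega) (Nat.factorial_ne_zero _),
        add_assoc, thetap_add p hp i x (m + 1) (by omega) hm, mul_comm]
  have h1 : p ^ i * (p * x + a) = p ^ (i + 1) * x + a * p ^ i := by ring
  rw [h1]
  apply key
  rw [pow_succ']
  have := hp.pos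
  exact Nat.mul_lt_mul_of_pos_right (by omega) (pow_pos hp.pos _)
end
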